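/- Let j be a positive real number. Then the following are equivalent: (a) rank_ℤ E^{(D)}(ℚ) < 2j for every nonzero integer D (i.e., for every nonzero integer D there is no ℤ-linearly independent family of ⌈2j⌉ points in the abelian group E^{(D)}(ℚ)); (b) S_E(j,k) converges for some real k ≥ 1; (c) S_E(j,k) converges for every real k ≥ 1; (d) R_E(j,k) converges for some real k ≥ 1; (e) R_E(j,k) converges for every real k ≥ 1; (f) Q_E(j,k) converges for some real k ≥ 1; (g) Q_E(j,k) converges for every real k ≥ 1. -/

import Mathlib

noncomputable section

/-- `F(u,v) = v·(u³ + au²v + buv² + cv³) = v⁴ f(u/v)`. -/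
def Fbin (a b c u v : ℤ) : ℤ := v * (u^3 + a*u^2*v + b*u*v^2 + c*v^3)

/-- `Ψ = {(u,v) ∈ ℤ² : gcd(u,v) = 1 and F(u,v) ≠ 0}`. -/
def Psi (a b c : ℤ) : Set (ℤ × ℤ) := {p | Int.gcd p.1 p.2 = 1 ∧ Fbin a b c p.1 p.2 ≠ 0}

/-- `h(u/v) = max(1, log|u|, log|v|)` for coprime `u, v`. -/
def ht (u v : ℤ) : ℝ := max 1 (max (Real.log |(u : ℝ)|) (Real.log |(v : ℝ)|))

/-- the polynomial `f(x) = x³ + ax² + bx + c` has three distinct complex roots. -/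
def DistinctRoots (a b c : ℤ) : Prop :=
  ∃ r₁ r₂ r₃ : ℂ, r₁ ≠ r₂ ∧ r₁ ≠ r₃ ∧ r₂ ≠ r₃ ∧
    ∀ z : ℂ, z^3 + a*z^2 + b*z + c = (z - r₁) * (z - r₂) * (z - r₃)

/-- `sq` is a squarefree-part function: for nonzero `n`, `sq n` is squarefree and
`n = sq n · m²` for some rational `m`. -/
def IsSqfreePart (sq : ℤ → ℤ) : Prop :=
  ∀ n : ℤ, n ≠ 0 → Squarefree (sq n) ∧ ∃ m : ℚ, (n : ℚ) = sq n * m^2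

/-- the general term `|s(F(u,v))|^{-k} · h(u/v)^{-j}` of `S_E(j,k)`. -/
def STerm (a b c : ℤ) (sq : ℤ → ℤ) (j k : ℝ) (p : ℤ × ℤ) : ℝ :=
  |(sq (Fbin a b c p.1 p.2) : ℝ)| ^ (-k) * ht p.1 p.2 ^ (-j)

/-- index set of `S_E(j,k,X)`: `(u,v) ∈ Ψ` with `u/v ∈ X`. -/
def SIdx (a b c : ℤ) (X : Set ℝ) : Set (ℤ × ℤ) :=
  {p | p ∈ Psi a b c ∧ ((p.1 : ℝ) / (p.2 : ℝ)) ∈ X}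

/-- `S_E(j,k,X)` converges. -/
def SConv (a b c : ℤ) (sq : ℤ → ℤ) (j k : ℝ) (X : Set ℝ) : Prop :=
  Summable fun p : SIdx a b c X => STerm a b c sq j k p.1

/-- index set of `R_E(j,k,X)`: `t ≥ 1`, `(u,v) ∈ Ψ`, `u/v ∈ X`, `t² ∣ F(u,v)`. -/
def RIdx (a b c : ℤ) (X : Set ℝ) : Set (ℕ × ℤ × ℤ) :=
  {q | 1 ≤ q.1 ∧ q.2 ∈ Psi a b c ∧ ((q.2.1 : ℝ) / (q.2.2 : ℝ)) ∈ X ∧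
    (q.1 : ℤ)^2 ∣ Fbin a b c q.2.1 q.2.2}

/-- the general term `t^{2k} · |F(u,v)|^{-k} · h(u/v)^{-j}` of `R_E(j,k)`. -/
def RTerm (a b c : ℤ) (j k : ℝ) (q : ℕ × ℤ × ℤ) : ℝ :=
  (q.1 : ℝ) ^ (2*k) * |(Fbin a b c q.2.1 q.2.2 : ℝ)| ^ (-k) * ht q.2.1 q.2.2 ^ (-j)

/-- `R_E(j,k,X)` converges. -/
def RConv (a b c : ℤ) (j k : ℝ) (X : Set ℝ) : Prop :=
  Summable fun q : RIdx a b c X => RTerm a b c j k q.1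

/-- `Ω_d = {α ∈ ℤ/d²ℤ : f(α) ≡ 0 (mod d²)}`. -/
def OmegaSet (a b c : ℤ) (d : ℕ) : Set (ZMod (d^2)) :=
  {α | α^3 + (a : ZMod (d^2))*α^2 + (b : ZMod (d^2))*α + (c : ZMod (d^2)) = 0}

/-- the lattice `L_{α,d,d'} = {(u,v) : u ≡ αv (mod d²), v ≡ 0 (mod d'²)}`. -/
def latL (d d' : ℕ) (α : ZMod (d^2)) : Set (ℤ × ℤ) :=
  {p | ((p.1 : ZMod (d^2)) = α * (p.2 : ZMod (d^2))) ∧ ((d' : ℤ))^2 ∣ p.2}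

/-- `ω` is a choice, for coprime `d, d' ≥ 1` and `α ∈ Ω_d`, of a shortest nonzero
vector `ω_{α,d,d'}` of the lattice `L_{α,d,d'}` for the Euclidean norm. -/
def IsShortestChoice (a b c : ℤ) (ω : (d d' : ℕ) → ZMod (d^2) → ℤ × ℤ) : Prop :=
  ∀ d d' : ℕ, 0 < d → 0 < d' → Nat.Coprime d d' → ∀ α ∈ OmegaSet a b c d,
    ω d d' α ∈ latL d d' α ∧ ω d d' α ≠ 0 ∧
    ∀ p ∈ latL d d' α, p ≠ 0 →
      (ω d d' α).1^2 + (ω d d' α).2^2 ≤ p.1^2 + p.2^2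

/-- index set of `Q_E(j,k)`: coprime `d, d' ≥ 1`, `α ∈ Ω_d`, `ω_{α,d,d'} ∈ Ψ`. -/
def QIdx (a b c : ℤ) (ω : (d d' : ℕ) → ZMod (d^2) → ℤ × ℤ) :
    Set (Σ d : ℕ, ℕ × ZMod (d^2)) :=
  {x | 0 < x.1 ∧ 0 < x.2.1 ∧ Nat.Coprime x.1 x.2.1 ∧ x.2.2 ∈ OmegaSet a b c x.1 ∧
    ω x.1 x.2.1 x.2.2 ∈ Psi a b c}

/-- the general term `(dd')^{2k} · max(1, log(dd'))^{-j} · ‖ω_{α,d,d'}‖^{-4k}` of `Q_E(j,k)`. -/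
def QTerm (j k : ℝ) (ω : (d d' : ℕ) → ZMod (d^2) → ℤ × ℤ)
    (x : Σ d : ℕ, ℕ × ZMod (d^2)) : ℝ :=
  ((x.1 : ℝ) * (x.2.1 : ℝ)) ^ (2*k) * max 1 (Real.log ((x.1 : ℝ) * (x.2.1 : ℝ))) ^ (-j) *
    Real.sqrt (((ω x.1 x.2.1 x.2.2).1 : ℝ)^2 + ((ω x.1 x.2.1 x.2.2).2 : ℝ)^2) ^ (-(4*k))

/-- `Q_E(j,k)` converges. -/
def QConv (a b c : ℤ) (j k : ℝ) (ω : (d d' : ℕ) → ZMod (d^2) → ℤ × ℤ) : Prop :=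
  Summable fun x : QIdx a b c ω => QTerm j k ω x.1

/-- the quadratic twist `E^{(D)} : Dy² = f(x)`, in Weierstrass form
`y² = x³ + aDx² + bD²x + cD³` (isomorphic via `(x,y) ↦ (Dx, D²y)`). -/
def twist (a b c D : ℤ) : WeierstrassCurve.Affine ℚ :=
  { a₁ := 0, a₂ := a*D, a₃ := 0, a₄ := b*D^2, a₆ := c*D^3 }

/-- `rank_ℤ E^{(D)}(ℚ) < 2j` for every nonzero integer `D`: there is no
ℤ-linearly independent family of `⌈2j⌉` rational points on `E^{(D)}`. -/
def RankBound (a b c : ℤ) (j : ℝ) : Prop :=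
  ∀ D : ℤ, D ≠ 0 →
    ¬ ∃ P : Fin ⌈2*j⌉₊ → (twist a b c D).Point, LinearIndependent ℤ P

/-- `X ⊆ ℝ` is broad: open, and meets both `(e_max, ∞)` and `(-∞, e_min)`. -/
def Broad (a b c : ℤ) (X : Set ℝ) : Prop :=
  IsOpen X ∧ (∃ x ∈ X, ∀ r : ℝ, r^3 + a*r^2 + b*r + c = 0 → r < x) ∧
    (∃ x ∈ X, ∀ r : ℝ, r^3 + a*r^2 + b*r + c = 0 → x < r)

/-- the set of triples `(α, d, d')` with `d, d'` coprime positive integers,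
`dd' = t`, and `α ∈ Ω_d`. -/
def TripSet (a b c : ℤ) (t : ℕ) : Set (Σ d : ℕ, ℕ × ZMod (d^2)) :=
  {x | 0 < x.1 ∧ 0 < x.2.1 ∧ Nat.Coprime x.1 x.2.1 ∧ x.1 * x.2.1 = t ∧
    x.2.2 ∈ OmegaSet a b c x.1}

end

section

open WeierstrassCurve Height

/-- projective x-coordinate normalised by the twist -/
noncomputable def xr (a b c D : ℤ) (P : (twist a b c D).Point) : Fin 2 → ℚ :=
  ![P.xRep 0, D * P.xRep 1]

noncomputable def s3 (p q : Fin 2 → ℚ) : Fin 3 → ℚ :=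
  ![p 0 * q 0, p 0 * q 1 + p 1 * q 0, p 1 * q 1]

noncomputable def asm (a b c : ℤ) (x : Fin 3 → ℚ) : Fin 3 → ℚ :=
  ![x 0 ^ 2 - 2 * b * x 0 * x 2 - 4 * c * x 1 * x 2 - (4 * a * c - b ^ 2) * x 2 ^ 2,
    2 * x 1 * x 0 + 4 * a * x 0 * x 2 + 2 * b * x 1 * x 2 + 4 * c * x 2 ^ 2,
    x 1 ^ 2 - 4 * x 0 * x 2]

lemma asm_eq (a b c : ℤ) (x : Fin 3 → ℚ) :
    (fun i ↦ (addSubMap (twist a b c 1) i).eval x) = asm a b c x := by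
  ext i
  fin_cases i <;> simp [addSubMap, asm, twist, WeierstrassCurve.b₂, WeierstrassCurve.b₄,
    WeierstrassCurve.b₆, WeierstrassCurve.b₈]

lemma xr_neg (a b c D : ℤ) (P : (twist a b c D).Point) : xr a b c D (-P) = xr a b c D P := by
  simp [xr]

lemma s3_comm (p q : Fin 2 → ℚ) : s3 p q = s3 q p := by
  ext i; fin_cases i <;> simp [s3] <;> ring

lemma tw_eq {a b c D : ℤ} {x y : ℚ} (h : (twist a b c D).Nonsingular x y) :
    y ^ 2 = x ^ 3 + a * D * x ^ 2 + b * D ^ 2 * x + c * D ^ 3 := by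
  have := h.1
  rw [Affine.equation_iff] at this
  simpa [twist] using this

lemma tw_negY (a b c D : ℤ) (x y : ℚ) : (twist a b c D).negY x y = -y := by
  simp [Affine.negY, twist]

lemma dup_core (a b c D : ℤ) (hD : D ≠ 0) {x y : ℚ} (h : (twist a b c D).Nonsingular x y) :
    ∃ κ : ℚ, κ ≠ 0 ∧ s3 (xr a b c D (.some x y h + .some x y h)) (xr a b c D 0)
      = κ • asm a b c (s3 (xr a b c D (.some x y h)) (xr a b c D (.some x y h))) := by
  have hD' : (D : ℚ) ≠ 0 := by exact_mod_cast hD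
  have e := tw_eq h
  by_cases hy : y = 0
  · rw [Affine.Point.add_self_of_Y_eq (by rw [tw_negY, hy]; simp)]
    have hne : (3 * x ^ 2 + 2 * (a * D) * x + b * D ^ 2 : ℚ) ≠ 0 := by
      rw [Affine.nonsingular_iff] at h
      rcases h.2 with h | h
      · simp [twist] at h
        intro h0; apply h; rw [h0]
      · simp [twist, hy] at h
    subst hy
    refine ⟨((3 * x ^ 2 + 2 * (a * D) * x + b * D ^ 2 : ℚ)^2)⁻¹, inv_ne_zero (pow_ne_zero _ hne), ?_⟩
    ext i
    fin_cases i
    · simp [s3, asm, xr]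
      rw [eq_comm, inv_mul_eq_one₀ (pow_ne_zero _ hne)]
      linear_combination (-(8 * x + 4 * a * D) ) * e
    · simp [s3, asm, xr]
      right
      linear_combination (-4 * D : ℚ) * e
    · simp [s3, asm, xr]
      right
      ring
  · have hy2 : y ≠ (twist a b c D).negY x y := by
      rw [tw_negY]; intro h0; apply hy; linarith
    rw [Affine.Point.add_self_of_Y_ne hy2]
    refine ⟨(4 * y ^ 2)⁻¹, by positivity, ?_⟩
    ext i
    fin_cases i
    · simp [s3, asm, xr]
      rw [Affine.slope_of_Y_ne rfl hy2, tw_negY]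
      simp [twist]
      field_simp
      linear_combination (-4*(4*a*D+8*x)) * e
    · simp [s3, asm, xr]
      field_simp
      linear_combination (4 : ℚ) * e
    · simp [s3, asm, xr]
      right
      ring

lemma gen_core (a b c D : ℤ) (hD : D ≠ 0) {x y x' y' : ℚ} (h : (twist a b c D).Nonsingular x y)
    (h' : (twist a b c D).Nonsingular x' y') (hx : x ≠ x') :
    ∃ κ : ℚ, κ ≠ 0 ∧ s3 (xr a b c D (.some x y h + .some x' y' h'))
        (xr a b c D (.some x y h - .some x' y' h'))
      = κ • asm a b c (s3 (xr a b c D (.some x y h)) (xr a b c D (.some x' y' h'))) := by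
  have hD' : (D : ℚ) ≠ 0 := by exact_mod_cast hD
  have e := tw_eq h
  have e' := tw_eq h'
  have hs : x - x' ≠ 0 := sub_ne_zero.2 hx
  rw [sub_eq_add_neg, Affine.Point.neg_some, Affine.Point.add_of_X_ne hx,
    Affine.Point.add_of_X_ne hx]
  refine ⟨((x - x') ^ 2)⁻¹, by positivity, ?_⟩
  ext i
  fin_cases i
  · simp [s3, asm, xr]
    rw [Affine.slope_of_X_ne hx, Affine.slope_of_X_ne hx]
    simp [twist]
    field_simp
    linear_combination
      ((y^2 - y'^2) + ((x ^ 3 + a * D * x ^ 2 + b * D ^ 2 * x) - (x' ^ 3 + a * D * x' ^ 2 + b * D ^ 2 * x'))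
        - 2 * (x-x')^2*(a*D+x+x')) * e + (-((y^2 - y'^2) + ((x ^ 3 + a * D * x ^ 2 + b * D ^ 2 * x) -
          (x' ^ 3 + a * D * x' ^ 2 + b * D ^ 2 * x'))) - 2 * (x-x')^2*(a*D+x+x')) * e'
  · simp [s3, asm, xr]
    rw [Affine.slope_of_X_ne hx, Affine.slope_of_X_ne hx]
    simp [twist]
    field_simp
    linear_combination 2 * e + 2 * e'
  · simp [s3, asm, xr]
    field_simp
    ring

lemma par_core (a b c D : ℤ) (hD : D ≠ 0) (P Q : (twist a b c D).Point) :
    ∃ κ : ℚ, κ ≠ 0 ∧ s3 (xr a b c D (P + Q)) (xr a b c D (P - Q))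
      = κ • asm a b c (s3 (xr a b c D P) (xr a b c D Q)) := by
  have hD' : (D : ℚ) ≠ 0 := by exact_mod_cast hD
  have key0 : ∀ P : (twist a b c D).Point, ∃ κ : ℚ, κ ≠ 0 ∧ s3 (xr a b c D P) (xr a b c D P)
      = κ • asm a b c (s3 (xr a b c D P) (xr a b c D 0)) := by
    intro P
    refine ⟨1, one_ne_zero, ?_⟩
    cases P with
    | zero =>
      ext i; fin_cases i <;> simp [s3, asm, xr, ← Affine.Point.zero_def]
    | some x y h =>
      ext i; fin_cases i <;> simp [s3, asm, xr] <;> ring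
  cases Q with
  | zero =>
    have := key0 P
    rw [← Affine.Point.zero_def, add_zero, sub_zero]
    exact this
  | some x' y' h' =>
    cases P with
    | zero =>
      have := key0 (.some x' y' h')
      rw [s3_comm, s3_comm (xr a b c D Affine.Point.zero)]
      rw [← Affine.Point.zero_def, zero_add, zero_sub, xr_neg]
      exact this
    | some x y h =>
      by_cases hx : x = x'
      · subst hx
        have e := tw_eq h
        have e' := tw_eq h'
        have : y = y' ∨ y = -y' := by
          apply sq_eq_sq_iff_eq_or_eq_neg.1; rw [e, e']
        obtain ⟨κ, hκ, hd⟩ := dup_core a b c D hD h'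
        rcases this with rfl | hy
        · refine ⟨κ, hκ, ?_⟩
          rw [sub_self]; exact hd
        · have hP : (Affine.Point.some x y h : (twist a b c D).Point) = - Affine.Point.some x y' h' := by
            rw [Affine.Point.neg_some]
            congr 1
            rw [tw_negY, hy]
          refine ⟨κ, hκ, ?_⟩
          rw [hP, xr_neg, neg_add_cancel, ← neg_add', xr_neg, s3_comm]
          exact hd
      · exact gen_core a b c D hD h h' hx

lemma xr_ne_zero (a b c D : ℤ) (hD : D ≠ 0) (P : (twist a b c D).Point) : xr a b c D P ≠ 0 := by
  have hD' : (D : ℚ) ≠ 0 := by exact_mod_cast hD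
  cases P with
  | zero => intro h; have := congrFun h 0; simp [xr, ← Affine.Point.zero_def] at this
  | some x y h => intro h; have := congrFun h 1; simp [xr, hD] at this

def disc (a b c : ℤ) : ℤ := a^2*b^2 - 4*b^3 - 4*a^3*c - 27*c^2 + 18*a*b*c

lemma disc_ne (a b c : ℤ) (hf : DistinctRoots a b c) : disc a b c ≠ 0 := by
  obtain ⟨r, s, t, h1, h2, h3, h⟩ := hf
  have e0 := h 0
  have e1 := h 1
  have e2 := h (-1)
  have hc : (c : ℂ) = -(r*s*t) := by linear_combination e0
  have ha : (a : ℂ) = -(r+s+t) := by linear_combination (e1+e2)/2 - e0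
  have hb : (b : ℂ) = r*s+s*t+r*t := by linear_combination (e1-e2)/2
  intro h0
  have : ((disc a b c : ℤ) : ℂ) = 0 := by rw [h0]; simp
  simp only [disc] at this
  push_cast at this
  rw [ha, hb, hc] at this
  have h4 : ((r-s)*(r-t)*(s-t))^2 = 0 := by linear_combination this
  have := pow_eq_zero_iff (two_ne_zero) |>.1 h4
  simp [sub_eq_zero, h1, h2, h3] at this

lemma twist_ell (a b c : ℤ) (hf : DistinctRoots a b c) :
    WeierstrassCurve.IsElliptic (twist a b c 1) := by
  rw [WeierstrassCurve.isElliptic_iff, isUnit_iff_ne_zero]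
  have h := disc_ne a b c hf
  have : (twist a b c 1).Δ = 16 * (disc a b c : ℚ) := by
    simp [twist, WeierstrassCurve.Δ, WeierstrassCurve.b₂, WeierstrassCurve.b₄,
      WeierstrassCurve.b₆, WeierstrassCurve.b₈, disc]
    ring
  rw [this]
  have : (disc a b c : ℚ) ≠ 0 := by exact_mod_cast h
  positivity

noncomputable def hh (a b c D : ℤ) (P : (twist a b c D).Point) : ℝ := logHeight (xr a b c D P)

lemma hh_nonneg (a b c D : ℤ) (P : (twist a b c D).Point) : 0 ≤ hh a b c D P :=
  logHeight_nonneg _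

lemma hh_par (a b c : ℤ) (hf : DistinctRoots a b c) : ∃ C : ℝ, ∀ D : ℤ, D ≠ 0 →
    ∀ P Q : (twist a b c D).Point,
    |hh a b c D (P + Q) + hh a b c D (P - Q) - 2 * hh a b c D P - 2 * hh a b c D Q| ≤ C := by
  have := twist_ell a b c hf
  obtain ⟨C1, h1⟩ := WeierstrassCurve.abs_logHeight_addSubMap_sub_two_mul_logHeight_le (twist a b c 1)
  obtain ⟨C2, h2⟩ := Height.abs_logHeight_sym2_sub_le ℚ
  have h3 : ∀ p q : Fin 2 → ℚ, p ≠ 0 → q ≠ 0 →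
      |logHeight (s3 p q) - (logHeight p + logHeight q)| ≤ C2 := by
    intro p q hp hq
    have e1 : p = ![p 0, p 1] := by ext i; fin_cases i <;> rfl
    have e2 : q = ![q 0, q 1] := by ext i; fin_cases i <;> rfl
    have := h2 (a := p 0) (b := p 1) (c := q 0) (d := q 1) (by rwa [← e1]) (by rwa [← e2])
    rw [← e1, ← e2] at this
    exact this
  refine ⟨C1 + 3 * C2, fun D hD P Q => ?_⟩
  obtain ⟨κ, hκ, h⟩ := par_core a b c D hD P Q
  have a1 := h3 _ _ (xr_ne_zero a b c D hD (P+Q)) (xr_ne_zero a b c D hD (P-Q))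
  have a2 := h3 _ _ (xr_ne_zero a b c D hD P) (xr_ne_zero a b c D hD Q)
  have a3 := h1 (s3 (xr a b c D P) (xr a b c D Q))
  rw [asm_eq] at a3
  rw [h, Height.logHeight_smul_eq_logHeight _ hκ] at a1
  simp only [hh]
  rw [abs_le] at *
  constructor <;> linarith [a1.1, a1.2, a2.1, a2.2, a3.1, a3.2]

end

section

def IsQuad {G : Type*} [AddCommGroup G] (q : G → ℝ) : Prop :=
  (∀ P, 0 ≤ q P) ∧ ∀ P Q, q (P + Q) + q (P - Q) = 2 * q P + 2 * q Q

lemma exists_canon {G : Type*} [AddCommGroup G] (h : G → ℝ) (C : ℝ) (h0 : ∀ P, 0 ≤ h P)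
    (hp : ∀ P Q, |h (P + Q) + h (P - Q) - 2 * h P - 2 * h Q| ≤ C) :
    ∃ q : G → ℝ, IsQuad q ∧ ∀ P, |q P - h P| ≤ C := by
  have hC : 0 ≤ C := le_trans (abs_nonneg _) (hp 0 0)
  have hz : h 0 ≤ C / 2 := by
    have := hp 0 0
    rw [abs_le] at this
    simp at this
    linarith [this.1]
  have hd : ∀ P, |h (P + P) - 4 * h P| ≤ 3 / 2 * C := by
    intro P
    have := hp P P
    rw [sub_self] at this
    rw [abs_le] at *
    constructor <;> linarith [this.1, this.2, h0 0]
  let s : G → ℕ → ℝ := fun P n => h (2 ^ n • P) / 4 ^ n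
  have hs : ∀ P n, dist (s P n) (s P (n+1)) ≤ (3 / 8 * C) * (1/4 : ℝ) ^ n := by
    intro P n
    have := hd (2 ^ n • P)
    rw [Real.dist_eq]
    simp only [s]
    rw [← two_nsmul, smul_smul, ← pow_succ'] at this
    have e : h (2 ^ n • P) / 4 ^ n - h (2 ^ (n + 1) • P) / 4 ^ (n + 1)
      = -((h (2 ^ (n + 1) • P) - 4 * h (2 ^ n • P)) / 4 ^ (n + 1)) := by
      field_simp; ring
    rw [e, abs_neg, abs_div, abs_of_pos (by positivity : (0:ℝ) < 4 ^ (n+1))]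
    rw [div_le_iff₀ (by positivity)]
    refine this.trans (le_of_eq ?_)
    rw [pow_succ, div_pow, one_pow]; field_simp; ring
  have hc : ∀ P, CauchySeq (s P) := fun P =>
    cauchySeq_of_le_geometric (1/4) (3 / 8 * C) (by norm_num) (hs P)
  choose q hq using fun P => cauchySeq_tendsto_of_complete (hc P)
  refine ⟨q, ⟨fun P => ge_of_tendsto' (hq P) fun n => by
    simp only [s]; exact div_nonneg (h0 _) (by positivity), fun P Q => ?_⟩, fun P => ?_⟩
  · have t1 := ((hq (P+Q)).add (hq (P-Q))).sub (((hq P).const_mul 2).add ((hq Q).const_mul 2))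
    have t2 : Filter.Tendsto (fun n : ℕ => C * (1/4 : ℝ) ^ n) Filter.atTop (nhds 0) := by
      have := (tendsto_pow_atTop_nhds_zero_of_lt_one (r := (1/4 : ℝ)) (by norm_num) (by norm_num)).const_mul C
      simpa using this
    have t3 : Filter.Tendsto (fun n => s (P + Q) n + s (P - Q) n - (2 * s P n + 2 * s Q n))
        Filter.atTop (nhds 0) := by
      refine squeeze_zero_norm (fun n => ?_) t2
      have := hp (2 ^ n • P) (2 ^ n • Q)
      simp only [s, Real.norm_eq_abs]
      rw [nsmul_add, nsmul_sub]
      have e : h (2 ^ n • P + 2 ^ n • Q) / 4 ^ n + h (2 ^ n • P - 2 ^ n • Q) / 4 ^ n -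
        (2 * (h (2 ^ n • P) / 4 ^ n) + 2 * (h (2 ^ n • Q) / 4 ^ n)) =
        (h (2 ^ n • P + 2 ^ n • Q) + h (2 ^ n • P - 2 ^ n • Q) - 2 * h (2 ^ n • P) -
          2 * h (2 ^ n • Q)) * (1/4 : ℝ) ^ n := by
        rw [div_pow, one_pow]; field_simp; ring
      rw [e, abs_mul, abs_of_pos (by positivity : (0:ℝ) < (1/4)^n)]
      gcongr
    have := tendsto_nhds_unique t1 t3
    linarith
  · have := dist_le_of_le_geometric_of_tendsto₀ (1/4) (3 / 8 * C) (by norm_num) (hs P) (hq P)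
    rw [Real.dist_eq] at this
    simp only [s, pow_zero, one_smul, div_one] at this
    rw [abs_sub_comm]
    refine this.trans ?_
    norm_num
    linarith

namespace IsQuad
variable {G : Type*} [AddCommGroup G] {q : G → ℝ}

lemma zero (h : IsQuad q) : q 0 = 0 := by
  have := h.2 0 0; simp at this; linarith

lemma neg (h : IsQuad q) (P : G) : q (-P) = q P := by
  have := h.2 0 P; simp [h.zero] at this; linarith

lemma nsmul (h : IsQuad q) (n : ℕ) (P : G) : q (n • P) = n ^ 2 * q P := by
  induction n using Nat.twoStepInduction with
  | zero => simp [h.zero]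
  | one => simp
  | more n h1 h2 =>
    have := h.2 ((n+1) • P) P
    have e1 : (n+1) • P + P = (n+2) • P := by simp [add_smul, two_smul]; abel
    have e2 : (n+1) • P - P = n • P := by simp [add_smul]
    rw [e1, e2, h1, h2] at this
    push_cast at *
    linarith

lemma zsmul (h : IsQuad q) (n : ℤ) (P : G) : q (n • P) = n ^ 2 * q P := by
  obtain ⟨m, rfl | rfl⟩ := n.eq_nat_or_neg
  · simpa using h.nsmul m P
  · rw [neg_smul, h.neg]; simpa using h.nsmul m P

lemma add_le (h : IsQuad q) (P Q : G) : q (P + Q) ≤ 2 * q P + 2 * q Q := by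
  linarith [h.2 P Q, h.1 (P - Q)]

lemma sub_le (h : IsQuad q) (P Q : G) : q (P - Q) ≤ 2 * q P + 2 * q Q := by
  linarith [h.2 P Q, h.1 (P + Q)]

lemma dep (h : IsQuad q) {P Q : G} {m n : ℤ} (hmn : m • P + n • Q = 0) (hne : m ≠ 0 ∨ n ≠ 0) :
    (q (P + Q) - q P - q Q) ^ 2 = 4 * q P * q Q := by
  wlog hn : n ≠ 0 generalizing P Q m n
  · have hm : m ≠ 0 := by tauto
    have := this (P := Q) (Q := P) (by rw [add_comm]; exact hmn) (Or.inr hm) hm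
    rw [add_comm P Q]; linarith
  have e1 : n • Q = -(m • P) := by rw [add_comm] at hmn; exact eq_neg_of_add_eq_zero_left hmn
  have e2 : n • (P + Q) = (n - m) • P := by rw [smul_add, e1, sub_smul]; abel
  have f1 : (n : ℝ)^2 * q Q = m^2 * q P := by rw [← h.zsmul, e1, h.neg, h.zsmul]
  have f2 : (n : ℝ)^2 * q (P + Q) = (n - m)^2 * q P := by
    rw [← h.zsmul, e2, h.zsmul]; push_cast; ring
  have hn' : (n : ℝ) ≠ 0 := by exact_mod_cast hn
  have : (n:ℝ)^4 * ((q (P + Q) - q P - q Q) ^ 2 - 4 * q P * q Q) = 0 := by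
    have g : (n:ℝ)^2 * (q (P + Q) - q P - q Q) = -2 * m * n * q P := by
      linear_combination f2 - f1
    have : (n:ℝ)^4 * (q (P + Q) - q P - q Q)^2 = 4 * m^2 * n^2 * q P ^ 2 := by
      linear_combination (n^2 * (q (P + Q) - q P - q Q) - 2 * m * n * q P) * g
    linear_combination this - 4 * n^2 * q P * f1
  rcases mul_eq_zero.1 this with h | h
  · exact absurd h (by positivity)
  · linarith
end IsQuad

lemma exists_q (a b c : ℤ) (hf : DistinctRoots a b c) : ∃ C : ℝ, 0 ≤ C ∧ ∀ D : ℤ, D ≠ 0 →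
    ∃ q : (twist a b c D).Point → ℝ, IsQuad q ∧ ∀ P, |q P - hh a b c D P| ≤ C := by
  obtain ⟨C, hC⟩ := hh_par a b c hf
  refine ⟨C, le_trans (abs_nonneg _) (hC 1 one_ne_zero 0 0), fun D hD => ?_⟩
  exact exists_canon _ C (hh_nonneg a b c D) (hC D hD)

end

section

lemma sqfree_dvd {s t m : ℤ} (hs : Squarefree s) (ht : t ≠ 0) (h : t ^ 2 ∣ s * m ^ 2) : t ∣ m := by
  have hg : (Int.gcd t m : ℤ) ≠ 0 := by
    intro h0; exact ht (Int.gcd_eq_zero_iff.1 (by exact_mod_cast h0)).1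
  obtain ⟨t', ht'⟩ := Int.gcd_dvd_left t m
  obtain ⟨m', hm'⟩ := Int.gcd_dvd_right t m
  have hco : IsCoprime t' m' := by
    rw [Int.isCoprime_iff_gcd_eq_one]
    have := Int.gcd_div_gcd_div_gcd (i := t) (j := m) (Int.gcd_pos_of_ne_zero_left _ ht)
    rwa [show t / (Int.gcd t m : ℤ) = t' from Int.ediv_eq_of_eq_mul_right hg ht',
      show m / (Int.gcd t m : ℤ) = m' from Int.ediv_eq_of_eq_mul_right hg hm'] at this
  generalize (Int.gcd t m : ℤ) = g at *
  subst ht' hm'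
  have h2 : t' ^ 2 ∣ s * m' ^ 2 := by
    have e1 : (g * t') ^ 2 = g ^ 2 * t' ^ 2 := by ring
    have e2 : s * (g * m') ^ 2 = g ^ 2 * (s * m' ^ 2) := by ring
    rw [e1, e2] at h
    exact (mul_dvd_mul_iff_left (pow_ne_zero _ hg)).1 h
  have h3 : t' ^ 2 ∣ s := (hco.pow).dvd_of_dvd_mul_right h2
  have : IsUnit t' := hs t' (by rwa [← sq])
  exact mul_dvd_mul_left g (this.dvd)

lemma sqpart_int {sq : ℤ → ℤ} (hsq : IsSqfreePart sq) {n : ℤ} (hn : n ≠ 0) :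
    ∃ m : ℕ, 0 < m ∧ n = sq n * (m : ℤ) ^ 2 := by
  obtain ⟨hs, q, hq⟩ := hsq n hn
  have h1 : n * (q.den : ℤ) ^ 2 = sq n * q.num ^ 2 := by
    have := q.num_div_den
    have hd : (q.den : ℚ) ≠ 0 := by exact_mod_cast q.den_ne_zero
    rw [← this] at hq
    field_simp at hq
    exact_mod_cast hq
  have h2 : (q.den : ℤ) ∣ q.num :=
    sqfree_dvd hs (by exact_mod_cast q.den_ne_zero) ⟨n, by rw [← h1]; ring⟩
  have h3 : q.den = 1 := by
    have := q.reduced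
    have h4 : q.den ∣ q.num.natAbs := Int.natCast_dvd.1 h2
    exact Nat.Coprime.eq_one_of_dvd this.symm h4
  rw [h3] at h1
  refine ⟨q.num.natAbs, ?_, ?_⟩
  · rw [Nat.pos_iff_ne_zero, Int.natAbs_ne_zero]
    intro h0; rw [h0] at h1; simp at h1; exact hn h1
  · rw [Int.natAbs_sq]; simpa using h1

lemma ht_one_le (u v : ℤ) : 1 ≤ ht u v := le_max_left _ _

lemma S_to_R (a b c : ℤ) (sq : ℤ → ℤ) (hsq : IsSqfreePart sq) (j k : ℝ) (hk : 1 ≤ k)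
    (h : SConv a b c sq j k Set.univ) : RConv a b c j k Set.univ := by
  unfold SConv at h
  unfold RConv
  choose! M hM0 hM using fun (n : ℤ) (hn : n ≠ 0) => sqpart_int hsq hn
  have hsum : Summable fun e : ℕ => ((e : ℝ) ^ (-(2*k))) := by
    rw [Real.summable_nat_rpow]; linarith
  have h2 := hsum.mul_of_nonneg h (fun e => by positivity)
    (fun p => by
      simp only [STerm, Pi.zero_apply]
      have := ht_one_le p.1.1 p.1.2
      positivity)
  let φ : RIdx a b c Set.univ → ℕ × SIdx a b c Set.univ := fun q =>
    (M (Fbin a b c q.1.2.1 q.1.2.2) / q.1.1, ⟨q.1.2, q.2.2.1, trivial⟩)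
  have hdv : ∀ q : RIdx a b c Set.univ, q.1.1 ∣ M (Fbin a b c q.1.2.1 q.1.2.2) := by
    intro q
    have hF : Fbin a b c q.1.2.1 q.1.2.2 ≠ 0 := q.2.2.1.2
    have := sqfree_dvd (s := sq (Fbin a b c q.1.2.1 q.1.2.2))
      (m := M (Fbin a b c q.1.2.1 q.1.2.2)) (hsq _ hF).1
      (t := q.1.1) (by have := q.2.1; omega) (by rw [← hM _ hF]; exact q.2.2.2.2)
    exact_mod_cast this
  have hφ : Function.Injective φ := by
    intro q q' hqq
    simp only [φ, Prod.mk.injEq] at hqq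
    obtain ⟨h1, h3⟩ := hqq
    replace h3 : q.1.2 = q'.1.2 := congrArg Subtype.val h3
    have d1 := hdv q
    have d2 := hdv q'
    rw [← h3] at h1 d2
    have hF : Fbin a b c q.1.2.1 q.1.2.2 ≠ 0 := q.2.2.1.2
    have hpos := hM0 _ hF
    apply Subtype.ext
    apply Prod.ext _ h3
    obtain ⟨x, hx⟩ := d1
    obtain ⟨y, hy⟩ := d2
    have t1 : 0 < q.1.1 := q.2.1
    have t2 : 0 < q'.1.1 := q'.2.1
    have ex : M (Fbin a b c q.1.2.1 q.1.2.2) / q.1.1 = x := by rw [hx]; exact Nat.mul_div_cancel_left _ t1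
    have ey : M (Fbin a b c q.1.2.1 q.1.2.2) / q'.1.1 = y := by rw [hy]; exact Nat.mul_div_cancel_left _ t2
    rw [ex, ey] at h1
    subst h1
    rw [hx] at hy
    have : 0 < x := by
      rcases Nat.eq_zero_or_pos x with h | h
      · rw [h] at hx; omega
      · exact h
    exact Nat.eq_of_mul_eq_mul_right this hy
  refine (h2.comp_injective hφ).congr fun q => ?_
  have hF : Fbin a b c q.1.2.1 q.1.2.2 ≠ 0 := q.2.2.1.2
  simp only [φ, Function.comp, STerm, RTerm]
  have t1 : 0 < q.1.1 := q.2.1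
  have hpos := hM0 _ hF
  obtain ⟨x, hx⟩ := hdv q
  have hx0 : 0 < x := by
    rcases Nat.eq_zero_or_pos x with h | h
    · rw [h] at hx; omega
    · exact h
  have hFe := hM _ hF
  have hs0 : sq (Fbin a b c q.1.2.1 q.1.2.2) ≠ 0 := (hsq _ hF).1.ne_zero
  rw [hx, Nat.mul_div_cancel_left _ t1]
  rw [hx] at hFe
  generalize hFF : Fbin a b c q.1.2.1 q.1.2.2 = F at *
  have e1 : |(F : ℝ)| = |(sq F : ℝ)| * ((q.1.1 : ℝ) * x) ^ 2 := by
    rw [show (F : ℝ) = (sq F : ℝ) * ((q.1.1 : ℝ) * x) ^ 2 by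
      conv_lhs => rw [hFe]
      push_cast; ring, abs_mul, abs_of_nonneg (by positivity : (0:ℝ) ≤ ((q.1.1 : ℝ) * x) ^ 2)]
  have s0 : 0 < |(sq F : ℝ)| := abs_pos.2 (by exact_mod_cast hs0)
  have t0 : (0:ℝ) < q.1.1 := by exact_mod_cast t1
  have x0 : (0:ℝ) < x := by exact_mod_cast hx0
  rw [e1, Real.mul_rpow s0.le (by positivity), ← Real.rpow_natCast, ← Real.rpow_mul (by positivity),
    Real.mul_rpow t0.le x0.le]
  have : (q.1.1 : ℝ) ^ (2 * k) * (q.1.1 : ℝ) ^ (((2:ℕ):ℝ) * -k) = 1 := by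
    rw [← Real.rpow_add t0]; norm_num
  have e3 : (((2:ℕ):ℝ) * -k) = -(2*k) := by push_cast; ring
  rw [e3] at this ⊢
  linear_combination (-(x:ℝ) ^ (-(2 * k)) * |(sq F : ℝ)| ^ (-k) * ht q.1.2.1 q.1.2.2 ^ (-j)) * this

end

section

lemma lat_coprime {d d' : ℕ} {α : ZMod (d^2)} {u v : ℤ} (h : (u, v) ∈ latL d d' α)
    (hc : Int.gcd u v = 1) : IsCoprime (d : ℤ) v := by
  rw [Int.isCoprime_iff_gcd_eq_one]
  by_contra hne
  obtain ⟨p, hp, hpd⟩ := Nat.exists_prime_and_dvd hne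
  have h1 : (p : ℤ) ∣ d := (Int.natCast_dvd_natCast.2 hpd).trans (Int.gcd_dvd_left _ _)
  have h2 : (p : ℤ) ∣ v := (Int.natCast_dvd_natCast.2 hpd).trans (Int.gcd_dvd_right _ _)
  have h3 : p ∣ d ^ 2 := (Int.natCast_dvd_natCast.1 h1).trans (dvd_pow_self _ two_ne_zero)
  have h4 := congrArg (ZMod.castHom h3 (ZMod p)) h.1
  simp only [map_mul, map_intCast] at h4
  rw [(ZMod.intCast_zmod_eq_zero_iff_dvd v p).2 h2, mul_zero] at h4
  have h5 : (p : ℤ) ∣ u := (ZMod.intCast_zmod_eq_zero_iff_dvd u p).1 h4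
  have := Int.dvd_coe_gcd h5 h2
  rw [hc] at this
  have := Int.natCast_dvd_natCast.1 (by exact_mod_cast this : (p:ℤ) ∣ ((1:ℕ):ℤ))
  exact hp.one_lt.ne' (Nat.dvd_one.1 this)

lemma lat_dvd {a b c : ℤ} {d d' : ℕ} {α : ZMod (d^2)} {u v : ℤ}
    (h : (u, v) ∈ latL d d' α) (hα : α ∈ OmegaSet a b c d) :
    ((d * d' : ℕ) : ℤ) ^ 2 ∣ Fbin a b c u v := by
  have h1 : (d : ℤ) ^ 2 ∣ u^3 + a*u^2*v + b*u*v^2 + c*v^3 := by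
    have := (ZMod.intCast_zmod_eq_zero_iff_dvd (u^3 + a*u^2*v + b*u*v^2 + c*v^3) (d^2)).1 (by
      push_cast
      have h1 := h.1
      simp only at h1
      rw [h1]
      have h2 : α^3 + (a : ZMod (d^2))*α^2 + (b : ZMod (d^2))*α + (c : ZMod (d^2)) = 0 := hα
      linear_combination (v : ZMod (d^2)) ^ 3 * h2)
    exact_mod_cast this
  obtain ⟨x, hx⟩ := h.2
  obtain ⟨y, hy⟩ := h1
  simp only at hx
  exact ⟨x * y, by rw [Fbin, hy, hx]; push_cast; ring⟩

lemma lat_inj {d d' e e' : ℕ} {α : ZMod (d^2)} {β : ZMod (e^2)} {u v : ℤ}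
    (h : (u, v) ∈ latL d d' α) (h' : (u, v) ∈ latL e e' β) (hc : Int.gcd u v = 1)
    (ht : d * d' = e * e') (hd' : 0 < d') :
    (⟨d, d', α⟩ : Σ d : ℕ, ℕ × ZMod (d^2)) = ⟨e, e', β⟩ := by
  have key : ∀ {d d' : ℕ} {α : ZMod (d^2)}, (u, v) ∈ latL d d' α → Nat.gcd (d * d') v.natAbs = d' := by
    intro d d' α h
    have h1 := lat_coprime h hc
    rw [Int.isCoprime_iff_gcd_eq_one, Int.gcd, Int.natAbs_natCast] at h1
    rw [Nat.Coprime.gcd_mul_left_cancel _ h1]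
    apply Nat.gcd_eq_left
    have := h.2
    simp only at this
    have h3 : (d' : ℤ) ∣ v := (dvd_pow_self _ two_ne_zero).trans this
    exact Int.natCast_dvd.1 h3
  have k1 := key h
  have k2 := key h'
  rw [ht, k2] at k1
  subst k1
  have := Nat.eq_of_mul_eq_mul_right hd' ht
  subst this
  have h1 := (lat_coprime h hc).pow_left (m := 2)
  obtain ⟨x, y, hxy⟩ := h1
  have e1 : (y : ZMod (d^2)) * v = 1 := by
    have := congrArg (Int.cast : ℤ → ZMod (d^2)) hxy
    push_cast at this
    rw [← this]
    have : ((d : ZMod (d^2))) ^ 2 = 0 := by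
      have := ZMod.natCast_self (d^2)
      push_cast at this; exact this
    rw [this]; ring
  have : α = β := by
    have h2 := h.1.symm.trans h'.1
    simp only at h2
    linear_combination (y : ZMod (d^2)) * h2 + (β - α) * e1
  rw [this]

lemma lat_short {a b c : ℤ} {ω : (d d' : ℕ) → ZMod (d^2) → ℤ × ℤ} (hω : IsShortestChoice a b c ω)
    {d d' : ℕ} (hd : 0 < d) (hd' : 0 < d') (hdd : Nat.Coprime d d') {α : ZMod (d^2)}
    (hα : α ∈ OmegaSet a b c d) :
    (ω d d' α).1^2 + (ω d d' α).2^2 ≤ 2 * ((d * d' : ℕ) : ℤ) ^ 2 := by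
  obtain ⟨-, -, h3⟩ := hω d d' hd hd' hdd α hα
  have : NeZero (d^2) := ⟨by positivity⟩
  have : NeZero (d'^2) := ⟨by positivity⟩
  set t := d * d' with ht
  let f : ℕ × ℕ → ZMod (d^2) × ZMod (d'^2) := fun p => ((p.1 : ZMod (d^2)) - α * p.2, (p.2 : ZMod (d'^2)))
  have hcard : (Finset.univ : Finset (ZMod (d^2) × ZMod (d'^2))).card <
      (Finset.range (t+1) ×ˢ Finset.range (t+1)).card := by
    rw [Finset.card_univ, Fintype.card_prod, ZMod.card, ZMod.card, Finset.card_product,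
      Finset.card_range]
    nlinarith
  obtain ⟨p, hp, q, hq, hne, hpq⟩ := Finset.exists_ne_map_eq_of_card_lt_of_maps_to hcard
    (f := f) (fun _ _ => Finset.mem_univ _)
  simp only [f, Prod.mk.injEq] at hpq
  obtain ⟨e1, e2⟩ := hpq
  rw [Finset.mem_product, Finset.mem_range, Finset.mem_range] at hp hq
  have := h3 ((p.1 : ℤ) - q.1, (p.2 : ℤ) - q.2) ⟨by push_cast; linear_combination e1, by
    have := (ZMod.intCast_zmod_eq_zero_iff_dvd ((p.2 : ℤ) - q.2) (d'^2)).1 (by push_cast; rw [e2]; ring)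
    exact_mod_cast this⟩ (by
      intro h0
      apply hne
      simp only [Prod.mk_eq_zero] at h0
      apply Prod.ext <;> omega)
  refine this.trans ?_
  simp only
  have b1 : ((p.1 : ℤ) - q.1)^2 ≤ (t:ℤ)^2 := by apply sq_le_sq' <;> omega
  have b2 : ((p.2 : ℤ) - q.2)^2 ≤ (t:ℤ)^2 := by apply sq_le_sq' <;> omega
  linarith

lemma Fbin_le (a b c : ℤ) : ∃ C : ℝ, 1 ≤ C ∧ ∀ u v : ℤ, ∀ r : ℝ, |(u:ℝ)| ≤ r → |(v:ℝ)| ≤ r →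
    |(Fbin a b c u v : ℝ)| ≤ C * r ^ 4 := by
  refine ⟨1 + |(a:ℝ)| + |(b:ℝ)| + |(c:ℝ)|, by linarith [abs_nonneg (a:ℝ), abs_nonneg (b:ℝ), abs_nonneg (c:ℝ)],
    fun u v r hu hv => ?_⟩
  have hr : 0 ≤ r := (abs_nonneg _).trans hu
  have e : (Fbin a b c u v : ℝ) = (u:ℝ)^3*v + a*((u:ℝ)^2*v^2) + b*((u:ℝ)*v^3) + c*(v:ℝ)^4 := by
    simp only [Fbin]; push_cast; ring
  have m1 : |(u:ℝ)^3*v| ≤ r^4 := by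
    rw [abs_mul, abs_pow, show r^4 = r^3*r by ring]; gcongr
  have m2 : |(u:ℝ)^2*v^2| ≤ r^4 := by
    rw [abs_mul, abs_pow, abs_pow, show r^4 = r^2*r^2 by ring]; gcongr
  have m3 : |(u:ℝ)*v^3| ≤ r^4 := by
    rw [abs_mul, abs_pow, show r^4 = r*r^3 by ring]; gcongr
  have m4 : |(v:ℝ)^4| ≤ r^4 := by
    rw [abs_pow]; gcongr
  rw [e]
  calc _ ≤ |(u:ℝ)^3*v| + |a*((u:ℝ)^2*v^2)| + |b*((u:ℝ)*v^3)| + |c*(v:ℝ)^4| := by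
        refine (abs_add_le _ _).trans ?_
        gcongr
        refine (abs_add_le _ _).trans ?_
        gcongr
        exact abs_add_le _ _
    _ ≤ r^4 + |(a:ℝ)| * r^4 + |(b:ℝ)| * r^4 + |(c:ℝ)| * r^4 := by
        rw [abs_mul (a:ℝ), abs_mul (b:ℝ), abs_mul (c:ℝ)]; gcongr
    _ = _ := by ring

lemma R_to_Q (a b c : ℤ) (ω : (d d' : ℕ) → ZMod (d^2) → ℤ × ℤ) (hω : IsShortestChoice a b c ω)
    (j k : ℝ) (hj : 0 < j) (hk : 1 ≤ k)
    (h : RConv a b c j k Set.univ) : QConv a b c j k ω := by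
  unfold RConv at h
  unfold QConv
  obtain ⟨C, hC1, hC⟩ := Fbin_le a b c
  let φ : QIdx a b c ω → RIdx a b c Set.univ := fun x =>
    ⟨(x.1.1 * x.1.2.1, ω x.1.1 x.1.2.1 x.1.2.2), Nat.mul_pos x.2.1 x.2.2.1, x.2.2.2.2.2, trivial,
      lat_dvd (hω _ _ x.2.1 x.2.2.1 x.2.2.2.1 _ x.2.2.2.2.1).1 x.2.2.2.2.1⟩
  have hφ : Function.Injective φ := by
    rintro ⟨⟨d, d', α⟩, hx⟩ ⟨⟨e, e', β⟩, hy⟩ hxy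
    replace hxy := congrArg Subtype.val hxy
    simp only [φ, Prod.mk.injEq] at hxy
    apply Subtype.ext
    have m1 := (hω _ _ hx.1 hx.2.1 hx.2.2.1 _ hx.2.2.2.1).1
    have m2 := (hω _ _ hy.1 hy.2.1 hy.2.2.1 _ hy.2.2.2.1).1
    simp only at m1 m2
    rw [← hxy.2] at m2
    exact lat_inj m1 m2 hx.2.2.2.2.1 hxy.1 hx.2.1
  have h2 := (h.comp_injective hφ).mul_left (C ^ k * 2 ^ j)
  refine Summable.of_nonneg_of_le (fun x => ?_) (fun x => ?_) h2
  · simp only [QTerm]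
    positivity
  obtain ⟨⟨d, d', α⟩, hx⟩ := x
  simp only [φ, Function.comp, QTerm, RTerm]
  have hsh := lat_short hω hx.1 hx.2.1 hx.2.2.1 hx.2.2.2.1
  have hF := hx.2.2.2.2.2
  simp only at hsh hF
  generalize hw : ω d d' α = w at *
  obtain ⟨u, v⟩ := w
  simp only at *
  have ht0 : 0 < d * d' := Nat.mul_pos hx.1 hx.2.1
  rw [← Nat.cast_mul]
  generalize d * d' = t at *
  have ht1 : (1:ℝ) ≤ t := by exact_mod_cast ht0
  set n : ℝ := Real.sqrt ((u:ℝ)^2 + (v:ℝ)^2) with hn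
  have hu : |(u:ℝ)| ≤ n := Real.abs_le_sqrt (by nlinarith [sq_nonneg (v:ℝ)])
  have hv : |(v:ℝ)| ≤ n := Real.abs_le_sqrt (by nlinarith [sq_nonneg (u:ℝ)])
  have hn2 : n ≤ 2 * t := by
    rw [hn, Real.sqrt_le_left (by positivity)]
    have : (u:ℝ)^2 + (v:ℝ)^2 ≤ 2 * (t:ℝ)^2 := by exact_mod_cast hsh
    nlinarith
  have hFp : 0 < |(Fbin a b c u v : ℝ)| := abs_pos.2 (by exact_mod_cast hF)
  have hFC := hC u v n hu hv
  have hn0 : 0 < n := by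
    by_contra hneg
    have : n = 0 := le_antisymm (not_lt.1 hneg) (Real.sqrt_nonneg _)
    rw [this] at hFC; norm_num at hFC; rw [hFC] at hFp; simp at hFp
  have i1 : n ^ (-(4*k)) ≤ C ^ k * |(Fbin a b c u v : ℝ)| ^ (-k) := by
    have : n ^ (-(4*k)) = C ^ k * (C * n^4) ^ (-k) := by
      rw [Real.mul_rpow (by positivity) (by positivity), ← Real.rpow_natCast, ← Real.rpow_mul hn0.le,
        ← mul_assoc, ← Real.rpow_add (by positivity)]
      norm_num
    rw [this]
    gcongr ?_ * ?_
    exact Real.rpow_le_rpow_of_nonpos hFp hFC (by linarith)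
  have i2 : ht u v ≤ 2 * max 1 (Real.log t) := by
    have hlog : ∀ w : ℤ, |(w:ℝ)| ≤ n → Real.log |(w:ℝ)| ≤ 2 * max 1 (Real.log t) := by
      intro w hw
      rcases eq_or_ne w 0 with rfl | h0
      · simp
      · have : Real.log |(w:ℝ)| ≤ Real.log (2 * t) := by
          apply Real.log_le_log (abs_pos.2 (by exact_mod_cast h0)) (hw.trans hn2)
        rw [Real.log_mul (by norm_num) (by positivity)] at this
        have l2 : Real.log 2 ≤ 1 := by linarith [Real.log_two_lt_d9]
        have := le_max_left 1 (Real.log t)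
        have := le_max_right 1 (Real.log t)
        linarith
    refine max_le ?_ (max_le (hlog u hu) (hlog v hv))
    have := le_max_left 1 (Real.log t)
    linarith
  have i3 : max 1 (Real.log t) ^ (-j) ≤ 2 ^ j * ht u v ^ (-j) := by
    have hm : 0 < max 1 (Real.log t) := lt_of_lt_of_le one_pos (le_max_left _ _)
    have : max 1 (Real.log t) ^ (-j) = 2 ^ j * (2 * max 1 (Real.log t)) ^ (-j) := by
      rw [Real.mul_rpow (by positivity) (by positivity), ← mul_assoc, ← Real.rpow_add (by positivity)]
      norm_num
    rw [this]
    gcongr ?_ * ?_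
    exact Real.rpow_le_rpow_of_nonpos (lt_of_lt_of_le one_pos (ht_one_le _ _)) i2 (by linarith)
  have hpos : 0 ≤ ht u v ^ (-j) := Real.rpow_nonneg (zero_le_one.trans (ht_one_le u v)) _
  calc _ ≤ (t:ℝ) ^ (2*k) * (2 ^ j * ht u v ^ (-j)) * (C ^ k * |(Fbin a b c u v : ℝ)| ^ (-k)) := by
        gcongr
    _ = _ := by ring

end

section

open WeierstrassCurve Height

def N4 (a b c u v : ℤ) : ℤ := u^4 - 2*b*u^2*v^2 - 8*c*u*v^3 - (4*a*c - b^2)*v^4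

/-- `(u,v)` are coprime homogeneous coordinates of the normalised x-coordinate of `P` -/
def PRep (a b c D : ℤ) (P : (twist a b c D).Point) (u v : ℤ) : Prop :=
  Int.gcd u v = 1 ∧ ∃ κ : ℚ, κ ≠ 0 ∧ xr a b c D P = κ • ![(u:ℚ), (v:ℚ)]

lemma exists_coprime_rep (p : Fin 2 → ℚ) (hp : p ≠ 0) :
    ∃ u v : ℤ, Int.gcd u v = 1 ∧ ∃ κ : ℚ, κ ≠ 0 ∧ p = κ • ![(u:ℚ), (v:ℚ)] := by
  by_cases h1 : p 1 = 0
  · refine ⟨1, 0, by simp, p 0, ?_, ?_⟩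
    · intro h0; apply hp; ext i; fin_cases i <;> simp [h0, h1]
    · ext i; fin_cases i <;> simp [h1]
  · have hd : ((p 0 / p 1).den : ℚ) ≠ 0 := by exact_mod_cast (p 0 / p 1).den_ne_zero
    refine ⟨(p 0 / p 1).num, (p 0 / p 1).den, ?_, p 1 / (p 0 / p 1).den, by positivity, ?_⟩
    · have := (p 0 / p 1).reduced
      rwa [Int.gcd, Int.natAbs_natCast]
    · ext i; fin_cases i
      · have := Rat.num_div_den (p 0 / p 1)
        simp
        rw [div_mul_eq_mul_div, mul_div_assoc, this]
        field_simp
      · simp [hd]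

lemma exists_rep (a b c D : ℤ) (hD : D ≠ 0) (P : (twist a b c D).Point) : ∃ u v, PRep a b c D P u v :=
  exists_coprime_rep _ (xr_ne_zero a b c D hD P)

lemma logHeight_coprime (u v : ℤ) (h : Int.gcd u v = 1) :
    logHeight ![(u:ℚ), (v:ℚ)] = Real.log (max |(u:ℝ)| |(v:ℝ)|) := by
  have h1 : (Finset.univ : Finset (Fin 2)).gcd ![u, v] = 1 := by
    have := Int.coe_gcd u v
    rw [h] at this
    rw [show (Finset.univ : Finset (Fin 2)) = {0, 1} from rfl]
    simp only [Finset.gcd_insert, Finset.gcd_singleton]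
    have h2 : gcd u (normalize v) = gcd u v := by
      simpa using (normalize_associated v).gcd_eq_right u
    exact h2.trans (by exact_mod_cast this.symm)
  have h2 := Rat.logHeight_eq_max_abs_of_gcd_eq_one h1
  have h3 : (Int.cast ∘ ![u, v] : Fin 2 → ℚ) = ![(u:ℚ), (v:ℚ)] := by
    ext i; fin_cases i <;> simp
  rw [h3] at h2
  rw [h2]
  congr 1
  have : (⨆ i, |(![u, v] : Fin 2 → ℤ) i|) = max |u| |v| := by
    apply le_antisymm
    · apply ciSup_le
      intro i; fin_cases i <;> simp
    · apply max_le
      · exact le_ciSup (f := fun i => |(![u, v] : Fin 2 → ℤ) i|) (Set.finite_range _).bddAbove 0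
      · exact le_ciSup (f := fun i => |(![u, v] : Fin 2 → ℤ) i|) (Set.finite_range _).bddAbove 1
  rw [this]; push_cast; rfl

lemma PRep.hh {a b c D : ℤ} {P : (twist a b c D).Point} {u v : ℤ} (h : PRep a b c D P u v) :
    hh a b c D P = Real.log (max |(u:ℝ)| |(v:ℝ)|) := by
  obtain ⟨h1, κ, hκ, h2⟩ := h
  rw [_root_.hh, h2, Height.logHeight_smul_eq_logHeight _ hκ, logHeight_coprime u v h1]

lemma PRep.pm {a b c D : ℤ} (hD : D ≠ 0) {P Q : (twist a b c D).Point} {u v : ℤ} (h : PRep a b c D P u v)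
    (h' : PRep a b c D Q u v) : P = Q ∨ P = -Q := by
  have hD' : (D : ℚ) ≠ 0 := by exact_mod_cast hD
  obtain ⟨h1, κ, hκ, h2⟩ := h
  obtain ⟨-, κ', hκ', h3⟩ := h'
  rw [← Affine.Point.xRep_eq_xRep_iff]
  have a0 := congrFun h2 0
  have a1 := congrFun h2 1
  have b0 := congrFun h3 0
  have b1 := congrFun h3 1
  simp [xr] at a0 a1 b0 b1
  cases P with
  | zero =>
    rw [← Affine.Point.zero_def] at *
    cases Q with
    | zero => rfl
    | some x y h =>
      simp at a0 a1 b0 b1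
      rcases a1 with h | h
      · exact absurd h hκ
      · rw [h] at b1; simp [hD] at b1
  | some x y h =>
    cases Q with
    | zero =>
      rw [← Affine.Point.zero_def] at *
      simp at a0 a1 b0 b1
      rcases b1 with h | h
      · exact absurd h hκ'
      · rw [h] at a1; simp [hD] at a1
    | some x' y' h' =>
      simp at a0 a1 b0 b1
      have hv : (v:ℚ) ≠ 0 := by intro h; rw [h] at a1; simp [hD] at a1
      have hk : κ = κ' := mul_right_cancel₀ hv (a1.symm.trans b1)
      ext i; fin_cases i
      · simp [a0, b0, hk]
      · simp

lemma coprime_pm {u v u' v' : ℤ} (h : Int.gcd u v = 1) (h' : Int.gcd u' v' = 1)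
    (hd : u * v' = u' * v) : (u' = u ∧ v' = v) ∨ (u' = -u ∧ v' = -v) := by
  rw [← Int.isCoprime_iff_gcd_eq_one] at h h'
  obtain ⟨x, y, hxy⟩ := h
  obtain ⟨x', y', hxy'⟩ := h'
  have e1 : u' = (x*u'+y*v') * u := by linear_combination (-u') * hxy - y * hd
  have e2 : v' = (x*u'+y*v') * v := by linear_combination (-v') * hxy + x * hd
  generalize x*u'+y*v' = k at *
  have hk : IsUnit k := by
    rw [isUnit_iff_dvd_one]
    exact ⟨x' * u + y' * v, by rw [← hxy']; linear_combination x' * e1 + y' * e2⟩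
  rcases Int.isUnit_iff.1 hk with rfl | rfl
  · left; constructor <;> linarith
  · right; constructor <;> linarith

lemma PRep.unique {a b c D : ℤ} {P : (twist a b c D).Point} {u v u' v' : ℤ} (h : PRep a b c D P u v)
    (h' : PRep a b c D P u' v') : (u' = u ∧ v' = v) ∨ (u' = -u ∧ v' = -v) := by
  obtain ⟨h1, κ, hκ, h2⟩ := h
  obtain ⟨h1', κ', hκ', h2'⟩ := h'
  apply coprime_pm h1 h1'
  rw [h2] at h2'
  have a0 := congrFun h2' 0
  have a1 := congrFun h2' 1
  simp at a0 a1
  have : κ * κ' * ((u:ℚ) * v' - u' * v) = 0 := by linear_combination κ' * v' * a0 - κ' * u' * a1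
  have h3 : ((u:ℚ) * v' - u' * v) = 0 := by
    rcases mul_eq_zero.1 this with h | h
    · exact absurd h (mul_ne_zero hκ hκ')
    · exact h
  have : (u:ℚ) * v' = u' * v := by linarith
  exact_mod_cast this

lemma PRep.F {a b c D : ℤ} (hD : D ≠ 0) {P : (twist a b c D).Point} {u v : ℤ} (h : PRep a b c D P u v) :
    ∃ m : ℚ, (Fbin a b c u v : ℚ) = D * m ^ 2 := by
  have hD' : (D : ℚ) ≠ 0 := by exact_mod_cast hD
  obtain ⟨h1, κ, hκ, h2⟩ := h
  have a0 := congrFun h2 0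
  have a1 := congrFun h2 1
  simp [xr] at a0 a1
  cases P with
  | zero =>
    rw [← Affine.Point.zero_def] at *
    simp [hκ] at a1
    exact ⟨0, by simp [Fbin, a1]⟩
  | some x y h =>
    have e := tw_eq h
    simp at a0 a1
    refine ⟨y / κ ^ 2, ?_⟩
    have hu : (u:ℚ) = x / κ := by field_simp; linarith
    have hv : (v:ℚ) = D / κ := by field_simp; linarith
    simp only [Fbin]
    push_cast
    rw [hu, hv]
    field_simp
    linear_combination (-1 : ℚ) * e

lemma PRep.dup {a b c D : ℤ} (hD : D ≠ 0) {P : (twist a b c D).Point} {u v : ℤ} (h : PRep a b c D P u v) :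
    ∃ κ : ℚ, κ ≠ 0 ∧ xr a b c D (P + P) = κ • ![(N4 a b c u v : ℚ), (4 * Fbin a b c u v : ℚ)] := by
  obtain ⟨h1, κ, hκ, h2⟩ := h
  obtain ⟨μ, hμ, h3⟩ := par_core a b c D hD P P
  rw [h2] at h3
  have a0 := congrFun h3 0
  have a1 := congrFun h3 1
  simp [xr, s3, asm] at a0 a1
  refine ⟨μ * κ ^ 4, by positivity, ?_⟩
  ext i; fin_cases i
  · simp [xr]; rw [a0]; simp only [N4]; push_cast; ring
  · simp [xr]; rw [a1]; simp only [Fbin]; push_cast; ring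

lemma pt_exists (a b c D : ℤ) (hD : D ≠ 0) (u v : ℤ) (hP : (u, v) ∈ Psi a b c) (m : ℚ)
    (hm : (Fbin a b c u v : ℚ) = D * m ^ 2) : ∃ P, PRep a b c D P u v := by
  have hD' : (D : ℚ) ≠ 0 := by exact_mod_cast hD
  have hF := hP.2
  simp only at hF
  have hv : (v:ℚ) ≠ 0 := by
    intro h; apply hF
    have : v = 0 := by exact_mod_cast h
    simp [Fbin, this]
  have hm0 : m ≠ 0 := by
    rintro rfl
    apply hF
    simp at hm; exact hm
  have hns : (twist a b c D).Nonsingular (D * u / v) (D ^ 2 * m / v ^ 2) := by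
    rw [Affine.nonsingular_iff, Affine.equation_iff]
    refine ⟨?_, Or.inr ?_⟩
    · simp only [Fbin] at hm
      push_cast at hm
      simp [twist]
      field_simp
      linear_combination (-1 : ℚ) * hm
    · simp [twist]
      intro h
      have : (D:ℚ) ^ 2 * m / v ^ 2 ≠ 0 := by positivity
      apply this; linarith
  refine ⟨.some _ _ hns, hP.1, D / v, by positivity, ?_⟩
  ext i; fin_cases i
  · simp [xr]; field_simp
  · simp [xr]; field_simp

lemma ht_eq {a b c D : ℤ} {P : (twist a b c D).Point} {u v : ℤ} (h : PRep a b c D P u v) :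
    ht u v = max 1 (hh a b c D P) := by
  rw [h.hh, ht]
  rcases eq_or_ne u 0 with rfl | hu
  · simp [← max_assoc]
  rcases eq_or_ne v 0 with rfl | hv
  · simp [max_comm _ (0:ℝ), ← max_assoc]
  have hu' : 0 < |(u:ℝ)| := abs_pos.2 (by exact_mod_cast hu)
  have hv' : 0 < |(v:ℝ)| := abs_pos.2 (by exact_mod_cast hv)
  rcases le_total |(u:ℝ)| |(v:ℝ)| with h | h
  · rw [max_eq_right h, max_eq_right (Real.log_le_log hu' h)]
  · rw [max_eq_left h, max_eq_left (Real.log_le_log hv' h)]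

end

section

open WeierstrassCurve Height

lemma N4_F_lower (a b c : ℤ) (hf : DistinctRoots a b c) : ∃ e : ℝ, 0 < e ∧ ∀ u v : ℤ,
    e * (max |(u:ℝ)| |(v:ℝ)|) ^ 4 ≤ |(N4 a b c u v : ℝ)| + |(Fbin a b c u v : ℝ)| := by
  have hdisc : ((disc a b c : ℤ) : ℝ) ≠ 0 := by exact_mod_cast disc_ne a b c hf
  simp only [disc] at hdisc
  push_cast at hdisc
  set S : ℝ := 2*|(b:ℝ)| + 8*|(c:ℝ)| + |4*(a:ℝ)*c - b^2| with hS
  have hS0 : 0 ≤ S := by positivity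
  set K : ℝ := 1 + 2*S with hK
  let g : ℝ → ℝ := fun x => |x^4 - 2*b*x^2 - 8*c*x - (4*a*c - b^2)| + |x^3 + a*x^2 + b*x + c|
  have hg : Continuous g := by fun_prop
  obtain ⟨x0, -, hx0⟩ := (isCompact_Icc (a := -K) (b := K)).exists_isMinOn
    ⟨0, by constructor <;> linarith⟩ hg.continuousOn
  have hgpos : 0 < g x0 := by
    by_contra hneg
    have h1 : g x0 = 0 := le_antisymm (not_lt.1 hneg) (by positivity)
    have h2 := (add_eq_zero_iff_of_nonneg (abs_nonneg _) (abs_nonneg _)).1 h1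
    obtain ⟨h3, h4⟩ := h2
    rw [abs_eq_zero] at h3 h4
    have h5 : (3*x0^2 + 2*a*x0 + b)^2 = 0 := by linear_combination h3 + (8*x0+4*a)*h4
    have h6 := pow_eq_zero_iff two_ne_zero |>.1 h5
    apply hdisc
    linear_combination (18 * (b - a^2/3) * (x0 + a/3) - 27 * (c - a*b/3 + 2*a^3/27)) * h4
      - (6*(b-a^2/3)*(x0+a/3)^2 - 9*(c - a*b/3 + 2*a^3/27)*(x0+a/3) + 4*(b-a^2/3)^2) * h6
  refine ⟨min (1/2) (g x0 / K^4), by positivity, fun u v => ?_⟩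
  by_cases hc : K * |(v:ℝ)| ≤ |(u:ℝ)|
  · have hv : |(v:ℝ)| ≤ |(u:ℝ)| := by nlinarith [abs_nonneg (v:ℝ)]
    rw [max_eq_left hv]
    have e1 : (N4 a b c u v : ℝ) = (u:ℝ)^4 - (2*b*((u:ℝ)^2*v^2) + 8*c*((u:ℝ)*v^3) + (4*a*c-b^2)*(v:ℝ)^4) := by
      simp only [N4]; push_cast; ring
    have b0 : K^2 * (|(u:ℝ)|^2*|(v:ℝ)|^2) ≤ |(u:ℝ)|^4 := by
      have : (K*|(v:ℝ)|)^2 ≤ |(u:ℝ)|^2 := by gcongr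
      nlinarith [sq_nonneg |(u:ℝ)|]
    have b1 : |(2*b*((u:ℝ)^2*v^2) + 8*c*((u:ℝ)*v^3) + (4*a*c-b^2)*(v:ℝ)^4)| ≤ S * (|(u:ℝ)|^2*|(v:ℝ)|^2) := by
      have m2 : |(u:ℝ)*v^3| ≤ |(u:ℝ)|^2*|(v:ℝ)|^2 := by
        rw [abs_mul, abs_pow, show |(u:ℝ)| * |(v:ℝ)|^3 = |(u:ℝ)| * |(v:ℝ)| * |(v:ℝ)|^2 by ring, sq |(u:ℝ)|]
        gcongr
      have m3 : |(v:ℝ)^4| ≤ |(u:ℝ)|^2*|(v:ℝ)|^2 := by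
        rw [abs_pow, show |(v:ℝ)|^4 = |(v:ℝ)|^2*|(v:ℝ)|^2 by ring]
        gcongr
      calc _ ≤ |2*b*((u:ℝ)^2*v^2)| + |8*c*((u:ℝ)*v^3)| + |(4*a*c-b^2)*(v:ℝ)^4| := by
            refine (abs_add_le _ _).trans ?_
            gcongr
            exact abs_add_le _ _
        _ ≤ 2*|(b:ℝ)| * (|(u:ℝ)|^2*|(v:ℝ)|^2) + 8*|(c:ℝ)| * (|(u:ℝ)|^2*|(v:ℝ)|^2)
            + |4*(a:ℝ)*c-b^2| * (|(u:ℝ)|^2*|(v:ℝ)|^2) := by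
            rw [abs_mul (2*(b:ℝ)), abs_mul (8*(c:ℝ)), abs_mul (4*(a:ℝ)*c-b^2), abs_mul 2 (b:ℝ), abs_mul 8 (c:ℝ),
              abs_mul ((u:ℝ)^2), abs_pow, abs_pow, abs_two, show |(8:ℝ)| = 8 by norm_num]
            gcongr
        _ = _ := by rw [hS]; ring
    have b2 : S * (|(u:ℝ)|^2*|(v:ℝ)|^2) ≤ 1/2 * |(u:ℝ)|^4 := by
      have : 2 * S ≤ K^2 := by rw [hK]; nlinarith
      have h3 : 0 ≤ (|(u:ℝ)|^2*|(v:ℝ)|^2) := by positivity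
      nlinarith
    have b3 : |(u:ℝ)|^4 = (u:ℝ)^4 := by rw [← abs_pow, abs_of_nonneg (by positivity)]
    have b4 := abs_le.1 (b1.trans b2)
    calc _ ≤ 1/2 * |(u:ℝ)|^4 := by gcongr; exact min_le_left _ _
      _ ≤ (N4 a b c u v : ℝ) := by rw [e1]; linarith [b4.1, b4.2]
      _ ≤ |(N4 a b c u v : ℝ)| := le_abs_self _
      _ ≤ _ := by linarith [abs_nonneg (Fbin a b c u v : ℝ)]
  · push Not at hc
    have hv0 : 0 < |(v:ℝ)| := by
      by_contra hneg
      have : |(v:ℝ)| = 0 := le_antisymm (not_lt.1 hneg) (abs_nonneg _)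
      rw [this] at hc; linarith [abs_nonneg (u:ℝ)]
    have hv : (v:ℝ) ≠ 0 := abs_pos.1 hv0
    have hx : |(u:ℝ)/v| ≤ K := by
      rw [abs_div, div_le_iff₀ hv0]; exact hc.le
    have hm := hx0 (abs_le.1 hx)
    simp only [Set.mem_ofPred_eq] at hm
    have hH : max |(u:ℝ)| |(v:ℝ)| ≤ K * |(v:ℝ)| := max_le hc.le (by nlinarith)
    have e1 : |(N4 a b c u v : ℝ)| + |(Fbin a b c u v : ℝ)| = |(v:ℝ)|^4 * g ((u:ℝ)/v) := by
      simp only [g, mul_add, ← abs_pow, ← abs_mul]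
      simp only [N4, Fbin]
      push_cast
      congr 2 <;> field_simp
    rw [e1]
    calc _ ≤ g x0 / K^4 * (K * |(v:ℝ)|)^4 := by
          gcongr; exact min_le_right _ _
      _ = |(v:ℝ)|^4 * g x0 := by
          have hK0 : K ≠ 0 := by positivity
          field_simp
      _ ≤ _ := by gcongr

def bnd (a b c D : ℤ) (M : ℚ) (Q : (twist a b c D).Point) : Prop :=
  |xr a b c D Q 0| ≤ M * |xr a b c D Q 1|

lemma bnd_choice (a b c D : ℤ) (hD : D ≠ 0) (R : (twist a b c D).Point) (hR : R ≠ 0) :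
    ∃ M : ℚ, 0 < M ∧ ∀ Q, bnd a b c D M Q ∨ bnd a b c D M (Q + R) := by
  have hD' : (D : ℚ) ≠ 0 := by exact_mod_cast hD
  obtain ⟨r, ρ, hρ, hr⟩ : ∃ r ρ : ℚ, ρ ≠ 0 ∧ xr a b c D R = ρ • ![r, 1] := by
    cases R with
    | zero => exact absurd rfl hR
    | some x y h =>
      refine ⟨x / D, D, hD', ?_⟩
      ext i; fin_cases i
      · simp [xr]; field_simp
      · simp [xr]
  let A : ℚ → Fin 3 → ℚ := fun z => asm a b c ![r, 1 + z * r, z]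
  set K : ℚ := |2 * r| + r^2 + 1 with hK
  have hA : ∀ᶠ z in nhds (0:ℚ), 1/2 < A z 2 ∧ |A z 1| < K ∧ |A z 0| < K := by
    have c0 : Continuous fun z => A z 0 := by simp only [A, asm]; simp; fun_prop
    have c1 : Continuous fun z => A z 1 := by simp only [A, asm]; simp; fun_prop
    have c2 : Continuous fun z => A z 2 := by simp only [A, asm]; simp; fun_prop
    refine (c2.tendsto 0).eventually (lt_mem_nhds ?_) |>.and
      (((c1.abs).tendsto 0).eventually (gt_mem_nhds ?_) |>.and
        (((c0.abs).tendsto 0).eventually (gt_mem_nhds ?_)))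
    · simp [A, asm]; norm_num
    · simp [A, asm]; rw [hK, abs_mul, abs_two]; nlinarith [sq_nonneg r]
    · simp [A, asm]; rw [hK]; nlinarith [abs_nonneg (2*r)]
  rw [(nhds_basis_abs_sub_lt (0:ℚ)).eventually_iff] at hA
  obtain ⟨δ, hδ, hA⟩ := hA
  have hKpos : 0 < K := by positivity
  refine ⟨δ⁻¹ + (4 * K + 1), by positivity, fun Q => ?_⟩
  by_cases hQ : bnd a b c D (δ⁻¹ + (4 * K + 1)) Q
  · exact Or.inl hQ
  right
  simp only [bnd, not_le] at hQ ⊢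
  have hx0 : xr a b c D Q 0 ≠ 0 := by
    intro h0; rw [h0, abs_zero] at hQ
    have : 0 ≤ (δ⁻¹ + (4 * K + 1)) * |xr a b c D Q 1| := by positivity
    linarith
  set x0 := xr a b c D Q 0 with hx0d
  set x1 := xr a b c D Q 1 with hx1d
  have hz : |x1 / x0 - 0| < δ := by
    rw [sub_zero, abs_div, div_lt_iff₀ (abs_pos.2 hx0)]
    have : δ⁻¹ * |x1| < |x0| := by
      refine lt_of_le_of_lt ?_ hQ
      gcongr
      linarith
    rwa [inv_mul_lt_iff₀ hδ] at this
  obtain ⟨h2, h1, h0⟩ := hA hz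
  obtain ⟨κ, hκ, hpar⟩ := par_core a b c D hD Q R
  have hs : s3 (xr a b c D Q) (xr a b c D R) = (x0 * ρ) • ![r, 1 + (x1/x0) * r, x1/x0] := by
    rw [hr]
    ext i; fin_cases i
    · simp [s3]; ring
    · simp [s3, ← hx0d, ← hx1d]; field_simp
    · simp [s3, ← hx0d, ← hx1d]; field_simp
  have hs2 : asm a b c ((x0 * ρ) • ![r, 1 + (x1/x0) * r, x1/x0]) = (x0 * ρ)^2 • A (x1/x0) := by
    ext i; fin_cases i <;> simp [A, asm] <;> ring
  rw [hs, hs2, smul_smul] at hpar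
  set κ' := κ * (x0 * ρ)^2 with hκ'
  have hκ0 : κ' ≠ 0 := by positivity
  have p0 := congrFun hpar 0
  have p1 := congrFun hpar 1
  have p2 := congrFun hpar 2
  simp only [s3, Pi.smul_apply, smul_eq_mul] at p0 p1 p2
  simp only [Matrix.cons_val_zero, Matrix.cons_val_one, Matrix.cons_val] at p0 p1 p2
  generalize xr a b c D (Q + R) 0 = X at *
  generalize xr a b c D (Q + R) 1 = Y at *
  generalize xr a b c D (Q - R) 0 = X' at *
  generalize xr a b c D (Q - R) 1 = Y' at *
  generalize A (x1 / x0) 0 = A0 at *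
  generalize A (x1 / x0) 1 = A1 at *
  generalize A (x1 / x0) 2 = A2 at *
  have hYY : Y * Y' ≠ 0 := by rw [p2]; exact mul_ne_zero hκ0 (by linarith)
  have hY : Y ≠ 0 := left_ne_zero_of_mul hYY
  have hY' : Y' ≠ 0 := right_ne_zero_of_mul hYY
  -- A2 X^2 - A1 X Y + A0 Y^2 = 0
  have q : A2 * X^2 = A1 * X * Y - A0 * Y^2 := by
    have : κ' * Y' * (A2 * X^2 - (A1 * X * Y - A0 * Y^2)) = 0 := by
      linear_combination (-X^2*Y') * p2 + (X * Y * Y') * p1 - Y^2 * Y' * p0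
    rcases mul_eq_zero.1 this with h | h
    · exact absurd h (mul_ne_zero hκ0 hY')
    · linarith
  have hmain : |X| ≤ (4 * K + 1) * |Y| := by
    by_contra hneg
    push Not at hneg
    have hYp : 0 < |Y| := abs_pos.2 hY
    have hXp : 0 < |X| := lt_of_le_of_lt (by positivity) hneg
    have q1 : 1/2 * |X|^2 ≤ K * |X| * |Y| + K * |Y|^2 := by
      calc 1/2 * |X|^2 ≤ A2 * |X|^2 := by gcongr
        _ = A2 * X^2 := by rw [sq_abs]
        _ = A1 * X * Y - A0 * Y^2 := q
        _ ≤ |A1 * X * Y| + |A0 * Y^2| := by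
            have := le_abs_self (A1 * X * Y); have := neg_abs_le (A0 * Y^2); linarith
        _ = |A1| * |X| * |Y| + |A0| * |Y|^2 := by rw [abs_mul, abs_mul, abs_mul, abs_pow]
        _ ≤ _ := by gcongr
    have q2 : |Y| ≤ |X| := by nlinarith
    nlinarith
  have := inv_pos.2 hδ
  exact hmain.trans (mul_le_mul_of_nonneg_right (by linarith) (abs_nonneg _))

lemma bnd_F (a b c : ℤ) (hf : DistinctRoots a b c) (M : ℚ) (hM : 0 < M) : ∃ e : ℝ, 0 < e ∧
    ∀ D : ℤ, D ≠ 0 → ∀ P : (twist a b c D).Point, bnd a b c D M (P + P) → ∀ u v, PRep a b c D P u v →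
      (u, v) ∈ Psi a b c ∧ e * (max |(u:ℝ)| |(v:ℝ)|) ^ 4 ≤ |(Fbin a b c u v : ℝ)| := by
  obtain ⟨e, he, h⟩ := N4_F_lower a b c hf
  have hMR : (0:ℝ) < M := by exact_mod_cast hM
  refine ⟨e / (4 * M + 1), by positivity, fun D hD P hP u v hr => ?_⟩
  obtain ⟨κ, hκ, hd⟩ := hr.dup hD
  have h1 : |(N4 a b c u v : ℝ)| ≤ 4 * M * |(Fbin a b c u v : ℝ)| := by
    simp only [bnd, hd] at hP
    simp [abs_mul] at hP
    have hk : 0 < |κ| := abs_pos.2 hκ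
    have : |(N4 a b c u v : ℚ)| ≤ 4 * M * |(Fbin a b c u v : ℚ)| := by
      have h3 : |κ| * |(N4 a b c u v : ℚ)| ≤ |κ| * (4 * M * |(Fbin a b c u v : ℚ)|) := by linarith
      exact le_of_mul_le_mul_left h3 hk
    exact_mod_cast this
  have h2 := h u v
  have h3 : e / (4 * M + 1) * (max |(u:ℝ)| |(v:ℝ)|) ^ 4 ≤ |(Fbin a b c u v : ℝ)| := by
    rw [div_mul_eq_mul_div, div_le_iff₀ (by positivity)]
    linarith
  refine ⟨⟨hr.1, ?_⟩, h3⟩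
  intro h0
  simp only at h0
  rw [h0] at h3
  have : 0 < (max |(u:ℝ)| |(v:ℝ)|) := by
    rcases eq_or_ne u 0 with rfl | hu
    · have := hr.1
      simp at this
      apply lt_max_of_lt_right
      apply abs_pos.2
      have : v ≠ 0 := by rintro rfl; simp at this
      exact_mod_cast this
    · exact lt_max_of_lt_left (abs_pos.2 (by exact_mod_cast hu))
  have : 0 < e / (4 * M + 1) * (max |(u:ℝ)| |(v:ℝ)|) ^ 4 := by positivity
  simp at h3
  linarith

lemma sq_unique {sq : ℤ → ℤ} (hsq : IsSqfreePart sq) {n D : ℤ} (hn : n ≠ 0) (hD : D ≠ 0) {m : ℚ}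
    (h : (n : ℚ) = D * m ^ 2) : sq n = sq D := by
  obtain ⟨x, hx0, hx⟩ := sqpart_int hsq hn
  obtain ⟨y, hy0, hy⟩ := sqpart_int hsq hD
  have hd : (m.den : ℚ) ≠ 0 := by exact_mod_cast m.den_ne_zero
  have hm : (m.num : ℤ) ≠ 0 := by
    intro h0; rw [Rat.num_eq_zero] at h0; rw [h0] at h; simp at h; exact hn h
  have h1 : n * (m.den : ℤ)^2 = D * m.num ^ 2 := by
    have := m.num_div_den
    rw [← this] at h
    field_simp at h
    exact_mod_cast h
  have h2 : sq n * (x * m.den) ^ 2 = sq D * (y * m.num)^2 := by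
    calc _ = (sq n * (x:ℤ)^2) * m.den^2 := by ring
      _ = n * m.den^2 := by rw [← hx]
      _ = _ := h1
      _ = (sq D * (y:ℤ)^2) * m.num^2 := by rw [← hy]
      _ = _ := by ring
  have hx' : (x:ℤ) ≠ 0 := by omega
  have hy' : (y:ℤ) ≠ 0 := by omega
  have hd' : (m.den:ℤ) ≠ 0 := by exact_mod_cast m.den_ne_zero
  have d1 := sqfree_dvd (hsq n hn).1 (mul_ne_zero hy' hm) ⟨sq D, by rw [h2]; ring⟩
  have d2 := sqfree_dvd (hsq D hD).1 (mul_ne_zero hx' hd') ⟨sq n, by rw [← h2]; ring⟩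
  have h3 : ((x:ℤ) * m.den)^2 = (y * m.num)^2 := by
    rw [← Int.natAbs_eq_iff_sq_eq]
    exact Nat.dvd_antisymm (Int.natAbs_dvd_natAbs.2 d2) (Int.natAbs_dvd_natAbs.2 d1)
  rw [h3] at h2
  exact mul_right_cancel₀ (pow_ne_zero 2 (mul_ne_zero hy' hm)) h2

end

section

open WeierstrassCurve Height

lemma lat_construct {a b c u v : ℤ} (hP : (u, v) ∈ Psi a b c) {t : ℕ} (ht : 0 < t)
    (hdv : (t : ℤ) ^ 2 ∣ Fbin a b c u v) :
    ∃ (d d' : ℕ) (α : ZMod (d^2)), 0 < d ∧ 0 < d' ∧ Nat.Coprime d d' ∧ d * d' = t ∧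
      α ∈ OmegaSet a b c d ∧ (u, v) ∈ latL d d' α := by
  obtain ⟨hc, hF⟩ := hP
  simp only at hc hF
  set g : ℤ := u^3 + a*u^2*v + b*u*v^2 + c*v^3 with hg
  have hFg : Fbin a b c u v = v * g := rfl
  have hcop : IsCoprime u v := Int.isCoprime_iff_gcd_eq_one.2 hc
  have hvg : IsCoprime v g := by
    have : g = u^3 + v * (a*u^2 + b*u*v + c*v^2) := by rw [hg]; ring
    rw [this]
    exact IsCoprime.add_mul_left_right (hcop.symm.pow_right) _
  have hvgN : Nat.Coprime v.natAbs g.natAbs := Int.isCoprime_iff_gcd_eq_one.1 hvg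
  have hdvN : t ^ 2 ∣ v.natAbs * g.natAbs := by
    rw [← Int.natAbs_mul, ← hFg]
    have := Int.natAbs_dvd_natAbs.2 hdv
    simpa [Int.natAbs_pow] using this
  have hv2 : Nat.gcd (t^2) v.natAbs * Nat.gcd (t^2) g.natAbs = t^2 := by
    rw [← Nat.Coprime.gcd_mul _ hvgN]
    exact Nat.gcd_eq_left hdvN
  have hcop2 : Nat.Coprime (Nat.gcd (t^2) v.natAbs) (Nat.gcd (t^2) g.natAbs) :=
    Nat.Coprime.coprime_dvd_left (Nat.gcd_dvd_right _ _) (Nat.Coprime.coprime_dvd_right (Nat.gcd_dvd_right _ _) hvgN)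
  obtain ⟨d', hd'⟩ := exists_eq_pow_of_mul_eq_pow (by
    rw [Nat.isUnit_iff]; exact hcop2) hv2
  obtain ⟨d, hd⟩ := exists_eq_pow_of_mul_eq_pow (by
    rw [Nat.isUnit_iff]; exact hcop2.symm) ((mul_comm _ _).trans hv2)
  have htt : d * d' = t := by
    rw [hd, hd'] at hv2
    have : (d * d')^2 = t^2 := by rw [← hv2]; ring
    exact Nat.pow_left_injective two_ne_zero this
  have hd0 : 0 < d := Nat.pos_of_ne_zero (by rintro rfl; simp at htt; omega)
  have hd'0 : 0 < d' := Nat.pos_of_ne_zero (by rintro rfl; simp at htt; omega)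
  have hdv' : (d':ℤ)^2 ∣ v := by
    rw [← Int.natCast_pow, ← hd', Int.natCast_dvd]; exact Nat.gcd_dvd_right _ _
  have hdg : (d:ℤ)^2 ∣ g := by
    rw [← Int.natCast_pow, ← hd, Int.natCast_dvd]; exact Nat.gcd_dvd_right _ _
  have hdd : Nat.Coprime d d' := by
    rw [hd, hd'] at hcop2
    exact ((Nat.coprime_pow_left_iff two_pos _ _).1 ((Nat.coprime_pow_right_iff two_pos _ _).1 hcop2)).symm
  have hvd : IsCoprime v ((d:ℤ)^2) := hvg.of_isCoprime_of_dvd_right hdg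
  obtain ⟨x, y, hxy⟩ := hvd
  have hx : (x : ZMod (d^2)) * (v : ZMod (d^2)) = 1 := by
    have := congrArg (fun z : ℤ => (z : ZMod (d^2))) hxy
    push_cast at this
    have h0 : ((d:ZMod (d^2)))^2 = 0 := by
      have := ZMod.natCast_self (d^2)
      push_cast at this; exact this
    rw [h0] at this; simpa using this
  refine ⟨d, d', (u : ZMod (d^2)) * x, hd0, hd'0, hdd, htt, ?_, ?_, hdv'⟩
  · have h1 : ((g : ℤ) : ZMod (d^2)) = 0 := by
      rw [ZMod.intCast_zmod_eq_zero_iff_dvd]; exact_mod_cast hdg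
    rw [hg] at h1
    push_cast at h1
    show _ = _
    generalize (x : ZMod (d^2)) = X at *
    generalize (u : ZMod (d^2)) = U at *
    generalize (v : ZMod (d^2)) = V at *
    linear_combination X^3 * h1 - (a * U^2*X^2 + b * U * X * (X*V+1) + c * (X^2*V^2 + X*V+1)) * hx
  · show (u : ZMod (d^2)) = _
    simp only
    rw [mul_assoc, hx, mul_one]

lemma lat_rigid {a b c : ℤ} {ω : (d d' : ℕ) → ZMod (d^2) → ℤ × ℤ} (hω : IsShortestChoice a b c ω)
    {d d' : ℕ} (hd : 0 < d) (hd' : 0 < d') (hdd : Nat.Coprime d d') {α : ZMod (d^2)}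
    (hα : α ∈ OmegaSet a b c d) {u v : ℤ} (hc : Int.gcd u v = 1) (hL : (u, v) ∈ latL d d' α)
    (hs : u^2 + v^2 < ((d * d' : ℕ) : ℤ) ^ 2) : ω d d' α = (u, v) ∨ ω d d' α = (-u, -v) := by
  obtain ⟨⟨h1, h1'⟩, h2, h3⟩ := hω d d' hd hd' hdd α hα
  generalize ω d d' α = w at *
  obtain ⟨x, y⟩ := w
  simp only at h1 h1'
  obtain ⟨l1, l1'⟩ := hL
  simp only at l1 l1'
  have hne : ((u, v) : ℤ × ℤ) ≠ 0 := by
    intro h0; simp at h0; rw [h0.1, h0.2] at hc; simp at hc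
  have h4 := h3 (u, v) ⟨l1, l1'⟩ hne
  simp only at h4
  have dv1 : (d:ℤ)^2 ∣ x * v - y * u := by
    have := (ZMod.intCast_zmod_eq_zero_iff_dvd (x * v - y * u) (d^2)).1 (by
      push_cast; rw [h1, l1]; ring)
    exact_mod_cast this
  have dv2 : (d':ℤ)^2 ∣ x * v - y * u := dvd_sub (l1'.mul_left _) (h1'.mul_right _)
  have dv : ((d * d' : ℕ) : ℤ)^2 ∣ x * v - y * u := by
    push_cast
    rw [mul_pow]
    refine IsCoprime.mul_dvd ?_ dv1 dv2
    exact (Nat.isCoprime_iff_coprime.2 hdd).pow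
  have hdet : x * v - y * u = 0 := by
    apply Int.eq_zero_of_abs_lt_dvd dv
    refine lt_of_le_of_lt ?_ hs
    apply abs_le_of_sq_le_sq _ (by positivity)
    have : (x * v - y * u)^2 + (x*u + y*v)^2 = (x^2+y^2)*(u^2+v^2) := by ring
    nlinarith [sq_nonneg (x*u + y*v), sq_nonneg u, sq_nonneg v]
  obtain ⟨p, q, hpq⟩ := Int.isCoprime_iff_gcd_eq_one.2 hc
  set k := p * x + q * y with hk
  have hx : x = k * u := by rw [hk]; linear_combination (-x) * hpq + q * hdet
  have hy : y = k * v := by rw [hk]; linear_combination (-y) * hpq - p * hdet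
  have hk0 : k ≠ 0 := by rintro h0; apply h2; rw [hx, hy, h0]; simp
  have hpos : 0 < u^2 + v^2 := by
    by_contra hneg
    apply hne
    have : u = 0 := by nlinarith [sq_nonneg u, sq_nonneg v]
    have : v = 0 := by nlinarith [sq_nonneg u, sq_nonneg v]
    simp [*]
  have hk2 : k^2 ≤ 1 := by
    rw [hx, hy] at h4
    by_contra hneg
    nlinarith
  have hk3 : k = 1 ∨ k = -1 := by
    have : k ≤ 1 := by nlinarith
    have : -1 ≤ k := by nlinarith
    omega
  rcases hk3 with h | h
  · left; rw [hx, hy, h]; simp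
  · right; rw [hx, hy, h]; simp

end

section

open WeierstrassCurve Height

lemma Q_lower (a b c : ℤ) (hf : DistinctRoots a b c) (sq : ℤ → ℤ) (hsq : IsSqfreePart sq)
    (ω : (d d' : ℕ) → ZMod (d^2) → ℤ × ℤ) (hω : IsShortestChoice a b c ω) (j k : ℝ) (hj : 0 < j)
    (hk : 1 ≤ k) (D : ℤ) (hD : D ≠ 0) (M : ℚ) (hM : 0 < M) :
    ∃ H₀ c₁ : ℝ, 0 < c₁ ∧ ∀ P : (twist a b c D).Point, bnd a b c D M (P + P) →
      ∀ u v, PRep a b c D P u v → H₀ ≤ max |(u:ℝ)| |(v:ℝ)| →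
      ∃ x ∈ QIdx a b c ω, (ω x.1 x.2.1 x.2.2 = (u, v) ∨ ω x.1 x.2.1 x.2.2 = (-u, -v)) ∧
        c₁ * (1 + hh a b c D P) ^ (-j) ≤ QTerm j k ω x := by
  obtain ⟨e, he, hF⟩ := bnd_F a b c hf M hM
  obtain ⟨C, hC1, hC⟩ := Fbin_le a b c
  set s : ℝ := |(sq D : ℝ)| with hs
  have hs1 : 1 ≤ s := by
    have : sq D ≠ 0 := (hsq D hD).1.ne_zero
    rw [hs]
    exact_mod_cast Int.one_le_abs this
  have hlC : 0 ≤ Real.log C := Real.log_nonneg hC1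
  refine ⟨2 * s / e + 1, (e / (16 * s)) ^ k * (4 + Real.log C) ^ (-j), by positivity, fun P hP u v hr hH => ?_⟩
  obtain ⟨hPsi, hlow⟩ := hF D hD P hP u v hr
  obtain ⟨m, hm⟩ := hr.F hD
  have hsF := sq_unique hsq hPsi.2 hD hm
  obtain ⟨t, ht0, ht⟩ := sqpart_int hsq hPsi.2
  simp only at hsF ht
  rw [hsF] at ht
  have hup := hC u v (max |(u:ℝ)| |(v:ℝ)|) (le_max_left _ _) (le_max_right _ _)
  have hhP := hr.hh
  have hu := le_max_left |(u:ℝ)| |(v:ℝ)|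
  have hv := le_max_right |(u:ℝ)| |(v:ℝ)|
  set H := max |(u:ℝ)| |(v:ℝ)| with hHd
  have hFt : |(Fbin a b c u v : ℝ)| = s * (t:ℝ)^2 := by
    rw [ht]; push_cast; rw [abs_mul, abs_of_nonneg (sq_nonneg (t:ℝ))]
  have hH1 : 1 ≤ H := le_trans (by linarith [show 0 ≤ 2 * s / e by positivity]) hH
  have hH2 : 2 * s < e * H := by
    have : 2 * s / e < H := by linarith
    rw [div_lt_iff₀ he] at this; linarith
  have huv : (u:ℝ)^2 + (v:ℝ)^2 ≤ 2 * H^2 := by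
    rw [← sq_abs (u:ℝ), ← sq_abs (v:ℝ)]
    nlinarith [abs_nonneg (u:ℝ), abs_nonneg (v:ℝ)]
  have htH : 2 * H^2 < (t:ℝ)^2 := by
    rw [hFt] at hlow
    have h1 : s * (2 * H^2) < s * (t:ℝ)^2 := by
      calc s * (2 * H^2) = 2 * s * H^2 := by ring
        _ < e * H * H^2 := by gcongr
        _ ≤ e * H * H^2 * H := le_mul_of_one_le_right (by positivity) hH1
        _ = e * H^4 := by ring
        _ ≤ _ := hlow
    exact lt_of_mul_lt_mul_left h1 (by positivity)
  obtain ⟨d, d', α, hd, hd', hdd, hdt, hα, hL⟩ := lat_construct hPsi ht0 ⟨sq D, by rw [ht]; ring⟩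
  have hrig := lat_rigid hω hd hd' hdd hα hPsi.1 hL (by
    rw [hdt]
    have : (u:ℝ)^2 + (v:ℝ)^2 < (t:ℝ)^2 := by linarith
    exact_mod_cast this)
  refine ⟨⟨d, d', α⟩, ⟨hd, hd', hdd, hα, ?_⟩, hrig, ?_⟩
  · simp only
    rcases hrig with h | h
    · rw [h]; exact hPsi
    · rw [h]
      obtain ⟨h1, h2⟩ := hPsi
      refine ⟨by simpa using h1, ?_⟩
      have : Fbin a b c (-u) (-v) = Fbin a b c u v := by simp only [Fbin]; ring
      simp only [this]; exact h2
  · have hw : (((ω d d' α).1 : ℝ))^2 + ((ω d d' α).2 : ℝ)^2 = (u:ℝ)^2 + (v:ℝ)^2 := by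
      rcases hrig with h | h <;> rw [h] <;> simp
    simp only [QTerm]
    rw [hw]
    have hdt' : (d:ℝ) * (d':ℝ) = t := by exact_mod_cast hdt
    rw [hdt']
    have htpos : (0:ℝ) < t := by exact_mod_cast ht0
    have ht1 : (1:ℝ) ≤ t := by exact_mod_cast ht0
    have hHpos : 0 < H := by linarith
    have hlH : 0 ≤ Real.log H := Real.log_nonneg hH1
    have huvpos : 0 < (u:ℝ)^2 + (v:ℝ)^2 := by
      rcases le_total |(u:ℝ)| |(v:ℝ)| with h | h
      · rw [hHd, max_eq_right h] at hHpos
        have := abs_pos.1 hHpos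
        positivity
      · rw [hHd, max_eq_left h] at hHpos
        have := abs_pos.1 hHpos
        positivity
    have A1 : (e * H^4 / s) ^ k ≤ (t:ℝ) ^ (2*k) := by
      rw [Real.rpow_mul htpos.le, show (t:ℝ)^(2:ℝ) = (t:ℝ)^2 by norm_cast]
      apply Real.rpow_le_rpow (by positivity) _ (by linarith)
      rw [div_le_iff₀ (by linarith)]
      rw [hFt] at hlow; linarith
    have A2 : ((2 * H)^4)^(-k) ≤ Real.sqrt ((u:ℝ)^2 + (v:ℝ)^2) ^ (-(4*k)) := by
      rw [show ((2*H)^4)^(-k) = (2*H)^(-(4*k)) by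
        rw [← Real.rpow_natCast, ← Real.rpow_mul (by positivity)]; push_cast; ring_nf]
      apply Real.rpow_le_rpow_of_nonpos (Real.sqrt_pos.2 huvpos) _ (by linarith)
      rw [Real.sqrt_le_left (by positivity)]
      nlinarith
    have A3 : ((4 + Real.log C) * (1 + hh a b c D P)) ^ (-j) ≤ max 1 (Real.log t) ^ (-j) := by
      apply Real.rpow_le_rpow_of_nonpos (by positivity) _ (by linarith)
      rw [hhP]
      apply max_le
      · nlinarith
      · have h1 : (t:ℝ) ≤ C * H^4 := by
          calc (t:ℝ) ≤ t * t := le_mul_of_one_le_right htpos.le ht1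
            _ = 1 * (t:ℝ)^2 := by ring
            _ ≤ s * (t:ℝ)^2 := by gcongr
            _ ≤ _ := by rw [← hFt]; exact hup
        calc Real.log t ≤ Real.log (C * H^4) := Real.log_le_log htpos h1
          _ = Real.log C + 4 * Real.log H := by
            rw [Real.log_mul (by positivity) (by positivity), Real.log_pow]; norm_num
          _ ≤ _ := by nlinarith
    have hh0 := hh_nonneg a b c D P
    calc (e / (16 * s)) ^ k * (4 + Real.log C) ^ (-j) * (1 + hh a b c D P) ^ (-j)
        = (e * H^4 / s) ^ k * ((4 + Real.log C) * (1 + hh a b c D P)) ^ (-j) * ((2 * H)^4)^(-k) := by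
          rw [Real.mul_rpow (x := 4 + Real.log C) (by positivity) (by positivity),
            show e * H^4 / s = e / (16 * s) * (2*H)^4 by field_simp; norm_num,
            Real.mul_rpow (by positivity) (by positivity), Real.rpow_neg (x := (2*H)^4) (by positivity)]
          have : ((2*H)^4)^k ≠ 0 := by positivity
          field_simp
      _ ≤ _ := by gcongr

lemma box_div (r : ℕ) (j : ℝ) (hj : 2 * j ≤ r) (hj0 : 0 < j) (g : (Fin r → ℕ) → ℝ) (c : ℝ) (hc : 0 < c)
    (h : ∀ N : ℕ, 1 ≤ N → ∀ n : Fin r → ℕ, (∀ i, N ≤ n i ∧ n i < 2 * N) → c * (N:ℝ) ^ (-(2*j)) ≤ g n) :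
    ¬ Summable g := by
  intro hs
  rw [summable_iff_vanishing_norm] at hs
  obtain ⟨s, hs⟩ := hs c hc
  have hr : 0 < r := by
    have : (0:ℝ) < r := by linarith
    exact_mod_cast this
  let i0 : Fin r := ⟨0, hr⟩
  set N := s.sup (fun n => n i0) + 1 with hN
  have hN1 : 1 ≤ N := by omega
  let t : Finset (Fin r → ℕ) := Fintype.piFinset fun _ => Finset.Ico N (2 * N)
  have hmem : ∀ n ∈ t, ∀ i, N ≤ n i ∧ n i < 2 * N := by
    intro n hn i
    have := Fintype.mem_piFinset.1 hn i
    simpa using this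
  have hdis : Disjoint t s := by
    rw [Finset.disjoint_left]
    intro n hn hns
    have h1 := (hmem n hn i0).1
    have h2 : n i0 ≤ s.sup (fun n => n i0) := Finset.le_sup (f := fun n : Fin r → ℕ => n i0) hns
    omega
  have h1 := hs t hdis
  have hcard : (t.card : ℝ) = (N:ℝ)^r := by
    simp [t, Fintype.card_piFinset]
    congr 1
    have : 2 * N - N = N := by omega
    rw [this]
  have h2 : t.card • (c * (N:ℝ) ^ (-(2*j))) ≤ ∑ n ∈ t, g n :=
    Finset.card_nsmul_le_sum _ _ _ fun n hn => h N hN1 n (hmem n hn)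
  rw [nsmul_eq_mul, hcard] at h2
  have hNR : (1:ℝ) ≤ N := by exact_mod_cast hN1
  have h3 : 1 ≤ (N:ℝ)^r * (N:ℝ) ^ (-(2*j)) := by
    rw [← Real.rpow_natCast, ← Real.rpow_add (by linarith)]
    exact Real.one_le_rpow hNR (by linarith)
  have h4 := le_trans (le_abs_self _) (h1.le.trans' (by rw [Real.norm_eq_abs]))
  have h5 := lt_of_le_of_lt (le_abs_self _) (by rw [Real.norm_eq_abs] at h1; exact h1)
  nlinarith

lemma IsQuad.sum_le {G : Type*} [AddCommGroup G] {q : G → ℝ} (h : IsQuad q) {ι : Type*} (s : Finset ι)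
    (x : ι → G) : q (∑ i ∈ s, x i) ≤ 2 ^ s.card * ∑ i ∈ s, q (x i) := by
  classical
  induction s using Finset.induction_on with
  | empty => simp [h.zero]
  | insert i s hi ih =>
    rw [Finset.sum_insert hi, Finset.sum_insert hi, Finset.card_insert_of_notMem hi]
    have h1 := h.add_le (x i) (∑ i ∈ s, x i)
    have h2 : (1:ℝ) ≤ 2 ^ s.card := one_le_pow₀ (by norm_num)
    have h3 := h.1 (x i)
    calc _ ≤ 2 * q (x i) + 2 * (2 ^ s.card * ∑ i ∈ s, q (x i)) := by linarith
      _ ≤ 2 * (2 ^ s.card * q (x i)) + 2 * (2 ^ s.card * ∑ i ∈ s, q (x i)) := by nlinarith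
      _ = _ := by ring

lemma PRep.neg' {a b c D : ℤ} {P : (twist a b c D).Point} {u v : ℤ} (h : PRep a b c D P u v) :
    PRep a b c D P (-u) (-v) := by
  obtain ⟨h1, κ, hκ, h2⟩ := h
  refine ⟨by simpa using h1, -κ, neg_ne_zero.2 hκ, ?_⟩
  rw [h2]; ext i; fin_cases i <;> simp

lemma Q_to_rank (a b c : ℤ) (hf : DistinctRoots a b c) (sq : ℤ → ℤ) (hsq : IsSqfreePart sq)
    (ω : (d d' : ℕ) → ZMod (d^2) → ℤ × ℤ) (hω : IsShortestChoice a b c ω) (j k : ℝ) (hj : 0 < j)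
    (hk : 1 ≤ k) (hQ : QConv a b c j k ω) : RankBound a b c j := by
  intro D hD ⟨P, hP⟩
  have hr2 : 2 * j ≤ (⌈2*j⌉₊ : ℝ) := Nat.le_ceil _
  generalize ⌈2*j⌉₊ = r at *
  have hr0 : 0 < r := by
    have : (0:ℝ) < r := by linarith
    exact_mod_cast this
  let i0 : Fin r := ⟨0, hr0⟩
  have hli := Fintype.linearIndependent_iff.1 hP
  let kk : Bool → (Fin r → ℕ) → Fin r → ℤ := fun ε n i =>
    if i = i0 then 2 * n i + 1 + (if ε then 1 else 0) else n i + 1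
  have hkk1 : ∀ ε n i, 1 ≤ kk ε n i := by
    intro ε n i; simp only [kk]; split_ifs <;> omega
  have hkk2 : ∀ ε n i, kk ε n i ≤ 2 * n i + 2 := by
    intro ε n i; simp only [kk]; split_ifs <;> omega
  have hkkinj : ∀ ε ε' n n', kk ε n = kk ε' n' → n = n' := by
    intro ε ε' n n' h
    funext i
    have h1 := congrFun h i
    simp only [kk] at h1
    split_ifs at h1 <;> omega
  let S : Bool → (Fin r → ℕ) → (twist a b c D).Point := fun ε n => ∑ i, kk ε n i • P i
  have hR : P i0 + P i0 ≠ 0 := by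
    intro h0
    have := hli (fun i => if i = i0 then 2 else 0) (by
      simp [Finset.sum_ite_eq', ite_smul, two_smul, h0]) i0
    simp at this
  obtain ⟨M, hM, hb⟩ := bnd_choice a b c D hD (P i0 + P i0) hR
  have hS : ∀ n, S true n = S false n + P i0 := by
    intro n
    have : ∀ i, kk true n i • P i = kk false n i • P i + (if i = i0 then P i else 0) := by
      intro i
      by_cases h : i = i0
      · simp [kk, h]; rw [add_zsmul _ (2 * (n i0 : ℤ) + 1) 1, one_zsmul]
      · simp [kk, h]
    simp only [S]
    rw [Finset.sum_congr rfl (fun i _ => this i), Finset.sum_add_distrib]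
    simp
  have hch : ∀ n, ∃ ε, bnd a b c D M (S ε n + S ε n) := by
    intro n
    rcases hb (S false n + S false n) with h | h
    · exact ⟨false, h⟩
    · refine ⟨true, ?_⟩
      rw [hS]
      convert h using 1
      abel
  choose ε hε using hch
  choose u v huv using fun n => exists_rep a b c D hD (S (ε n) n)
  have hSinj : ∀ n n', (S (ε n) n = S (ε n') n' ∨ S (ε n) n = - S (ε n') n') → n = n' := by
    intro n n' h
    rcases h with h | h
    · apply hkkinj (ε n) (ε n')
      have := hli (fun i => kk (ε n) n i - kk (ε n') n' i) (by
        simp only [sub_smul, Finset.sum_sub_distrib]; exact sub_eq_zero.2 h)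
      funext i; have := this i; omega
    · exfalso
      have := hli (fun i => kk (ε n) n i + kk (ε n') n' i) (by
        simp only [add_smul, Finset.sum_add_distrib]
        exact eq_neg_iff_add_eq_zero.1 h) i0
      have h1 := hkk1 (ε n) n i0
      have h2 := hkk1 (ε n') n' i0
      omega
  obtain ⟨H₀, c₁, hc₁, hlow⟩ := Q_lower a b c hf sq hsq ω hω j k hj hk D hD M hM
  set bad : Set (Fin r → ℕ) := {n | max |(u n:ℝ)| |(v n:ℝ)| < H₀} with hbad
  have hbadfin : bad.Finite := by
    apply Set.Finite.of_finite_image (f := fun n => (u n, v n))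
    · apply Set.Finite.subset ((Set.finite_Icc (-⌈H₀⌉) ⌈H₀⌉).prod (Set.finite_Icc (-⌈H₀⌉) ⌈H₀⌉))
      rintro _ ⟨n, hn, rfl⟩
      have hn' : max |(u n:ℝ)| |(v n:ℝ)| < H₀ := hn
      obtain ⟨h1, h2⟩ := max_lt_iff.1 hn'
      have h3 := Int.le_ceil H₀
      have h4 := abs_le.1 (h1.le.trans h3)
      have h5 := abs_le.1 (h2.le.trans h3)
      refine Set.mem_prod.2 ⟨⟨?_, ?_⟩, ⟨?_, ?_⟩⟩
      · simp only; exact_mod_cast h4.1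
      · exact_mod_cast h4.2
      · exact_mod_cast h5.1
      · exact_mod_cast h5.2
    · intro n _ n' _ h
      simp only [Prod.mk.injEq] at h
      apply hSinj
      have h1 := huv n'
      rw [← h.1, ← h.2] at h1
      exact (huv n).pm hD h1
  have hgood : ∀ n : (badᶜ : Set (Fin r → ℕ)), ∃ x : QIdx a b c ω,
      (ω x.1.1 x.1.2.1 x.1.2.2 = (u n, v n) ∨ ω x.1.1 x.1.2.1 x.1.2.2 = (-u n, -v n)) ∧
        c₁ * (1 + hh a b c D (S (ε n) n)) ^ (-j) ≤ QTerm j k ω x.1 := by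
    intro ⟨n, hn⟩
    have hn' : H₀ ≤ max |(u n:ℝ)| |(v n:ℝ)| := not_lt.1 hn
    obtain ⟨x, hx, h1, h2⟩ := hlow _ (hε n) _ _ (huv n) hn'
    exact ⟨⟨x, hx⟩, h1, h2⟩
  choose X hX1 hX2 using hgood
  have hXinj : Function.Injective X := by
    intro n n' h
    apply Subtype.ext
    apply hSinj
    have h1 := hX1 n
    have h2 := hX1 n'
    rw [h] at h1
    have h3 : (u n = u n' ∧ v n = v n') ∨ (u n = -u n' ∧ v n = -v n') := by
      rcases h1 with h1 | h1 <;> rcases h2 with h2 | h2 <;> rw [h1] at h2 <;>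
        simp only [Prod.mk.injEq] at h2 <;> omega
    have h4 : PRep a b c D (S (ε n') n') (u n) (v n) := by
      rcases h3 with ⟨h3, h4⟩ | ⟨h3, h4⟩
      · rw [h3, h4]; exact huv n'
      · rw [h3, h4]; exact (huv n').neg'
    exact (huv n).pm hD h4
  have hsum : Summable fun n : (badᶜ : Set (Fin r → ℕ)) => c₁ * (1 + hh a b c D (S (ε n) n)) ^ (-j) := by
    refine Summable.of_nonneg_of_le (fun n => ?_) hX2 (hQ.comp_injective hXinj)
    have := hh_nonneg a b c D (S (ε n) n)
    positivity
  have hsum2 : Summable fun n => c₁ * (1 + hh a b c D (S (ε n) n)) ^ (-j) :=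
    (Set.Finite.summable_compl_iff hbadfin).1 hsum
  obtain ⟨C, hC0, hC⟩ := exists_q a b c hf
  obtain ⟨q, hq, hqh⟩ := hC D hD
  set K : ℝ := 1 + C + 2 ^ r * ∑ i, 16 * q (P i) with hK
  have hK0 : 0 ≤ ∑ i, 16 * q (P i) := Finset.sum_nonneg fun i _ => by linarith [hq.1 (P i)]
  have hK1 : 1 ≤ K := by
    rw [hK]
    have : 0 ≤ 2 ^ r * ∑ i, 16 * q (P i) := by positivity
    linarith
  refine box_div r j hr2 hj _ (c₁ * K ^ (-j)) (by positivity) (fun N hN n hn => ?_) hsum2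
  have hNR : (1:ℝ) ≤ N := by exact_mod_cast hN
  have hb1 : q (S (ε n) n) ≤ (N:ℝ)^2 * (2^r * ∑ i, 16 * q (P i)) := by
    have h1 := hq.sum_le Finset.univ (fun i => kk (ε n) n i • P i)
    rw [Finset.card_univ, Fintype.card_fin] at h1
    refine h1.trans ?_
    rw [← mul_assoc, mul_comm ((N:ℝ)^2), mul_assoc, Finset.mul_sum _ _ ((N:ℝ)^2)]
    gcongr with i
    rw [hq.zsmul]
    have h2 : (kk (ε n) n i : ℝ) ≤ 4 * N := by
      have h2 := hkk2 (ε n) n i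
      have h3 := (hn i).2
      have : kk (ε n) n i ≤ 4 * N := by omega
      exact_mod_cast this
    have h3 : (0:ℝ) ≤ kk (ε n) n i := by
      have := hkk1 (ε n) n i
      have h4 : 0 ≤ kk (ε n) n i := by omega
      exact_mod_cast h4
    have h4 := hq.1 (P i)
    calc _ ≤ (4 * (N:ℝ))^2 * q (P i) := by gcongr
      _ = _ := by ring
  have hb2 : 1 + hh a b c D (S (ε n) n) ≤ K * (N:ℝ)^2 := by
    have h1 := (abs_le.1 (hqh (S (ε n) n))).1
    have h2 : (1:ℝ) ≤ (N:ℝ)^2 := one_le_pow₀ hNR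
    rw [hK]
    nlinarith
  have hb3 := hh_nonneg a b c D (S (ε n) n)
  calc c₁ * K^(-j) * (N:ℝ)^(-(2*j)) = c₁ * (K * (N:ℝ)^2)^(-j) := by
        rw [Real.mul_rpow (by linarith) (by positivity), ← Real.rpow_natCast, ← Real.rpow_mul (by positivity)]
        push_cast
        rw [show (2:ℝ) * -j = -(2*j) by ring]; ring
    _ ≤ _ := by
        gcongr ?_ * ?_
        exact Real.rpow_le_rpow_of_nonpos (by linarith) hb2 (by linarith)

end

section

open WeierstrassCurve Height

def qKer {G : Type*} [AddCommGroup G] {q : G → ℝ} (hq : IsQuad q) : Submodule ℤ G where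
  carrier := {P | q P = 0}
  zero_mem' := hq.zero
  add_mem' {x y} hx hy := by
    have hx' : q x = 0 := hx
    have hy' : q y = 0 := hy
    exact le_antisymm (by linarith [hq.add_le x y]) (hq.1 _)
  smul_mem' n x hx := by
    have hx' : q x = 0 := hx
    show q (n • x) = 0
    rw [hq.zsmul, hx', mul_zero]

lemma quad_count {G : Type*} [AddCommGroup G] {q : G → ℝ} (hq : IsQuad q) (μ : ℝ)
    (hμ : ∀ P, q P < μ → q P = 0) (K : ℕ) (hK : ∀ S : Finset G, (∀ P ∈ S, q P = 0) → S.card ≤ K)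
    (r : ℕ) (hr : ¬ ∃ P : Fin (r+1) → G, LinearIndependent ℤ P) (B : ℝ) (S : Finset G)
    (hS : ∀ P ∈ S, q P ≤ B) (n : ℕ) (hn0 : 0 < n) (hn : 8 * B < n ^ 2 * μ) :
    S.card ≤ K * n ^ r := by
  classical
  set T := qKer hq with hT
  have hTm : ∀ P, P ∈ T ↔ q P = 0 := fun P => Iff.rfl
  let M : Submodule ℤ (G ⧸ T) := Submodule.span ℤ (T.mkQ '' (S : Set G))
  have : Module.Finite ℤ M := Module.Finite.span_of_finite ℤ (S.finite_toSet.image _)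
  have htf : Module.IsTorsionFree ℤ (G ⧸ T) := by
    apply Module.IsTorsionFree.of_smul_eq_zero
    intro m x hx
    obtain ⟨x, rfl⟩ := T.mkQ_surjective x
    rw [← map_smul, Submodule.mkQ_apply, Submodule.Quotient.mk_eq_zero, hTm, hq.zsmul] at hx
    rcases mul_eq_zero.1 hx with h | h
    · left
      have := pow_eq_zero_iff two_ne_zero |>.1 h
      exact_mod_cast this
    · right
      rw [Submodule.mkQ_apply, Submodule.Quotient.mk_eq_zero, hTm]; exact h
  have hfree : Module.Free ℤ M := inferInstance
  let b := Module.finBasis ℤ M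
  set s := Module.finrank ℤ M with hs
  have hsr : s ≤ r := by
    by_contra hlt
    apply hr
    choose y hy using fun i : Fin s => T.mkQ_surjective (b i : G ⧸ T)
    refine ⟨fun i => y ⟨i, by omega⟩, ?_⟩
    apply LinearIndependent.of_comp T.mkQ
    have h1 : LinearIndependent ℤ (fun i : Fin s => (b i : G ⧸ T)) :=
      b.linearIndependent.map' M.subtype (Submodule.ker_subtype M)
    have h2 := h1.comp (fun i : Fin (r+1) => (⟨i, by omega⟩ : Fin s)) (by
      intro i i' h; simp at h; exact Fin.ext h)
    have e : (⇑T.mkQ ∘ fun i : Fin (r+1) => y ⟨i, by omega⟩) =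
        (fun i : Fin s => (b i : G ⧸ T)) ∘ (fun i : Fin (r+1) => (⟨i, by omega⟩ : Fin s)) :=
      funext fun i => hy _
    rw [e]
    exact h2
  have hmem : ∀ x ∈ S, T.mkQ x ∈ M := fun x hx => Submodule.subset_span ⟨x, hx, rfl⟩
  have : NeZero n := ⟨hn0.ne'⟩
  let f : G → Fin s → ZMod n := fun x i =>
    if h : T.mkQ x ∈ M then ((b.repr ⟨T.mkQ x, h⟩ i : ℤ) : ZMod n) else 0
  have key : ∀ x ∈ S, ∀ y ∈ S, f x = f y → q (x - y) = 0 := by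
    intro x hx y hy hxy
    have h1 : ∀ i, ∃ z : ℤ, b.repr ⟨T.mkQ x, hmem x hx⟩ i - b.repr ⟨T.mkQ y, hmem y hy⟩ i = n * z := by
      intro i
      have := congrFun hxy i
      simp only [f, dif_pos (hmem x hx), dif_pos (hmem y hy)] at this
      rw [← sub_eq_zero, ← Int.cast_sub, ZMod.intCast_zmod_eq_zero_iff_dvd] at this
      exact this
    choose z hz using h1
    have h2 : (⟨T.mkQ x, hmem x hx⟩ - ⟨T.mkQ y, hmem y hy⟩ : M) = (n:ℤ) • ∑ i, z i • b i := by
      apply b.repr.injective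
      ext i
      rw [map_sub, Finsupp.sub_apply, hz, map_smul, Finsupp.smul_apply, b.repr_sum_self, smul_eq_mul]
    have h3 := congrArg Subtype.val h2
    obtain ⟨w, hw⟩ := T.mkQ_surjective ((∑ i, z i • b i : M) : G ⧸ T)
    have h4 : T.mkQ (x - y - (n:ℤ) • w) = 0 := by
      rw [map_sub, map_sub, map_smul, hw]
      rw [sub_eq_zero]
      exact h3
    rw [Submodule.mkQ_apply, Submodule.Quotient.mk_eq_zero, hTm] at h4
    have h5 : q (x - y) ≤ 4 * B := by linarith [hq.sub_le x y, hS x hx, hS y hy]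
    have h6 : (n:ℝ)^2 * q w ≤ 8 * B := by
      have e1 := hq.sub_le (x - y) (x - y - (n:ℤ) • w)
      rw [sub_sub_cancel, hq.zsmul, h4] at e1
      push_cast at e1
      linarith
    have h7 : q w = 0 := by
      apply hμ
      have : (0:ℝ) < (n:ℝ)^2 := by positivity
      nlinarith
    have e2 := hq.add_le (x - y - (n:ℤ) • w) ((n:ℤ) • w)
    rw [sub_add_cancel, h4, hq.zsmul, h7] at e2
    exact le_antisymm (by linarith) (hq.1 _)
  have h1 := Finset.card_le_mul_card_image (f := f) S K (by
    intro β hβ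
    obtain ⟨y, hy, rfl⟩ := Finset.mem_image.1 hβ
    rw [← Finset.card_image_of_injective (f := fun x => x - y) _ (fun p p' h => by simpa using h)]
    apply hK
    intro P hP
    obtain ⟨x, hx, rfl⟩ := Finset.mem_image.1 hP
    rw [Finset.mem_filter] at hx
    exact key x hx.1 y hy hx.2)
  refine h1.trans (Nat.mul_le_mul_left _ ?_)
  calc _ ≤ (Finset.univ : Finset (Fin s → ZMod n)).card := Finset.card_le_card (Finset.subset_univ _)
    _ = n ^ s := by simp [ZMod.card]
    _ ≤ n ^ r := Nat.pow_le_pow_right hn0 hsr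

lemma fiber_sum {α β : Type*} (f : α → ℝ) (hf : ∀ x, 0 ≤ f x) (π : α → β) (g : β → ℝ) (hg : ∀ b, 0 ≤ g b)
    (hgs : Summable g) (h : ∀ b, ∀ S : Finset α, (∀ x ∈ S, π x = b) → ∑ x ∈ S, f x ≤ g b) : Summable f := by
  classical
  refine summable_of_sum_le (c := ∑' b, g b) hf fun S => ?_
  rw [← Finset.sum_fiberwise_of_maps_to (t := S.image π) (g := π) (fun x hx => Finset.mem_image_of_mem _ hx)]
  refine le_trans (Finset.sum_le_sum fun b _ => h b _ fun x hx => (Finset.mem_filter.1 hx).2) ?_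
  exact hgs.sum_le_tsum _ fun b _ => hg b

lemma hh_count (a b c : ℤ) (X : ℝ) : ∃ K : ℕ, ∀ D : ℤ, D ≠ 0 → ∀ S : Finset (twist a b c D).Point,
    (∀ P ∈ S, hh a b c D P ≤ X) → S.card ≤ K := by
  classical
  set N := ⌈Real.exp X⌉ with hN
  set box : Finset (ℤ × ℤ) := Finset.Icc (-N) N ×ˢ Finset.Icc (-N) N with hbox
  refine ⟨2 * box.card, fun D hD S hS => ?_⟩
  choose u v huv using exists_rep a b c D hD
  have h1 := Finset.card_le_mul_card_image (f := fun P => (u P, v P)) S 2 (by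
    intro β hβ
    obtain ⟨y, hy, rfl⟩ := Finset.mem_image.1 hβ
    refine le_trans (Finset.card_le_card (t := {y, -y}) ?_) Finset.card_le_two
    intro x hx
    rw [Finset.mem_filter] at hx
    obtain ⟨h1, h2⟩ := Prod.mk.injEq _ _ _ _ ▸ hx.2
    have h3 := huv x
    rw [h1, h2] at h3
    rw [Finset.mem_insert, Finset.mem_singleton]
    exact h3.pm hD (huv y))
  refine h1.trans (Nat.mul_le_mul_left _ (Finset.card_le_card ?_))
  intro p hp
  obtain ⟨P, hP, rfl⟩ := Finset.mem_image.1 hp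
  have h2 := hS P hP
  rw [(huv P).hh] at h2
  have h3 : max |(u P:ℝ)| |(v P:ℝ)| ≤ N := by
    refine le_trans ?_ (Int.le_ceil _)
    rcases le_or_gt (max |(u P:ℝ)| |(v P:ℝ)|) 0 with h0 | h0
    · exact h0.trans (Real.exp_pos _).le
    · rwa [Real.log_le_iff_le_exp h0] at h2
  have h4 := abs_le.1 ((le_max_left _ _).trans h3)
  have h5 := abs_le.1 ((le_max_right _ _).trans h3)
  rw [hbox, Finset.mem_product, Finset.mem_Icc, Finset.mem_Icc]
  exact ⟨⟨by exact_mod_cast h4.1, by exact_mod_cast h4.2⟩, ⟨by exact_mod_cast h5.1, by exact_mod_cast h5.2⟩⟩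

lemma PRep.two_tors {a b c D : ℤ} (hD : D ≠ 0) {P : (twist a b c D).Point} {u v : ℤ} (h : PRep a b c D P u v)
    (h0 : Fbin a b c u v = 0) : P + P = 0 := by
  obtain ⟨κ, hκ, h1⟩ := h.dup hD
  rw [h0] at h1
  have hN : (N4 a b c u v : ℚ) ≠ 0 := by
    intro h2
    apply xr_ne_zero a b c D hD (P + P)
    rw [h1, h2]
    ext i; fin_cases i <;> simp
  have r1 : PRep a b c D (P + P) 1 0 := by
    refine ⟨by simp, κ * N4 a b c u v, mul_ne_zero hκ hN, ?_⟩
    rw [h1]; ext i; fin_cases i <;> simp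
  have r2 : PRep a b c D 0 1 0 := by
    refine ⟨by simp, 1, one_ne_zero, ?_⟩
    ext i; fin_cases i <;> simp [xr]
  have := r1.pm hD r2
  simpa using this

end

section

open WeierstrassCurve Height

noncomputable def ell (D : ℤ) : ℝ := max 1 (Real.log |(D:ℝ)|)

lemma one_le_ell (D : ℤ) : 1 ≤ ell D := le_max_left _ _

lemma logD_le (a b c : ℤ) : ∃ L : ℝ, 0 ≤ L ∧ ∀ sq : ℤ → ℤ, IsSqfreePart sq → ∀ D : ℤ, D ≠ 0 → sq D = D →
    ∀ (P : (twist a b c D).Point) (u v : ℤ), PRep a b c D P u v → Fbin a b c u v ≠ 0 →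
      Real.log |(D:ℝ)| ≤ L + 4 * hh a b c D P := by
  obtain ⟨C, hC1, hC⟩ := Fbin_le a b c
  refine ⟨Real.log C, Real.log_nonneg hC1, fun sq hsq D hD hDs P u v hr hF => ?_⟩
  obtain ⟨m, hm⟩ := hr.F hD
  have h1 := sq_unique hsq hF hD hm
  obtain ⟨t, ht0, ht⟩ := sqpart_int hsq hF
  rw [h1, hDs] at ht
  have hup := hC u v _ (le_max_left _ _) (le_max_right _ _)
  rw [hr.hh]
  set H := max |(u:ℝ)| |(v:ℝ)| with hH
  have hDF : |(D:ℝ)| ≤ |(Fbin a b c u v : ℝ)| := by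
    rw [ht]; push_cast; rw [abs_mul]
    apply le_mul_of_one_le_right (abs_nonneg _)
    rw [abs_of_nonneg (by positivity)]
    exact one_le_pow₀ (by exact_mod_cast ht0)
  have hDpos : 0 < |(D:ℝ)| := abs_pos.2 (by exact_mod_cast hD)
  have hHpos : H ≠ 0 := by
    intro h0; rw [h0] at hup
    norm_num at hup
    exact hF hup
  calc Real.log |(D:ℝ)| ≤ Real.log (C * H^4) := Real.log_le_log hDpos (hDF.trans hup)
    _ = _ := by rw [Real.log_mul (by positivity) (by positivity), Real.log_pow]; norm_num

lemma q_facts (a b c : ℤ) (hf : DistinctRoots a b c) : ∃ (C μ : ℝ) (K : ℕ), 0 ≤ C ∧ 0 < μ ∧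
    ∀ sq : ℤ → ℤ, IsSqfreePart sq → ∀ D : ℤ, D ≠ 0 → sq D = D →
    ∃ q : (twist a b c D).Point → ℝ, IsQuad q ∧ (∀ P, |q P - hh a b c D P| ≤ C) ∧
      (∀ S : Finset _, (∀ P ∈ S, q P = 0) → S.card ≤ K) ∧ (∀ P, q P < μ * ell D → q P = 0) := by
  classical
  obtain ⟨C, hC, hq⟩ := exists_q a b c hf
  obtain ⟨K, hK⟩ := hh_count a b c (1 + C)
  obtain ⟨L, hL, hlog⟩ := logD_le a b c
  set A : ℝ := 8 * (L + 4 * C + 1) with hA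
  have hA8 : 8 ≤ A := by rw [hA]; nlinarith
  set μ0 : ℝ := 1 / ((K:ℝ)+1)^2 with hμ0
  have hμ0p : 0 < μ0 := by positivity
  refine ⟨C, min (1/8) (μ0 / A), K, hC, by positivity, fun sq hsq D hD hDs => ?_⟩
  obtain ⟨q, hQ, hqh⟩ := hq D hD
  have hcard : ∀ S : Finset _, (∀ P ∈ S, q P ≤ 1) → S.card ≤ K := by
    intro S hS
    refine hK D hD S fun P hP => ?_
    have := abs_le.1 (hqh P)
    linarith [hS P hP]
  refine ⟨q, hQ, hqh, fun S hS => hcard S fun P hP => by rw [hS P hP]; norm_num, fun P hP => ?_⟩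
  by_contra hne
  have hpos : 0 < q P := lt_of_le_of_ne (hQ.1 P) (Ne.symm hne)
  have hge : μ0 ≤ q P := by
    by_contra hlt
    push Not at hlt
    have h1 := hcard ((Finset.range (K+1)).image fun n => n • P) (by
      intro R hR
      obtain ⟨n, hn, rfl⟩ := Finset.mem_image.1 hR
      rw [hQ.nsmul]
      have hn' : (n:ℝ) ≤ (K:ℝ) + 1 := by
        have := Finset.mem_range.1 hn
        exact_mod_cast this.le
      calc (n:ℝ)^2 * q P ≤ ((K:ℝ)+1)^2 * μ0 := by gcongr
        _ = 1 := by rw [hμ0]; field_simp)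
    rw [Finset.card_image_of_injective, Finset.card_range] at h1
    · omega
    · intro n n' h
      have h2 := congrArg q h
      simp only [hQ.nsmul] at h2
      have h3 := mul_right_cancel₀ hne h2
      have h4 : n^2 = n'^2 := by exact_mod_cast h3
      exact Nat.pow_left_injective two_ne_zero h4
  obtain ⟨u, v, huv⟩ := exists_rep a b c D hD P
  have hF : Fbin a b c u v ≠ 0 := by
    intro h0
    have h1 := huv.two_tors hD h0
    have h2 := hQ.2 P P
    rw [h1, sub_self, hQ.zero] at h2
    linarith
  have h1 := hlog sq hsq D hD hDs P u v huv hF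
  have h2 := abs_le.1 (hqh P)
  have h3 := one_le_ell D
  rcases le_or_gt (Real.log |(D:ℝ)|) A with h4 | h4
  · have h5 : ell D ≤ A := max_le (by linarith) h4
    have : min (1/8) (μ0 / A) * ell D ≤ μ0 := by
      calc _ ≤ μ0 / A * A := by gcongr; exact min_le_right _ _
        _ = μ0 := by field_simp
    linarith
  · have h5 : ell D = Real.log |(D:ℝ)| := max_eq_right (by linarith)
    have : min (1/8) (μ0 / A) * ell D ≤ 1/8 * Real.log |(D:ℝ)| := by
      rw [h5]; gcongr
      · linarith
      · exact min_le_left _ _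
    rw [hA] at h4
    linarith

lemma S_count (a b c : ℤ) (hf : DistinctRoots a b c) (r : ℕ)
    (hr : ∀ D : ℤ, D ≠ 0 → ¬ ∃ P : Fin (r+1) → (twist a b c D).Point, LinearIndependent ℤ P) :
    ∃ K' : ℝ, 0 ≤ K' ∧ ∀ sq : ℤ → ℤ, IsSqfreePart sq → ∀ D : ℤ, ∀ X : ℝ, 1 ≤ X → ∀ S : Finset (ℤ × ℤ),
      (∀ p ∈ S, p ∈ Psi a b c ∧ sq (Fbin a b c p.1 p.2) = D ∧ ht p.1 p.2 ≤ X * ell D) →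
      (S.card : ℝ) ≤ K' * X ^ ((r:ℝ)/2) := by
  classical
  obtain ⟨C, μ, K, hC, hμ, hq⟩ := q_facts a b c hf
  set A : ℝ := Real.sqrt (8 * (1 + C) / μ) + 2 with hA
  have hA2 : 2 ≤ A := by rw [hA]; linarith [Real.sqrt_nonneg (8 * (1 + C) / μ)]
  refine ⟨2 * (K * A ^ r), by positivity, fun sq hsq D X hX S hS => ?_⟩
  rcases S.eq_empty_or_nonempty with rfl | ⟨p0, hp0⟩
  · simp; positivity
  have hD : D ≠ 0 := by
    obtain ⟨h1, h2, -⟩ := hS p0 hp0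
    rw [← h2]; exact (hsq _ h1.2).1.ne_zero
  have hDs : sq D = D := by
    obtain ⟨h1, h2, -⟩ := hS p0 hp0
    obtain ⟨h3, m, h4⟩ := hsq _ h1.2
    rw [h2] at h4
    rw [← sq_unique hsq h1.2 hD h4, h2]
  obtain ⟨q, hQ, hqh, hcard, hgap⟩ := hq sq hsq D hD hDs
  have hpt : ∀ p ∈ S, ∃ P, PRep a b c D P p.1 p.2 := by
    intro p hp
    obtain ⟨h1, h2, -⟩ := hS p hp
    obtain ⟨h3, m, h4⟩ := hsq _ h1.2
    rw [h2] at h4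
    exact pt_exists a b c D hD p.1 p.2 h1 m h4
  choose! P hP using hpt
  have h1 := Finset.card_le_mul_card_image (f := P) S 2 (by
    intro β hβ
    obtain ⟨y, hy, rfl⟩ := Finset.mem_image.1 hβ
    refine le_trans (Finset.card_le_card (t := {y, -y}) ?_) Finset.card_le_two
    intro x hx
    rw [Finset.mem_filter] at hx
    have h3 := hP x hx.1
    rw [hx.2] at h3
    rw [Finset.mem_insert, Finset.mem_singleton, Prod.ext_iff, Prod.ext_iff]
    exact (hP y hy).unique h3)
  have hell := one_le_ell D
  set n : ℕ := ⌊Real.sqrt (8 * (1 + C) / μ * X)⌋₊ + 1 with hn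
  have hnlt : Real.sqrt (8 * (1 + C) / μ * X) < n := by
    rw [hn]; push_cast; exact Nat.lt_floor_add_one _
  have hnle : (n:ℝ) ≤ A * Real.sqrt X := by
    have e1 : (n:ℝ) ≤ Real.sqrt (8 * (1 + C) / μ * X) + 1 := by
      rw [hn]; push_cast
      linarith [Nat.floor_le (Real.sqrt_nonneg (8 * (1 + C) / μ * X))]
    rw [Real.sqrt_mul (by positivity)] at e1
    have e2 : 1 ≤ Real.sqrt X := Real.one_le_sqrt.2 hX
    rw [hA]; nlinarith
  have h2 := quad_count hQ (μ * ell D) hgap K hcard r (hr D hD) ((1 + C) * (X * ell D)) (S.image P) (by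
      intro R hR
      obtain ⟨p, hp, rfl⟩ := Finset.mem_image.1 hR
      have h3 := (hS p hp).2.2
      rw [ht_eq (hP p hp)] at h3
      have h4 := (le_max_right _ _).trans h3
      have h5 := (abs_le.1 (hqh (P p))).2
      have h6 : 1 ≤ X * ell D := by nlinarith
      nlinarith) n (by omega) (by
      have h3 : 8 * (1 + C) / μ * X < (n:ℝ)^2 := by
        rwa [Real.sqrt_lt' (by positivity)] at hnlt
      rw [div_mul_eq_mul_div, div_lt_iff₀ hμ] at h3
      nlinarith)
  have h3 : (S.card : ℝ) ≤ 2 * (K * (n:ℝ)^r) := by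
    have : S.card ≤ 2 * (K * n^r) := h1.trans (Nat.mul_le_mul_left _ h2)
    exact_mod_cast this
  calc (S.card : ℝ) ≤ 2 * (K * (n:ℝ)^r) := h3
    _ ≤ 2 * (K * (A * Real.sqrt X)^r) := by gcongr
    _ = _ := by
      rw [mul_pow, Real.sqrt_eq_rpow, ← Real.rpow_natCast (X^(1/2:ℝ)), ← Real.rpow_mul (by linarith)]
      rw [show (1/2:ℝ) * (r:ℝ) = (r:ℝ)/2 by ring]; ring

lemma sum_ell (j : ℝ) (hj : 1 < j) : Summable fun D : ℤ => |(D:ℝ)|⁻¹ * ell D ^ (-j) := by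
  have key : Summable fun n : ℕ => (n:ℝ)⁻¹ * (max 1 (Real.log n)) ^ (-j) := by
    rw [← summable_condensed_iff_of_nonneg]
    · have h1 : Summable fun k : ℕ => (Real.log 2) ^ (-j) * (k:ℝ) ^ (-j) :=
        (Real.summable_nat_rpow.2 (by linarith)).mul_left _
      rw [← summable_nat_add_iff 1] at h1 ⊢
      refine Summable.of_nonneg_of_le (fun k => by positivity) (fun k => ?_) h1
      have hl : 0 < Real.log 2 := Real.log_pos (by norm_num)
      push_cast
      rw [← mul_assoc, mul_inv_cancel₀ (by positivity), one_mul, Real.log_pow, ← Real.mul_rpow hl.le (by positivity)]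
      apply Real.rpow_le_rpow_of_nonpos (by positivity) _ (by linarith)
      push_cast
      rw [mul_comm]
      exact le_max_right _ _
    · intro n; positivity
    · intro m n hm hmn
      have hm' : (0:ℝ) < m := by exact_mod_cast hm
      have hmn' : (m:ℝ) ≤ n := by exact_mod_cast hmn
      gcongr ?_ * ?_
      · gcongr
      · apply Real.rpow_le_rpow_of_nonpos (by positivity) _ (by linarith)
        exact max_le_max le_rfl (Real.log_le_log hm' hmn')
  refine Summable.of_nat_of_neg ?_ ?_
  · simpa [ell] using key
  · simpa [ell] using key

lemma rank_to_S (a b c : ℤ) (hf : DistinctRoots a b c) (sq : ℤ → ℤ) (hsq : IsSqfreePart sq) (j : ℝ)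
    (hj : 1 < j) (hR : RankBound a b c j) (k : ℝ) (hk : 1 ≤ k) : SConv a b c sq j k Set.univ := by
  classical
  obtain ⟨r, hr⟩ : ∃ r, ⌈2*j⌉₊ = r + 1 := Nat.exists_eq_succ_of_ne_zero (by
    have : 0 < ⌈2*j⌉₊ := Nat.ceil_pos.2 (by linarith)
    omega)
  have hrj : (r:ℝ) < 2 * j := by
    have := Nat.ceil_lt_add_one (a := 2*j) (by linarith)
    rw [hr] at this; push_cast at this; linarith
  obtain ⟨K', hK'0, hcount⟩ := S_count a b c hf r (by
    intro D hD; have := hR D hD; rw [hr] at this; exact this)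
  obtain ⟨L, hL, hlog⟩ := logD_le a b c
  set K0 : ℝ := L + 4 with hK0
  have hlow : ∀ p ∈ Psi a b c, ell (sq (Fbin a b c p.1 p.2)) ≤ K0 * ht p.1 p.2 := by
    intro p hp
    obtain ⟨h3, m, h4⟩ := hsq _ hp.2
    have hD : sq (Fbin a b c p.1 p.2) ≠ 0 := h3.ne_zero
    have hDs := (sq_unique hsq hp.2 hD h4).symm
    obtain ⟨P, hP⟩ := pt_exists a b c _ hD p.1 p.2 hp m h4
    have h5 := hlog sq hsq _ hD hDs P _ _ hP hp.2
    rw [ht_eq hP]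
    have h6 := le_max_left 1 (hh a b c (sq (Fbin a b c p.1 p.2)) P)
    have h7 := le_max_right 1 (hh a b c (sq (Fbin a b c p.1 p.2)) P)
    apply max_le <;> rw [hK0] <;> nlinarith
  have hlev : ∀ p : SIdx a b c Set.univ, ∃ m : ℕ,
      (2:ℝ)^m * ell (sq (Fbin a b c p.1.1 p.1.2)) ≤ K0 * ht p.1.1 p.1.2 ∧
      ht p.1.1 p.1.2 ≤ (2:ℝ)^(m+1) * ell (sq (Fbin a b c p.1.1 p.1.2)) := by
    intro p
    have h1 := hlow p.1 p.2.1
    have h2 := one_le_ell (sq (Fbin a b c p.1.1 p.1.2))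
    obtain ⟨m, hm1, hm2⟩ := exists_nat_pow_near (x := K0 * ht p.1.1 p.1.2 / ell (sq (Fbin a b c p.1.1 p.1.2)))
      (y := 2) (by rw [one_le_div (by linarith)]; exact h1) (by norm_num)
    rw [le_div_iff₀ (by linarith)] at hm1
    rw [div_lt_iff₀ (by linarith)] at hm2
    refine ⟨m, hm1, le_trans ?_ hm2.le⟩
    have := ht_one_le p.1.1 p.1.2
    rw [hK0]; nlinarith
  choose lev hlev1 hlev2 using hlev
  set ρ : ℝ := (2:ℝ) ^ ((r:ℝ)/2 - j) with hρ
  have hρ1 : ρ < 1 := Real.rpow_lt_one_of_one_lt_of_neg (by norm_num) (by linarith)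
  have hρ0 : 0 < ρ := by positivity
  set W : ℝ := K0 ^ j * K' * 2 ^ ((r:ℝ)/2) with hW
  have hgs : Summable fun x : ℤ × ℕ => (|(x.1:ℝ)|⁻¹ * ell x.1 ^ (-j)) * (W * ρ ^ x.2) :=
    (sum_ell j hj).mul_of_nonneg ((summable_geometric_of_lt_one hρ0.le hρ1).mul_left W)
      (fun D => by have := one_le_ell D; simp only [Pi.zero_apply]; positivity) (fun m => by simp only [Pi.zero_apply]; positivity)
  refine fiber_sum _ (fun p => ?_) (fun p => (sq (Fbin a b c p.1.1 p.1.2), lev p)) _ (fun x => ?_) hgs ?_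
  · have := ht_one_le p.1.1 p.1.2
    simp only [STerm]; positivity
  · have := one_le_ell x.1
    positivity
  · rintro ⟨D, m⟩ S hS
    simp only [Prod.mk.injEq] at hS
    have hell := one_le_ell D
    have h1 := hcount sq hsq D ((2:ℝ)^(m+1)) (one_le_pow₀ (by norm_num)) (S.image Subtype.val) (by
      intro p hp
      obtain ⟨x, hx, rfl⟩ := Finset.mem_image.1 hp
      obtain ⟨h2, h3⟩ := hS x hx
      refine ⟨x.2.1, h2, ?_⟩
      have := hlev2 x
      rwa [h2, h3] at this)
    rw [Finset.card_image_of_injective _ Subtype.val_injective] at h1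
    have hterm : ∀ x ∈ S, STerm a b c sq j k x.1 ≤ |(D:ℝ)|⁻¹ * ((2:ℝ)^m * ell D / K0) ^ (-j) := by
      intro x hx
      obtain ⟨h2, h3⟩ := hS x hx
      have h4 := hlev1 x
      rw [h2, h3] at h4
      have hD1 : (1:ℝ) ≤ |(D:ℝ)| := by
        have : D ≠ 0 := by rw [← h2]; exact (hsq _ x.2.1.2).1.ne_zero
        exact_mod_cast Int.one_le_abs this
      simp only [STerm]
      rw [h2]
      gcongr ?_ * ?_
      · have := ht_one_le x.1.1 x.1.2
        positivity
      · rw [← Real.rpow_neg_one]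
        exact Real.rpow_le_rpow_of_exponent_le hD1 (by linarith)
      · apply Real.rpow_le_rpow_of_nonpos (by positivity) _ (by linarith)
        rw [div_le_iff₀ (by positivity)]; linarith
    refine (Finset.sum_le_card_nsmul _ _ _ hterm).trans ?_
    rw [nsmul_eq_mul]
    calc _ ≤ (K' * ((2:ℝ)^(m+1)) ^ ((r:ℝ)/2)) * (|(D:ℝ)|⁻¹ * ((2:ℝ)^m * ell D / K0) ^ (-j)) := by gcongr
      _ = _ := by
        have hK0p : 0 < K0 := by positivity
        rw [Real.div_rpow (by positivity) hK0p.le, Real.mul_rpow (by positivity) (by positivity), hW, hρ,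
          pow_succ, Real.mul_rpow (by positivity) (by positivity), ← Real.rpow_natCast 2 m,
          ← Real.rpow_natCast _ m, ← Real.rpow_mul (by norm_num), ← Real.rpow_mul (by norm_num),
          ← Real.rpow_mul (by norm_num), Real.rpow_neg hK0p.le,
          show ((r:ℝ)/2 - j) * (m:ℝ) = (m:ℝ) * ((r:ℝ)/2) + (m:ℝ) * (-j) by ring, Real.rpow_add (by norm_num)]
        field_simp

end

section
open WeierstrassCurve Height
open Filter Topology Polynomial

/-- eventually a rational function of `N` -/
def RatLike (r : ℕ → ℚ) : Prop :=
  ∃ p q : ℚ[X], q ≠ 0 ∧ ∀ᶠ N : ℕ in atTop, r N = p.eval (N:ℚ) / q.eval (N:ℚ)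

/-- height grows like `e log N` -/
def HD (r : ℕ → ℚ) (e : ℕ) : Prop :=
  ∃ C : ℝ, ∀ᶠ N : ℕ in atTop, |logHeight₁ (r N) - e * Real.log N| ≤ C

lemma poly_zero_of_ev (p : ℚ[X]) (h : ∃ᶠ N : ℕ in atTop, p.eval (N:ℚ) = 0) : p = 0 := by
  apply Polynomial.eq_zero_of_infinite_isRoot
  rw [Nat.frequently_atTop_iff_infinite] at h
  refine (h.image (f := fun N : ℕ => (N:ℚ)) Nat.cast_injective.injOn).mono ?_
  rintro _ ⟨N, hN, rfl⟩
  exact hN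

lemma poly_ne_ev (p : ℚ[X]) (hp : p ≠ 0) : ∀ᶠ N : ℕ in atTop, p.eval (N:ℚ) ≠ 0 := by
  by_contra h
  exact hp (poly_zero_of_ev p ((Filter.not_eventually.1 h).mono fun N hN => not_not.1 hN))

lemma RatLike.poly (p : ℚ[X]) : RatLike (fun N => p.eval (N:ℚ)) :=
  ⟨p, 1, one_ne_zero, by simp⟩

lemma RatLike.const (x : ℚ) : RatLike (fun _ => x) := by
  simpa using RatLike.poly (C x)

lemma RatLike.id : RatLike (fun N => (N:ℚ)) := by
  simpa using RatLike.poly X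

lemma RatLike.add {r s : ℕ → ℚ} (hr : RatLike r) (hs : RatLike s) : RatLike (fun N => r N + s N) := by
  obtain ⟨p, q, hq, h⟩ := hr
  obtain ⟨p', q', hq', h'⟩ := hs
  refine ⟨p * q' + p' * q, q * q', mul_ne_zero hq hq', ?_⟩
  filter_upwards [h, h', poly_ne_ev q hq, poly_ne_ev q' hq'] with N a b c d
  rw [a, b]; simp; field_simp

lemma RatLike.mul {r s : ℕ → ℚ} (hr : RatLike r) (hs : RatLike s) : RatLike (fun N => r N * s N) := by
  obtain ⟨p, q, hq, h⟩ := hr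
  obtain ⟨p', q', hq', h'⟩ := hs
  refine ⟨p * p', q * q', mul_ne_zero hq hq', ?_⟩
  filter_upwards [h, h', poly_ne_ev q hq, poly_ne_ev q' hq'] with N a b c d
  rw [a, b]; simp; field_simp

lemma RatLike.inv {r : ℕ → ℚ} (hr : RatLike r) : RatLike (fun N => (r N)⁻¹) := by
  obtain ⟨p, q, hq, h⟩ := hr
  by_cases hp : p = 0
  · refine ⟨0, 1, one_ne_zero, ?_⟩
    filter_upwards [h] with N a
    rw [a, hp]; simp
  · refine ⟨q, p, hp, ?_⟩
    filter_upwards [h] with N a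
    rw [a, inv_div]

lemma RatLike.sub {r s : ℕ → ℚ} (hr : RatLike r) (hs : RatLike s) : RatLike (fun N => r N - s N) := by
  have := hr.add ((RatLike.const (-1)).mul hs)
  simpa [sub_eq_add_neg] using this

lemma RatLike.div {r s : ℕ → ℚ} (hr : RatLike r) (hs : RatLike s) : RatLike (fun N => r N / s N) := by
  simpa [div_eq_mul_inv] using hr.mul hs.inv

lemma RatLike.pow {r : ℕ → ℚ} (hr : RatLike r) (n : ℕ) : RatLike (fun N => r N ^ n) := by
  induction n with
  | zero => simpa using RatLike.const 1
  | succ n ih => simpa [pow_succ] using ih.mul hr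

lemma coeff_tendsto (P : ℝ[X]) (e : ℕ) (he : P.natDegree ≤ e) :
    Tendsto (fun N : ℕ => P.eval (N:ℝ) / (N:ℝ)^e) atTop (𝓝 (P.coeff e)) := by
  have key : Tendsto (fun x : ℝ => P.eval x / (X^e : ℝ[X]).eval x) atTop (𝓝 (P.coeff e)) := by
    rcases eq_or_lt_of_le (natDegree_le_iff_degree_le.1 he) with h | h
    · have := Polynomial.div_tendsto_atTop_leadingCoeff_div_of_degree_eq P (X^e) (by rw [h, degree_X_pow])
      simpa [leadingCoeff, natDegree_eq_of_degree_eq_some h] using this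
    · rw [coeff_eq_zero_of_degree_lt h]
      exact Polynomial.div_tendsto_atTop_zero_of_degree_lt P (X^e) (by rwa [degree_X_pow])
  have := key.comp (tendsto_natCast_atTop_atTop (R := ℝ))
  simpa [Function.comp_def] using this

lemma HD_int (P Q α β : ℤ[X]) (r : ℤ) (hr : r ≠ 0) (h : α * P + β * Q = C r) :
    HD (fun N => ((P.eval (N:ℤ) : ℤ) : ℚ) / ((Q.eval (N:ℤ) : ℤ) : ℚ)) (max P.natDegree Q.natDegree) := by
  set e := max P.natDegree Q.natDegree with he
  have t1 := coeff_tendsto (P.map (Int.castRingHom ℝ)) e (natDegree_map_le.trans (le_max_left _ _))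
  have t2 := coeff_tendsto (Q.map (Int.castRingHom ℝ)) e (natDegree_map_le.trans (le_max_right _ _))
  set M : ℝ := max |(P.coeff e : ℝ)| |(Q.coeff e : ℝ)| with hM
  have hM0 : 0 < M := by
    have hP0 : P ≠ 0 ∨ Q ≠ 0 := by
      by_contra! hc
      rw [hc.1, hc.2] at h
      simp at h
      exact hr (C_eq_zero.1 h.symm)
    rw [hM, lt_max_iff]
    by_cases hle : P.natDegree ≤ Q.natDegree
    · by_cases hQ : Q = 0
      · left
        have hP := hP0.resolve_right (by simpa using hQ)
        have : e = P.natDegree := by rw [he]; rw [hQ] at hle ⊢; simp at hle ⊢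
        rw [this, abs_pos]
        exact_mod_cast leadingCoeff_ne_zero.2 hP
      · right
        rw [he, max_eq_right hle, abs_pos]
        exact_mod_cast leadingCoeff_ne_zero.2 hQ
    · left
      have hP : P ≠ 0 := by rintro rfl; simp at hle
      rw [he, max_eq_left (by omega), abs_pos]
      exact_mod_cast leadingCoeff_ne_zero.2 hP
  have t3 : Tendsto (fun N : ℕ => max |((P.eval (N:ℤ) : ℤ) : ℝ)| |((Q.eval (N:ℤ) : ℤ) : ℝ)| / (N:ℝ)^e) atTop (𝓝 M) := by
    have := t1.abs.max t2.abs
    simp only [coeff_map, eq_intCast] at this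
    refine this.congr ?_
    intro N
    have hc : ∀ R : ℤ[X], (R.map (Int.castRingHom ℝ)).eval (N:ℝ) = ((R.eval (N:ℤ) : ℤ) : ℝ) := by
      intro R
      have := Polynomial.eval_intCast_map (Int.castRingHom ℝ) R (N:ℤ)
      simpa using this
    rw [hc, hc, abs_div, abs_div, abs_of_nonneg (by positivity : (0:ℝ) ≤ (N:ℝ)^e),
      max_div_div_right (by positivity)]
  have t4 := (Real.continuousAt_log hM0.ne').tendsto.comp t3
  have hb := t4.eventually (Metric.ball_mem_nhds _ one_pos)
  refine ⟨|Real.log M| + 1 + Real.log |(r:ℝ)|, ?_⟩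
  filter_upwards [hb, eventually_gt_atTop 0] with N hN hN0
  simp only [Function.comp, Metric.mem_ball, Real.dist_eq] at hN
  set p := P.eval (N:ℤ) with hp
  set q := Q.eval (N:ℤ) with hq
  have hbez : α.eval (N:ℤ) * p + β.eval (N:ℤ) * q = r := by
    have := congrArg (Polynomial.eval (N:ℤ)) h
    simpa using this
  have hgr : ((Int.gcd p q : ℕ) : ℤ) ∣ r := by
    rw [← hbez]
    exact dvd_add (Dvd.dvd.mul_left (Int.gcd_dvd_left ..) _) (Dvd.dvd.mul_left (Int.gcd_dvd_right ..) _)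
  have hg0 : 0 < Int.gcd p q := by
    rcases Nat.eq_zero_or_pos (Int.gcd p q) with h0 | h0
    · rw [h0] at hgr; simp at hgr; exact absurd hgr hr
    · exact h0
  obtain ⟨g, p', q', hg, hcop, hp', hq'⟩ := Int.exists_gcd_one' hg0
  have hgr' : (g:ℤ) ∣ r := by
    rw [← hbez, hp', hq']
    exact ⟨α.eval (N:ℤ) * p' + β.eval (N:ℤ) * q', by ring⟩
  have hgle : (g:ℝ) ≤ |(r:ℝ)| := by
    have := Int.le_of_dvd (abs_pos.2 hr) ((dvd_abs _ _).2 hgr')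
    exact_mod_cast this
  have hgR : (1:ℝ) ≤ g := by exact_mod_cast hg
  have hH : logHeight₁ ((p:ℚ)/(q:ℚ)) = Real.log (max |(p':ℝ)| |(q':ℝ)|) := by
    rw [logHeight₁_div_eq_logHeight, ← logHeight_coprime p' q' hcop]
    have : (![(p:ℚ), (q:ℚ)] : Fin 2 → ℚ) = (g:ℚ) • ![(p':ℚ), (q':ℚ)] := by
      rw [hp', hq']; ext i; fin_cases i <;> simp [mul_comm]
    rw [this, logHeight_smul_eq_logHeight _ (by exact_mod_cast hg.ne')]
  have hmax0 : 0 < max |(p':ℝ)| |(q':ℝ)| := by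
    rw [lt_max_iff, abs_pos, abs_pos]
    by_contra! hc
    have h1 : p' = 0 := by exact_mod_cast hc.1
    have h2 : q' = 0 := by exact_mod_cast hc.2
    rw [h1, h2] at hcop; simp at hcop
  have hmm : max |(p:ℝ)| |(q:ℝ)| = g * max |(p':ℝ)| |(q':ℝ)| := by
    rw [hp', hq', mul_max_of_nonneg _ _ (by positivity)]
    push_cast
    rw [abs_mul, abs_mul, Nat.abs_cast, mul_comm, mul_comm |(q':ℝ)|]
  rw [hmm, Real.log_div (by positivity) (by positivity), Real.log_mul (by positivity) (by positivity),
    Real.log_pow] at hN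
  rw [hH]
  have l1 := Real.log_nonneg hgR
  have l2 := Real.log_le_log (by linarith) hgle
  rw [abs_lt] at hN
  rw [abs_le]
  have l3 := neg_abs_le (Real.log M)
  have l4 := le_abs_self (Real.log M)
  constructor <;> linarith [hN.1, hN.2]

lemma clear_den (p : ℚ[X]) : ∃ b : ℤ, b ≠ 0 ∧ ∃ P : ℤ[X], P.map (Int.castRingHom ℚ) = C (b:ℚ) * p := by
  obtain ⟨b, hb0, hb⟩ := IsLocalization.integerNormalization_spec (nonZeroDivisors ℤ) p
  refine ⟨b, nonZeroDivisors.ne_zero hb0, IsLocalization.integerNormalization (nonZeroDivisors ℤ) p, ?_⟩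
  have := hb
  rw [show algebraMap ℤ ℚ = Int.castRingHom ℚ from rfl] at this
  rw [this]
  ext n; simp

lemma clear_two (p q : ℚ[X]) : ∃ b : ℤ, b ≠ 0 ∧ ∃ P Q : ℤ[X],
    P.map (Int.castRingHom ℚ) = C (b:ℚ) * p ∧ Q.map (Int.castRingHom ℚ) = C (b:ℚ) * q := by
  obtain ⟨b, hb, P, hP⟩ := clear_den p
  obtain ⟨b', hb', Q, hQ⟩ := clear_den q
  refine ⟨b * b', mul_ne_zero hb hb', C b' * P, C b * Q, ?_, ?_⟩
  · simp [hP]; ring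
  · simp [hQ]; ring

lemma HD_coprime (p q : ℚ[X]) (h : IsCoprime p q) :
    HD (fun N => p.eval (N:ℚ) / q.eval (N:ℚ)) (max p.natDegree q.natDegree) := by
  obtain ⟨s, t, hst⟩ := h
  obtain ⟨b, hb, P, Q, hP, hQ⟩ := clear_two p q
  obtain ⟨b', hb', S, T, hS, hT⟩ := clear_two s t
  have hbQ : (b:ℚ) ≠ 0 := by exact_mod_cast hb
  have hinj : Function.Injective (Polynomial.map (Int.castRingHom ℚ)) :=
    Polynomial.map_injective _ Int.cast_injective
  have key : S * P + T * Q = C (b * b') := by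
    apply hinj
    have hc : (C ((Int.castRingHom ℚ) (b * b')) : ℚ[X]) = C (b:ℚ) * C (b':ℚ) := by
      rw [← C_mul, map_mul]; rfl
    rw [map_C, hc, Polynomial.map_add, Polynomial.map_mul, Polynomial.map_mul, hP, hQ, hS, hT]
    linear_combination (C (b:ℚ) * C (b':ℚ)) * hst
  have := HD_int P Q S T _ (mul_ne_zero hb hb') key
  have hd : ∀ (R : ℤ[X]) (r : ℚ[X]), R.map (Int.castRingHom ℚ) = C (b:ℚ) * r → R.natDegree = r.natDegree := by
    intro R r hR
    rw [← natDegree_map_eq_of_injective (f := Int.castRingHom ℚ) Int.cast_injective R, hR,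
      natDegree_C_mul hbQ]
  have hev : ∀ (R : ℤ[X]) (r : ℚ[X]), R.map (Int.castRingHom ℚ) = C (b:ℚ) * r → ∀ N : ℕ,
      ((R.eval (N:ℤ) : ℤ) : ℚ) = b * r.eval (N:ℚ) := by
    intro R r hR N
    have h1 := Polynomial.eval_intCast_map (Int.castRingHom ℚ) R (N:ℤ)
    rw [hR] at h1
    simpa using h1.symm
  rw [hd P p hP, hd Q q hQ] at this
  convert this using 2 with N
  rw [hev P p hP, hev Q q hQ, mul_div_mul_left _ _ hbQ]

lemma HD.congr {r s : ℕ → ℚ} {e : ℕ} (h : HD r e) (hrs : ∀ᶠ N in atTop, r N = s N) : HD s e := by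
  obtain ⟨C, hC⟩ := h
  exact ⟨C, by filter_upwards [hC, hrs] with N h1 h2; rwa [← h2]⟩

lemma HD.add_const {r : ℕ → ℚ} {e : ℕ} (h : HD r e) (x : ℚ) : HD (fun N => r N + x) e := by
  obtain ⟨C, hC⟩ := h
  refine ⟨C + |(totalWeight ℚ * Real.log 2 + logHeight₁ x)|, ?_⟩
  filter_upwards [hC] with N h1
  have h2 := logHeight₁_add_le (r N) x
  have h3 := logHeight₁_add_le (r N + x) (-x)
  rw [add_neg_cancel_right, logHeight₁_neg] at h3
  have h4 := le_abs_self (totalWeight ℚ * Real.log 2 + logHeight₁ x)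
  rw [abs_le] at h1 ⊢
  constructor <;> linarith [h1.1, h1.2]

lemma RatLike.HD {r : ℕ → ℚ} (h : RatLike r) :
    ∃ e, HD r e ∧ (e = 0 → ∃ x : ℚ, ∀ᶠ N in atTop, r N = x) := by
  obtain ⟨p, q, hq, h⟩ := h
  set g := EuclideanDomain.gcd p q with hg
  have hg0 : g ≠ 0 := by
    intro h0; exact hq (EuclideanDomain.gcd_eq_zero_iff.1 h0).2
  obtain ⟨p', hp'⟩ := EuclideanDomain.gcd_dvd_left p q
  obtain ⟨q', hq'⟩ := EuclideanDomain.gcd_dvd_right p q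
  rw [← hg] at hp' hq'
  have hcop : IsCoprime p' q' := by
    have := EuclideanDomain.gcd_eq_gcd_ab p q
    rw [← hg] at this
    refine ⟨EuclideanDomain.gcdA p q, EuclideanDomain.gcdB p q, ?_⟩
    apply mul_left_cancel₀ hg0
    linear_combination (-1 : ℚ[X]) * this - EuclideanDomain.gcdA p q * hp' - EuclideanDomain.gcdB p q * hq'
  have hev : ∀ᶠ N : ℕ in atTop, p'.eval (N:ℚ) / q'.eval (N:ℚ) = r N := by
    filter_upwards [h, poly_ne_ev g hg0] with N h1 h2
    rw [h1, hp', hq', eval_mul, eval_mul, mul_div_mul_left _ _ h2]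
  refine ⟨_, (HD_coprime p' q' hcop).congr hev, fun h0 => ?_⟩
  have h1 : p'.natDegree = 0 := by have := le_max_left p'.natDegree q'.natDegree; omega
  have h2 : q'.natDegree = 0 := by have := le_max_right p'.natDegree q'.natDegree; omega
  refine ⟨p'.coeff 0 / q'.coeff 0, ?_⟩
  filter_upwards [hev] with N h3
  rw [← h3, eq_C_of_natDegree_eq_zero h1, eq_C_of_natDegree_eq_zero h2]
  simp

end

section
open WeierstrassCurve Height
open Filter Topology Polynomial

/-- the rational cubic -/
def fq (a b c : ℤ) (x : ℚ) : ℚ := x^3 + a*x^2 + b*x + c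

def X3 (a b c : ℤ) (x y ψ : ℚ) : ℚ := fq a b c x * (ψ - 1)^2 / (y - x)^2 - a - x - y

lemma two_points (a b c : ℤ) (x y ψ : ℚ) (h0 : fq a b c x ≠ 0) (hψ0 : ψ ≠ 0) (hψ : ψ^2 * fq a b c x = fq a b c y)
    (hxy : x ≠ y) : ∃ D : ℤ, D ≠ 0 ∧ ∃ P Q : (twist a b c D).Point,
      hh a b c D P = logHeight₁ x ∧ hh a b c D Q = logHeight₁ y ∧
      hh a b c D (P + Q) = logHeight₁ (X3 a b c x y ψ) ∧
      hh a b c D (P - Q) = logHeight₁ (X3 a b c x y (-ψ)) := by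
  set r := fq a b c x with hr
  set d : ℚ := (r.den : ℚ) with hd
  have hd0 : d ≠ 0 := by rw [hd]; exact_mod_cast r.den_nz
  set D : ℤ := r.num * r.den with hDdef
  have hDr : (D:ℚ) = r * d^2 := by
    rw [hDdef]; push_cast
    have := Rat.mul_den_eq_num r
    rw [← this, ← hd]; ring
  have hDQ : (D:ℚ) ≠ 0 := by rw [hDr]; positivity
  have hD : D ≠ 0 := by exact_mod_cast hDQ
  have hns : ∀ (X Y : ℚ), Y ≠ 0 → D * Y^2 = fq a b c X → (twist a b c D).Nonsingular (D*X) (D^2*Y) := by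
    intro X Y hY h
    rw [Affine.nonsingular_iff, Affine.equation_iff]
    refine ⟨?_, Or.inr ?_⟩
    · simp [twist]
      simp only [fq] at h
      linear_combination (D:ℚ)^3 * h
    · simp [twist]
      intro h
      have : (D:ℚ)^2*Y ≠ 0 := by positivity
      apply this; linarith
  have hxr : ∀ (X Y : ℚ) (h : (twist a b c D).Nonsingular (D*X) Y), hh a b c D (.some _ _ h) = logHeight₁ X := by
    intro X Y h
    rw [logHeight₁_eq_logHeight, ← logHeight_smul_eq_logHeight ![X, 1] hDQ]
    simp only [hh]
    congr 1
    ext i; fin_cases i <;> simp [xr]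
  have hn1 := hns x (1/d) (by positivity) (by rw [hDr, ← hr]; field_simp)
  have hn2 : ∀ ψ : ℚ, ψ ≠ 0 → ψ^2 * r = fq a b c y → (twist a b c D).Nonsingular (D*y) (D^2*(ψ/d)) := by
    intro ψ hψ0 hψ
    exact hns y (ψ/d) (by positivity) (by rw [hDr, ← hψ]; field_simp)
  have hne : (D:ℚ) * x ≠ D * y := fun h => hxy (mul_left_cancel₀ hDQ h)
  have hsum : ∀ (ψ : ℚ) (h : (twist a b c D).Nonsingular (D*y) (D^2*(ψ/d))),
      hh a b c D (.some _ _ hn1 + .some _ _ h) = logHeight₁ (X3 a b c x y ψ) := by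
    intro ψ h
    rw [Affine.Point.add_of_X_ne hne]
    have hX : (twist a b c D).addX (D*x) (D*y) ((twist a b c D).slope (D*x) (D*y) (D^2*(1/d)) (D^2*(ψ/d)))
        = D * X3 a b c x y ψ := by
      rw [Affine.slope_of_X_ne hne]
      have h1 : x - y ≠ 0 := sub_ne_zero.2 hxy
      have h2 : y - x ≠ 0 := sub_ne_zero.2 hxy.symm
      simp only [Affine.addX, twist, X3, ← hr]
      have h3 : ((D:ℚ)^2*(1/d) - D^2*(ψ/d)) / (D*x - D*y) = D * (ψ - 1) / (d * (y - x)) := by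
        rw [← mul_sub]; field_simp; ring
      rw [h3]
      have h4 : ((D:ℚ) * (ψ - 1) / (d * (y - x)))^2 = D * (r * (ψ-1)^2/(y-x)^2) := by
        rw [div_pow, mul_pow, mul_pow]
        nth_rewrite 1 [pow_two]
        nth_rewrite 2 [hDr]
        field_simp
      rw [h4]; ring
    have hxr' : ∀ (X Z Y : ℚ) (h : (twist a b c D).Nonsingular Z Y), Z = D * X →
        hh a b c D (.some _ _ h) = logHeight₁ X := by
      rintro X Z Y h rfl
      exact hxr X Y h
    exact hxr' _ _ _ _ hX
  refine ⟨D, hD, .some _ _ hn1, .some _ _ (hn2 ψ hψ0 hψ), hxr _ _ _, hxr _ _ _, hsum _ _, ?_⟩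
  rw [sub_eq_add_neg, Affine.Point.neg_some]
  have hneg : (twist a b c D).negY (D*y) (D^2*(ψ/d)) = D^2*((-ψ)/d) := by rw [tw_negY]; ring
  simp only [hneg]
  exact hsum (-ψ) _

lemma lim_of_bdd (s : ℕ → ℝ) (e C : ℝ) (h : ∀ᶠ N : ℕ in atTop, |s N - e * Real.log N| ≤ C) :
    Tendsto (fun N : ℕ => s N / Real.log N) atTop (𝓝 e) := by
  have hl : Tendsto (fun N : ℕ => Real.log (N:ℝ)) atTop atTop :=
    Real.tendsto_log_atTop.comp tendsto_natCast_atTop_atTop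
  have h0 : Tendsto (fun N : ℕ => C / Real.log (N:ℝ)) atTop (𝓝 0) := hl.const_div_atTop C
  rw [tendsto_iff_norm_sub_tendsto_zero]
  refine squeeze_zero' (Eventually.of_forall fun _ => norm_nonneg _) ?_ h0
  filter_upwards [h, hl.eventually_gt_atTop 0] with N h1 h2
  rw [Real.norm_eq_abs, show s N / Real.log N - e = (s N - e * Real.log N) / Real.log N by field_simp,
    abs_div, abs_of_pos h2]
  gcongr

lemma core (a b c : ℤ) (hf : DistinctRoots a b c)
    (hdep : ∀ D : ℤ, D ≠ 0 → ∀ P Q : (twist a b c D).Point, ∃ m n : ℤ, m • P + n • Q = 0 ∧ (m ≠ 0 ∨ n ≠ 0))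
    (x y ψ : ℕ → ℚ) (hx : RatLike x) (hy : RatLike y) (hψ : RatLike ψ)
    (h : ∀ᶠ N in atTop, fq a b c (x N) ≠ 0 ∧ ψ N ≠ 0 ∧ ψ N^2 * fq a b c (x N) = fq a b c (y N) ∧ x N ≠ y N)
    (d1 d2 : ℕ) (h1 : HD x d1) (h2 : HD y d2) :
    ∃ e e' : ℕ, ((e:ℤ) - d1 - d2)^2 = 4 * d1 * d2 ∧ e + e' = 2 * d1 + 2 * d2 ∧
      (e = 0 → ∃ κ : ℚ, ∀ᶠ N in atTop, X3 a b c (x N) (y N) (ψ N) = κ) ∧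
      (e' = 0 → ∃ κ : ℚ, ∀ᶠ N in atTop, X3 a b c (x N) (y N) (-ψ N) = κ) := by
  have hX3 : ∀ φ : ℕ → ℚ, RatLike φ → RatLike (fun N => X3 a b c (x N) (y N) (φ N)) := by
    intro φ hφ
    have hfx : RatLike (fun N => fq a b c (x N)) :=
      (((hx.pow 3).add ((RatLike.const a).mul (hx.pow 2))).add ((RatLike.const b).mul hx)).add (RatLike.const c)
    exact ((((hfx.mul ((hφ.sub (RatLike.const 1)).pow 2)).div ((hy.sub hx).pow 2)).sub (RatLike.const a)).sub hx).sub hy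
  obtain ⟨e, he, he0⟩ := (hX3 ψ hψ).HD
  have hψ' : RatLike (fun N => -ψ N) := by simpa using (RatLike.const (-1)).mul hψ
  obtain ⟨e', he', he0'⟩ := (hX3 _ hψ').HD
  refine ⟨e, e', ?_, ?_, he0, he0'⟩
  all_goals
    obtain ⟨C, hC, hq⟩ := exists_q a b c hf
    have hN : ∀ N, ∃ α β γ δ : ℝ, (fq a b c (x N) ≠ 0 ∧ ψ N ≠ 0 ∧ ψ N^2 * fq a b c (x N) = fq a b c (y N) ∧ x N ≠ y N) →
        |α - logHeight₁ (x N)| ≤ C ∧ |β - logHeight₁ (y N)| ≤ C ∧ |γ - logHeight₁ (X3 a b c (x N) (y N) (ψ N))| ≤ C ∧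
        |δ - logHeight₁ (X3 a b c (x N) (y N) (-ψ N))| ≤ C ∧ γ + δ = 2 * α + 2 * β ∧ (γ - α - β)^2 = 4 * α * β := by
      intro N
      by_cases hg : (fq a b c (x N) ≠ 0 ∧ ψ N ≠ 0 ∧ ψ N^2 * fq a b c (x N) = fq a b c (y N) ∧ x N ≠ y N)
      · obtain ⟨D, hD, P, Q, k1, k2, k3, k4⟩ := two_points a b c _ _ _ hg.1 hg.2.1 hg.2.2.1 hg.2.2.2
        obtain ⟨q, hq1, hq2⟩ := hq D hD
        obtain ⟨m, n, hmn, hne⟩ := hdep D hD P Q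
        refine ⟨q P, q Q, q (P+Q), q (P-Q), fun _ => ⟨?_, ?_, ?_, ?_, hq1.2 P Q, hq1.dep hmn hne⟩⟩
        · rw [← k1]; exact hq2 _
        · rw [← k2]; exact hq2 _
        · rw [← k3]; exact hq2 _
        · rw [← k4]; exact hq2 _
      · exact ⟨0, 0, 0, 0, fun h => absurd h hg⟩
    choose α β γ δ hall using hN
    have tr : ∀ (s : ℕ → ℝ) (r : ℕ → ℚ) (d : ℕ), HD r d → (∀ᶠ N in atTop, |s N - logHeight₁ (r N)| ≤ C) →
        Tendsto (fun N : ℕ => s N / Real.log N) atTop (𝓝 (d:ℝ)) := by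
      intro s r d ⟨C', hC'⟩ hs
      apply lim_of_bdd s d (C + C')
      filter_upwards [hC', hs] with N u1 u2
      have := abs_add_le (s N - logHeight₁ (r N)) (logHeight₁ (r N) - d * Real.log N)
      rw [sub_add_sub_cancel] at this
      linarith
    have ta := tr α x d1 h1 (h.mono fun N hN => (hall N hN).1)
    have tb := tr β y d2 h2 (h.mono fun N hN => (hall N hN).2.1)
    have tc := tr γ _ e he (h.mono fun N hN => (hall N hN).2.2.1)
    have td := tr δ _ e' he' (h.mono fun N hN => (hall N hN).2.2.2.1)
  · have t1 := (((tc.sub ta).sub tb).pow 2)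
    have t2 := (ta.const_mul 4).mul tb
    have heq := tendsto_nhds_unique_of_eventuallyEq t1 t2 (by
      filter_upwards [h] with N hN
      have := (hall N hN).2.2.2.2.2
      rw [← sub_div, ← sub_div, div_pow, this]; ring)
    exact_mod_cast heq
  · have heq := tendsto_nhds_unique_of_eventuallyEq (tc.add td) ((ta.const_mul 2).add (tb.const_mul 2)) (by
      filter_upwards [h] with N hN
      have := (hall N hN).2.2.2.2.1
      rw [← add_div, this]; ring)
    exact_mod_cast heq

end

section
open WeierstrassCurve Height
open Filter Topology Polynomial

def gq (A B x : ℚ) : ℚ := x^3 + A*x + B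

def Y3 (A B x y ψ : ℚ) : ℚ := gq A B x * (ψ - 1)^2 / (y - x)^2 - x - y

def Dep (a b c : ℤ) : Prop :=
  ∀ D : ℤ, D ≠ 0 → ∀ P Q : (twist a b c D).Point, ∃ m n : ℤ, m • P + n • Q = 0 ∧ (m ≠ 0 ∨ n ≠ 0)

lemma core_sh (a b c : ℤ) (hf : DistinctRoots a b c) (hdep : Dep a b c) (A B : ℚ)
    (hA : A = b - (a:ℚ)^2/3) (hB : B = c - a*b/3 + 2*(a:ℚ)^3/27)
    (x y ψ : ℕ → ℚ) (hx : RatLike x) (hy : RatLike y) (hψ : RatLike ψ)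
    (h : ∀ᶠ N in atTop, gq A B (x N) ≠ 0 ∧ ψ N ≠ 0 ∧ ψ N^2 * gq A B (x N) = gq A B (y N) ∧ x N ≠ y N)
    (d1 d2 : ℕ) (h1 : HD x d1) (h2 : HD y d2) :
    ∃ e e' : ℕ, ((e:ℤ) - d1 - d2)^2 = 4 * d1 * d2 ∧ e + e' = 2 * d1 + 2 * d2 ∧
      (e = 0 → ∃ κ : ℚ, ∀ᶠ N in atTop, Y3 A B (x N) (y N) (ψ N) = κ) ∧
      (e' = 0 → ∃ κ : ℚ, ∀ᶠ N in atTop, Y3 A B (x N) (y N) (-ψ N) = κ) := by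
  have hfg : ∀ x, fq a b c (x + (-(a:ℚ)/3)) = gq A B x := by
    intro x; simp only [fq, gq, hA, hB]; ring
  have hXY : ∀ x y ψ, Y3 A B x y ψ = X3 a b c (x + (-(a:ℚ)/3)) (y + (-(a:ℚ)/3)) ψ + a/3 := by
    intro x y ψ
    simp only [X3, Y3, hfg, add_sub_add_right_eq_sub]; ring
  obtain ⟨e, e', k1, k2, k3, k4⟩ := core a b c hf hdep (fun N => x N + (-(a:ℚ)/3)) (fun N => y N + (-(a:ℚ)/3)) ψ
    (hx.add (RatLike.const _)) (hy.add (RatLike.const _)) hψ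
    (by
      filter_upwards [h] with N hN
      rw [hfg, hfg]
      exact ⟨hN.1, hN.2.1, hN.2.2.1, by simpa using hN.2.2.2⟩) d1 d2 (h1.add_const _) (h2.add_const _)
  refine ⟨e, e', k1, k2, fun h => ?_, fun h => ?_⟩
  · obtain ⟨κ, hκ⟩ := k3 h
    exact ⟨κ + a/3, hκ.mono fun N hN => by rw [hXY, hN]⟩
  · obtain ⟨κ, hκ⟩ := k4 h
    exact ⟨κ + a/3, hκ.mono fun N hN => by rw [hXY, hN]⟩

lemma core_eq (a b c : ℤ) (hf : DistinctRoots a b c) (hdep : Dep a b c) (A B : ℚ)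
    (hA : A = b - (a:ℚ)^2/3) (hB : B = c - a*b/3 + 2*(a:ℚ)^3/27)
    (x y ψ : ℕ → ℚ) (hx : RatLike x) (hy : RatLike y) (hψ : RatLike ψ)
    (h : ∀ᶠ N in atTop, gq A B (x N) ≠ 0 ∧ ψ N ≠ 0 ∧ ψ N^2 * gq A B (x N) = gq A B (y N) ∧ x N ≠ y N)
    (d : ℕ) (h1 : HD x d) (h2 : HD y d)
    (n1 : ∀ κ : ℚ, ¬ ∀ᶠ N in atTop, Y3 A B (x N) (y N) (ψ N) = κ)
    (n2 : ∀ κ : ℚ, ¬ ∀ᶠ N in atTop, Y3 A B (x N) (y N) (-ψ N) = κ) : False := by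
  obtain ⟨e, e', k1, k2, k3, k4⟩ := core_sh a b c hf hdep A B hA hB x y ψ hx hy hψ h d d h1 h2
  have he : e ≠ 0 := fun h => by obtain ⟨κ, hκ⟩ := k3 h; exact n1 κ hκ
  have he' : e' ≠ 0 := fun h => by obtain ⟨κ, hκ⟩ := k4 h; exact n2 κ hκ
  have : (e:ℤ) * (e - 4 * d) = 0 := by linear_combination k1
  rcases mul_eq_zero.1 this with h | h <;> omega

lemma mestre_const (A B l κ : ℚ) (hA : A ≠ 0) (hB : B ≠ 0) (hl0 : l ≠ 0) (hl1 : l ≠ 1) (hl2 : l ≠ -1)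
    (h : Y3 A B (-B*(l^4+l^2+1)/(A*(l^4+l^2))) (-B*(l^4+l^2+1)/(A*(l^2+1))) (l^3) = κ) :
    (-B^3*(l^4+l^2+1)^3 - A^3*B*(l^4+l^2+1)*(l^4+l^2)^2 + A^3*B*(l^4+l^2)^3)*(l^2+l+1)^2
      - (l+1)^2*B^2*(l^4+l^2+1)^2*(κ*A*(l^4+l^2) - B*(l^4+l^2+1)*(1+l^2)) = 0 := by
  set n := l^4+l^2+1 with hn
  have hn0 : n ≠ 0 := by rw [hn]; positivity
  have hm0 : l^4+l^2 ≠ 0 := by positivity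
  set x := -B*n/(A*(l^4+l^2)) with hx
  have hy : -B*n/(A*(l^2+1)) = l^2 * x := by
    rw [hx]
    have : l^2+1 ≠ 0 := by positivity
    field_simp
  have hx0 : x ≠ 0 := by rw [hx]; exact div_ne_zero (mul_ne_zero (neg_ne_zero.2 hB) hn0) (mul_ne_zero hA hm0)
  have hxm : x * (A * (l^4+l^2)) = -B*n := by rw [hx]; field_simp
  have l1 : l - 1 ≠ 0 := sub_ne_zero.2 hl1
  have l2 : l + 1 ≠ 0 := by intro h; apply hl2; linarith
  rw [hy] at h
  have e1 : gq A B x * (l^3-1)^2/(l^2*x-x)^2 = gq A B x * (l^2+l+1)^2/((l+1)^2*x^2) := by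
    rw [show l^3-1 = (l-1)*(l^2+l+1) by ring, show l^2*x-x = (l-1)*((l+1)*x) by ring]
    field_simp
  simp only [Y3, e1] at h
  have e2 : gq A B x * (l^2+l+1)^2 = (κ + x + l^2*x) * ((l+1)^2*x^2) := by
    rw [← h]; field_simp; ring
  have e3 : gq A B x * (A^3*(l^4+l^2)^3) = (-B^3*n^3 - A^3*B*n*(l^4+l^2)^2 + A^3*B*(l^4+l^2)^3) := by
    have : gq A B x * (A^3*(l^4+l^2)^3) = (x*(A*(l^4+l^2)))^3 + A^3*(l^4+l^2)^2*(x*(A*(l^4+l^2))) + A^3*B*(l^4+l^2)^3 := by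
      simp only [gq]; ring
    rw [this, hxm]; ring
  rw [← e3]
  have e4 : B^2*n^2*(κ*A*(l^4+l^2) - B*n*(1+l^2)) = (κ+x+l^2*x)*x^2*(A^3*(l^4+l^2)^3) := by
    have : (κ+x+l^2*x)*x^2*(A^3*(l^4+l^2)^3) = (x*(A*(l^4+l^2)))^2*(κ*A*(l^4+l^2) + (x*(A*(l^4+l^2)))*(1+l^2)) := by ring
    rw [this, hxm]; ring
  linear_combination (A^3*(l^4+l^2)^3) * e2 - (l+1)^2 * e4

lemma mestre_case (a b c : ℤ) (hf : DistinctRoots a b c) (hdep : Dep a b c) (A B : ℚ)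
    (hA : A = b - (a:ℚ)^2/3) (hB : B = c - a*b/3 + 2*(a:ℚ)^3/27) (hA0 : A ≠ 0) (hB0 : B ≠ 0)
    (hdisc : 4*A^3 + 27*B^2 ≠ 0) : False := by
  set p : ℚ[X] := C (-B) * (X^4+X^2+1) with hp
  set q1 : ℚ[X] := C A * (X^4+X^2) with hq1
  set q2 : ℚ[X] := C A * (X^2+1) with hq2
  have cB : (C B : ℚ[X]) * C (1/B) = 1 := by rw [← C_mul, mul_one_div_cancel hB0, C_1]
  have cA : (C A : ℚ[X]) * C (1/A) = 1 := by rw [← C_mul, mul_one_div_cancel hA0, C_1]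
  have c1 : IsCoprime p q1 := ⟨-C (1/B), -C (1/A), by
    rw [hp, hq1, C_neg]; linear_combination (X^4+X^2+1) * cB - (X^4+X^2) * cA⟩
  have c2 : IsCoprime p q2 := ⟨-C (1/B), -X^2 * C (1/A), by
    rw [hp, hq2, C_neg]; linear_combination (X^4+X^2+1) * cB - (X^4+X^2) * cA⟩
  have dp : p.natDegree = 4 := by
    rw [hp, natDegree_C_mul (neg_ne_zero.2 hB0)]; compute_degree!
  have dq1 : q1.natDegree = 4 := by rw [hq1, natDegree_C_mul hA0]; compute_degree!
  have dq2 : q2.natDegree = 2 := by rw [hq2, natDegree_C_mul hA0]; compute_degree!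
  have H1 := HD_coprime p q1 c1
  have H2 := HD_coprime p q2 c2
  rw [dp, dq1] at H1
  rw [dp, dq2] at H2
  have hpoly : ∀ κ : ℚ, ∀ s : ℚ, s ≠ 0 → (∀ᶠ N : ℕ in atTop, (s = 1 ∨ s = -1) ∧
      Y3 A B (p.eval (N:ℚ) / q1.eval (N:ℚ)) (p.eval (N:ℚ) / q2.eval (N:ℚ)) ((s * N)^3) = κ) → False := by
    intro κ s hs hev
    set K : ℚ[X] := (C (-B^3)*(X^4+X^2+1)^3 - C (A^3*B)*(X^4+X^2+1)*(X^4+X^2)^2 + C (A^3*B)*(X^4+X^2)^3)*(X^2+X+1)^2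
      - (X+1)^2*C (B^2)*(X^4+X^2+1)^2*(C (κ*A)*(X^4+X^2) - C B*(X^4+X^2+1)*(1+X^2)) with hK
    have h0 : K.comp (C s * X) = 0 := by
      apply poly_zero_of_ev
      apply Eventually.frequently
      filter_upwards [hev, eventually_gt_atTop 1] with N hN hN1
      obtain ⟨hs1, hN⟩ := hN
      have hNQ : (1:ℚ) < N := by exact_mod_cast hN1
      have hsq : s^2 = 1 := by rcases hs1 with h | h <;> rw [h] <;> norm_num
      have := mestre_const A B (s*N) κ hA0 hB0 (mul_ne_zero hs (by linarith))
        (by rcases hs1 with h | h <;> rw [h] <;> intro h' <;> linarith)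
        (by rcases hs1 with h | h <;> rw [h] <;> intro h' <;> linarith) (by
          rw [← hN]
          have h2 : (s * (N:ℚ))^2 = (N:ℚ)^2 := by rw [mul_pow, hsq, one_mul]
          have h4 : (s * (N:ℚ))^4 = (N:ℚ)^4 := by rw [show (s * (N:ℚ))^4 = ((s*N)^2)^2 by ring, h2]; ring
          rw [h2, h4]
          simp [hp, hq1, hq2])
      rw [← this, hK]
      simp
    have h1 := congrArg (Polynomial.eval (-1/s)) h0
    rw [eval_comp, hK] at h1
    have : s * (-1/s) = -1 := by field_simp
    simp only [eval_mul, eval_C, eval_X, this] at h1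
    norm_num at h1
    have h2 : B * (4*A^3 + 27*B^2) = 0 := by linarith
    exact mul_ne_zero hB0 hdisc h2
  refine core_eq a b c hf hdep A B hA hB (fun N => p.eval (N:ℚ) / q1.eval (N:ℚ))
    (fun N => p.eval (N:ℚ) / q2.eval (N:ℚ)) (fun N => (N:ℚ)^3) ((RatLike.poly p).div (RatLike.poly q1))
    ((RatLike.poly p).div (RatLike.poly q2)) (RatLike.id.pow 3) ?_ 4 H1 H2 ?_ ?_
  · set G : ℚ[X] := (C (-B^3)*(X^4+X^2+1)^3 - C (A^3*B)*(X^4+X^2+1)*(X^4+X^2)^2 + C (A^3*B)*(X^4+X^2)^3) with hG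
    have hG0 : G ≠ 0 := by
      intro h
      have h1 := congrArg (Polynomial.eval 1) h
      rw [hG] at h1
      norm_num at h1
      exact mul_ne_zero hB0 hdisc (by linarith)
    filter_upwards [poly_ne_ev G hG0, eventually_gt_atTop 1] with N h1 h2
    have hNQ : (1:ℚ) < N := by exact_mod_cast h2
    have hN0 : (N:ℚ) ≠ 0 := by linarith
    have hm0 : (N:ℚ)^4+(N:ℚ)^2 ≠ 0 := by positivity
    have hm1 : (N:ℚ)^2+1 ≠ 0 := by positivity
    have hn0 : (N:ℚ)^4+(N:ℚ)^2+1 ≠ 0 := by positivity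
    have e1 : p.eval (N:ℚ) / q1.eval (N:ℚ) = -B*((N:ℚ)^4+(N:ℚ)^2+1)/(A*((N:ℚ)^4+(N:ℚ)^2)) := by simp [hp, hq1]
    have e2 : p.eval (N:ℚ) / q2.eval (N:ℚ) = (N:ℚ)^2 * (-B*((N:ℚ)^4+(N:ℚ)^2+1)/(A*((N:ℚ)^4+(N:ℚ)^2))) := by
      simp [hp, hq2]; field_simp
    rw [e1, e2]
    set x := -B*((N:ℚ)^4+(N:ℚ)^2+1)/(A*((N:ℚ)^4+(N:ℚ)^2)) with hx
    have hx0 : x ≠ 0 := by rw [hx]; exact div_ne_zero (mul_ne_zero (neg_ne_zero.2 hB0) hn0) (mul_ne_zero hA0 hm0)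
    have hxm : x * (A * ((N:ℚ)^4+(N:ℚ)^2)) = -B*((N:ℚ)^4+(N:ℚ)^2+1) := by rw [hx]; field_simp
    refine ⟨?_, by positivity, ?_, ?_⟩
    · intro h
      apply h1
      have e3 : gq A B x * (A^3*((N:ℚ)^4+(N:ℚ)^2)^3) = (x*(A*((N:ℚ)^4+(N:ℚ)^2)))^3
          + A^3*((N:ℚ)^4+(N:ℚ)^2)^2*(x*(A*((N:ℚ)^4+(N:ℚ)^2))) + A^3*B*((N:ℚ)^4+(N:ℚ)^2)^3 := by
        simp only [gq]; ring
      rw [h, hxm] at e3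
      rw [hG]
      simp
      linear_combination -e3
    · simp only [gq]
      have : (x * (A * ((N:ℚ)^4+(N:ℚ)^2)) + B*((N:ℚ)^4+(N:ℚ)^2+1)) * ((N:ℚ)^2 - 1) = 0 := by rw [hxm]; ring
      linear_combination this
    · intro h
      have : ((N:ℚ)^2 - 1) * x = 0 := by linarith
      rcases mul_eq_zero.1 this with h | h
      · nlinarith
      · exact hx0 h
  · intro κ hκ
    exact hpoly κ 1 one_ne_zero (hκ.mono fun N hN => ⟨Or.inl rfl, by simpa using hN⟩)
  · intro κ hκ
    exact hpoly κ (-1) (by norm_num) (hκ.mono fun N hN => ⟨Or.inr rfl, by rw [← hN]; congr 1; ring⟩)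

end

section
open WeierstrassCurve Height
open Filter Topology Polynomial

lemma cop_of (p q s t : ℚ[X]) (r : ℚ) (hr : r ≠ 0) (h : s * p + t * q = C r) : IsCoprime p q := by
  refine ⟨C r⁻¹ * s, C r⁻¹ * t, ?_⟩
  have : (C r⁻¹ : ℚ[X]) * C r = 1 := by rw [← C_mul, inv_mul_cancel₀ hr, C_1]
  linear_combination C r⁻¹ * h + this

lemma cop_X (q : ℚ[X]) (h : q.eval 0 ≠ 0) : IsCoprime X q := by
  rw [irreducible_X.coprime_iff_not_dvd, X_dvd_iff, coeff_zero_eq_eval_zero]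
  exact h

lemma ne_of_eval (q : ℚ[X]) (h : q.eval 0 ≠ 0) : q ≠ 0 := by
  rintro rfl; simp at h

/- the case A = 0 -/
lemma A0_case (a b c : ℤ) (hf : DistinctRoots a b c) (hdep : Dep a b c) (B : ℚ)
    (hA : (0:ℚ) = b - (a:ℚ)^2/3) (hB : B = c - a*b/3 + 2*(a:ℚ)^3/27) (hB0 : B ≠ 0) : False := by
  set P1 : ℚ[X] := (X^3 - 8*C B)*((X^3)^4+103*C B*(X^3)^3+600*(C B)^2*(X^3)^2-320*(C B)^3*X^3+640*(C B)^4) with hP1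
  set W : ℚ[X] := 2*(X^3)^4+17*C B*(X^3)^3+552*(C B)^2*(X^3)^2-640*(C B)^3*X^3-448*(C B)^4 with hW
  set V : ℚ[X] := (-1)*(X^3)^4+86*C B*(X^3)^3+48*(C B)^2*(X^3)^2+320*(C B)^3*X^3+1088*(C B)^4 with hV
  set T : ℚ[X] := (X^3)^2 + 20*C B*X^3 - 8*(C B)^2 with hT
  set Q : ℚ[X] := -4*(X^3 + C B)*W with hQ
  have cP : IsCoprime P1 Q := by
    refine cop_of P1 Q ((-11982080)*(C B)^4 + (-2409536)*(C B)^3*X^3 + (3707700)*(C B)^2*(X^3)^2 + (120412)*(C B)*(X^3)^3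
        + (13288)*(X^3)^4)
      (-((-9495488)*(C B)^4 + (8548288)*(C B)^3*X^3 + (443400)*(C B)^2*(X^3)^2 + (-157067)*(C B)*(X^3)^3 + (-1661)*(X^3)^4))
      (78364164096*B^9) (by positivity) ?_
    rw [hP1, hQ, hW, map_mul, map_pow, map_ofNat]; ring
  have cV : IsCoprime V W := by
    refine cop_of V W ((3555)*(C B)^3 + (-1030)*(C B)^2*X^3 + (-26)*(C B)*(X^3)^2 + (-4)*(X^3)^3)
      ((198)*(C B)^3 + (-245)*(C B)^2*X^3 + (176)*(C B)*(X^3)^2 + (-2)*(X^3)^3) (3779136*B^7) (by positivity) ?_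
    rw [hV, hW, map_mul, map_pow, map_ofNat]; ring
  have eW : W.eval 0 ≠ 0 := by simp [hW, hB0]
  have eQ : Q.eval 0 ≠ 0 := by simp [hQ, hW, hB0]
  have H1 := HD_coprime (X*P1) Q (IsCoprime.mul_left (cop_X Q eQ) cP)
  have H2 := HD_coprime (X*V) W (IsCoprime.mul_left (cop_X W eW) cV)
  have dW : W.natDegree = 12 := by rw [hW]; simp only [← C_pow]; compute_degree!
  have dV : V.natDegree = 12 := by rw [hV]; simp only [← C_pow]; compute_degree!
  have dP : P1.natDegree = 15 := by rw [hP1]; simp only [← C_pow]; compute_degree!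
  have dQ : Q.natDegree = 15 := by rw [hQ, hW]; simp only [← C_pow]; compute_degree!
  have nP : P1 ≠ 0 := by rintro h; rw [h] at dP; simp at dP
  have nV : V ≠ 0 := by rintro h; rw [h] at dV; simp at dV
  rw [natDegree_X_mul nP, dP, dQ] at H1
  rw [natDegree_X_mul nV, dV, dW] at H2
  obtain ⟨e, e', k1, -, -, -⟩ := core_sh a b c hf hdep 0 B hA hB _ _
    (fun N => (8*(X^3 + C B)^2 : ℚ[X]).eval (N:ℚ) / T.eval (N:ℚ))
    ((RatLike.poly (X*P1)).div (RatLike.poly Q)) ((RatLike.poly (X*V)).div (RatLike.poly W))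
    ((RatLike.poly _).div (RatLike.poly T)) (by
      have n1 : (X^3 + C B : ℚ[X]) ≠ 0 := ne_of_eval _ (by simp [hB0])
      have n2 : T ≠ 0 := ne_of_eval _ (by simp [hT, hB0])
      have n3 : W ≠ 0 := ne_of_eval _ eW
      have n4 : (-X^3*P1^3 + 64*C B*(X^3+C B)^3*W^3 : ℚ[X]) ≠ 0 := ne_of_eval _ (by simp [hW, hB0])
      have n5 : P1 + 4*(X^3+C B)*V ≠ 0 := ne_of_eval _ (by
        simp [hP1, hV]; ring_nf; simp [hB0])
      filter_upwards [poly_ne_ev _ n1, poly_ne_ev _ n2, poly_ne_ev _ n3, poly_ne_ev _ n4, poly_ne_ev _ n5,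
        eventually_gt_atTop 0] with N m1 m2 m3 m4 m5 m6
      have hN : (N:ℚ) ≠ 0 := by exact_mod_cast m6.ne'
      have key : ((X^3+C B)*(-X^3*P1^3+64*C B*(X^3+C B)^3*W^3) : ℚ[X]) = T^2*(X^3*V^3+C B*W^3) := by
        rw [hT, hP1, hV, hW]; ring
      have key' := congrArg (Polynomial.eval (N:ℚ)) key
      simp only [eval_mul, eval_add, eval_pow, eval_X, eval_C, eval_neg, eval_ofNat] at m1 m4 m5 key' ⊢
      have hQe : Q.eval (N:ℚ) = -4*((N:ℚ)^3+B)*W.eval (N:ℚ) := by rw [hQ]; simp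
      rw [hQe]
      generalize P1.eval (N:ℚ) = p at *
      generalize W.eval (N:ℚ) = w at *
      generalize V.eval (N:ℚ) = v at *
      generalize T.eval (N:ℚ) = t at *
      have hg1 : gq 0 B ((N:ℚ)*p/(-4*((N:ℚ)^3+B)*w)) = (-(N:ℚ)^3*p^3 + 64*B*((N:ℚ)^3+B)^3*w^3)/(64*((N:ℚ)^3+B)^3*w^3) := by
        simp only [gq]; field_simp; ring
      have hg2 : gq 0 B ((N:ℚ)*v/w) = ((N:ℚ)^3*v^3 + B*w^3)/w^3 := by
        simp only [gq]; field_simp; ring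
      refine ⟨?_, ?_, ?_, ?_⟩
      · rw [hg1]
        exact div_ne_zero m4 (by positivity)
      · positivity
      · rw [hg1, hg2]
        generalize (N:ℚ)^3 + B = M at *
        rw [div_pow, div_mul_div_comm, div_eq_div_iff (by positivity) (by positivity)]
        linear_combination (64 * M^3*w^3) * key'
      · intro h
        apply m5
        rw [div_eq_div_iff (by simp [m1, m3]) m3] at h
        have h' : (N:ℚ) * w * (p + 4*((N:ℚ)^3+B)*v) = 0 := by linear_combination h
        simpa [hN, m3] using h') _ _ H1 H2
  norm_num at k1
  have h1 : (e:ℤ) - 16 - 13 ≤ 28 ∨ 29 ≤ (e:ℤ) - 16 - 13 := by omega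
  have h2 : (e:ℤ) - 16 - 13 ≤ -29 ∨ -28 ≤ (e:ℤ) - 16 - 13 := by omega
  rcases h1 with h1 | h1 <;> rcases h2 with h2 | h2 <;> nlinarith

end

section
open WeierstrassCurve Height
open Filter Topology Polynomial

def bU (A s : ℚ) : ℚ := 4*A^3+A^2*s+10*A*s^2+s^3
def bV (A s : ℚ) : ℚ := A^3+10*A^2*s+A*s^2+4*s^3
def bq (A s : ℚ) : ℚ := A^2-18*A*s+s^2
def br (A s : ℚ) : ℚ := A^2+6*A*s+s^2
def bW (i A s : ℚ) : ℚ := -bU A s*(4*s*bU A s^2 + A*(s+A)^2*bq A s^2)*(i*A-s)^2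
  + 4*(s+A)^2*(A-s)^2*br A s^2*(s*bU A s + A*bV A s)

lemma B0_const (A x κ i : ℚ) (hx : x ≠ 0) (h1 : x^2 + A ≠ 0) (h2 : bq A (x^2) ≠ 0)
    (h3 : br A (x^2) ≠ 0) (h4 : x^2 - A ≠ 0)
    (h : Y3 A 0 (x*(-2*bU A (x^2))/((x^2+A)*bq A (x^2))) (-2*A*bV A (x^2)/(x*((x^2+A)*bq A (x^2)))) (i*A/x^2) = κ) :
    bW i A (x^2) - κ * x * (2*(x^2+A)^3*bq A (x^2)*br A (x^2)^2*(A-x^2)^2) = 0 := by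
  set u := x*(-2*bU A (x^2))/((x^2+A)*bq A (x^2)) with hu
  set v := -2*A*bV A (x^2)/(x*((x^2+A)*bq A (x^2))) with hv
  have h5 : A - x^2 ≠ 0 := by intro h; apply h4; linarith
  have e1 : v - u = 2*(x^2-A)*br A (x^2)/(x*bq A (x^2)) := by
    rw [hu, hv, div_sub_div _ _ (by positivity) (by positivity), div_eq_div_iff (by positivity) (by positivity)]
    simp only [bU, bV, br]; ring
  have e2 : gq A 0 u = -2*x*bU A (x^2)*(4*x^2*bU A (x^2)^2 + A*(x^2+A)^2*bq A (x^2)^2)/((x^2+A)^3*bq A (x^2)^3) := by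
    simp only [gq]; rw [hu]; field_simp; ring
  simp only [Y3] at h
  rw [e1, e2, hu, hv] at h
  rw [← h]
  simp only [bW]
  generalize bU A (x^2) = U at *
  generalize bV A (x^2) = V at *
  generalize bq A (x^2) = q at *
  generalize br A (x^2) = r at *
  field_simp
  ring

lemma B0_case (a b c : ℤ) (hf : DistinctRoots a b c) (hdep : Dep a b c) (A : ℚ)
    (hA : A = b - (a:ℚ)^2/3) (hB : (0:ℚ) = c - a*b/3 + 2*(a:ℚ)^3/27) (hA0 : A ≠ 0) : False := by
  set U : ℚ[X] := 4*(C A)^3+(C A)^2*X+10*C A*X^2+X^3 with hU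
  set V : ℚ[X] := (C A)^3+10*(C A)^2*X+C A*X^2+4*X^3 with hV
  set q : ℚ[X] := (C A)^2-18*C A*X+X^2 with hq
  set r : ℚ[X] := (C A)^2+6*C A*X+X^2 with hr
  set G : ℚ[X] := 4*X*U^2 + C A*(X+C A)^2*q^2 with hG
  set Q : ℚ[X] := (X+C A)*q with hQ
  have eU : ∀ t, U.eval t = bU A t := by intro t; simp [hU, bU]
  have eV : ∀ t, V.eval t = bV A t := by intro t; simp [hV, bV]
  have eq : ∀ t, q.eval t = bq A t := by intro t; simp [hq, bq]
  have er : ∀ t, r.eval t = br A t := by intro t; simp [hr, br]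
  set S : ℚ[X] := X^2 with hS
  have cU : IsCoprime (U.comp S) (Q.comp S) := by
    have : IsCoprime U Q := by
      refine cop_of U Q (727*(C A)^2+444*C A*X-27*X^2) (164*(C A)^2+285*C A*X+27*X^2) (3072*A^5) (by positivity) ?_
      rw [hU, hQ, hq, map_mul, map_pow, map_ofNat]; ring
    exact this.map (compRingHom S)
  have cV : IsCoprime (V.comp S) (Q.comp S) := by
    have : IsCoprime V Q := by
      refine cop_of V Q (1857*(C A)^2+1996*C A*X-117*X^2) (1215*(C A)^2+89*C A*X+468*X^2) (3072*A^5) (by positivity) ?_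
      rw [hV, hQ, hq, map_mul, map_pow, map_ofNat]; ring
    exact this.map (compRingHom S)
  have cXV : IsCoprime X (V.comp S) := cop_X _ (by simp [hV, hS, hA0])
  have cXQ : IsCoprime X (Q.comp S) := cop_X _ (by simp [hQ, hq, hS, hA0])
  have hA2 : (-2*A) ≠ 0 := by simpa using hA0
  have u1 : IsUnit (C (-2) : ℚ[X]) := isUnit_C.2 (by norm_num)
  have u2 : IsUnit (C (-2*A) : ℚ[X]) := isUnit_C.2 (isUnit_iff_ne_zero.2 hA2)
  have C1 : IsCoprime (C (-2) * (X * U.comp S)) (Q.comp S) :=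
    (isCoprime_mul_unit_left_left u1 _ _).2 (cXQ.mul_left cU)
  have C2 : IsCoprime (C (-2*A) * V.comp S) (X * Q.comp S) :=
    (isCoprime_mul_unit_left_left u2 _ _).2 (cXV.symm.mul_right cV)
  have H1 := HD_coprime _ _ C1
  have H2 := HD_coprime _ _ C2
  have dU : (U.comp S).natDegree = 6 := by
    have : U.natDegree = 3 := by rw [hU, hS]; simp only [← C_pow]; compute_degree!
    rw [natDegree_comp, this, hS, natDegree_X_pow]
  have dV : (V.comp S).natDegree = 6 := by
    have : V.natDegree = 3 := by rw [hV, hS]; simp only [← C_pow]; compute_degree!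
    rw [natDegree_comp, this, hS, natDegree_X_pow]
  have dQ : (Q.comp S).natDegree = 6 := by
    have : Q.natDegree = 3 := by rw [hQ, hq, hS]; simp only [← C_pow]; compute_degree!
    rw [natDegree_comp, this, hS, natDegree_X_pow]
  have nU : U.comp S ≠ 0 := by rintro h; rw [h] at dU; simp at dU
  have nQ : Q.comp S ≠ 0 := by rintro h; rw [h] at dQ; simp at dQ
  rw [natDegree_C_mul (by norm_num), natDegree_X_mul nU, dU, dQ] at H1
  rw [natDegree_C_mul hA2, natDegree_X_mul nQ, dV, dQ] at H2
  have ev : ∀ᶠ N : ℕ in atTop, (N:ℚ) ≠ 0 ∧ (N:ℚ)^2 + A ≠ 0 ∧ bq A ((N:ℚ)^2) ≠ 0 ∧ br A ((N:ℚ)^2) ≠ 0 ∧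
      (N:ℚ)^2 - A ≠ 0 ∧ bU A ((N:ℚ)^2) ≠ 0 ∧
      4*(N:ℚ)^2*bU A ((N:ℚ)^2)^2 + A*((N:ℚ)^2+A)^2*bq A ((N:ℚ)^2)^2 ≠ 0 := by
    have n1 : (X^2 + C A : ℚ[X]) ≠ 0 := ne_of_eval _ (by simp [hA0])
    have n2 : q.comp S ≠ 0 := ne_of_eval _ (by simp [hq, hS, hA0])
    have n3 : r.comp S ≠ 0 := ne_of_eval _ (by simp [hr, hS, hA0])
    have n4 : (X^2 - C A : ℚ[X]) ≠ 0 := ne_of_eval _ (by simp [hA0])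
    have n5 : G.comp S ≠ 0 := ne_of_eval _ (by simp [hG, hq, hS, hA0])
    filter_upwards [poly_ne_ev _ n1, poly_ne_ev _ n2, poly_ne_ev _ n3, poly_ne_ev _ n4, poly_ne_ev _ n5,
      poly_ne_ev _ nU, eventually_gt_atTop 0] with N m1 m2 m3 m4 m5 m6 m7
    rw [eval_comp, hS, eval_pow, eval_X] at m2 m3 m5 m6
    rw [eq] at m2
    rw [er] at m3
    rw [eU] at m6
    refine ⟨by exact_mod_cast m7.ne', by simpa using m1, m2, m3, by simpa using m4, m6, ?_⟩
    rw [hG] at m5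
    simpa [eU, eq] using m5
  have hx : ∀ t : ℚ, (C (-2) * (X * U.comp S)).eval t / (Q.comp S).eval t
      = t*(-2*bU A (t^2))/((t^2+A)*bq A (t^2)) := by
    intro t
    simp only [hQ, hS, eval_mul, eval_C, eval_X, eval_comp, eval_pow, eU, eval_add, eq]
    congr 1; ring
  have hy : ∀ t : ℚ, (C (-2*A) * V.comp S).eval t / (X * Q.comp S).eval t
      = -2*A*bV A (t^2)/(t*((t^2+A)*bq A (t^2))) := by
    intro t
    simp only [hQ, hS, eval_mul, eval_C, eval_X, eval_comp, eval_pow, eV, eval_add, eq]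
  have hpoly : ∀ κ i : ℚ, bW i A (A/3) ≠ 0 → (∀ᶠ N : ℕ in atTop,
      Y3 A 0 ((C (-2) * (X * U.comp S)).eval (N:ℚ) / (Q.comp S).eval (N:ℚ))
        ((C (-2*A) * V.comp S).eval (N:ℚ) / (X * Q.comp S).eval (N:ℚ)) (i*A/(N:ℚ)^2) = κ) → False := by
    intro κ i hi hev
    set K : ℚ[X] := -U*G*(C (i*A)-X)^2 + 4*(X+C A)^2*(C A-X)^2*r^2*(X*U + C A*V) with hK
    set Z : ℚ[X] := 2*(X+C A)^3*q*r^2*(C A-X)^2 with hZ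
    have eK : ∀ t, K.eval t = bW i A t := by
      intro t; simp [hK, hG, bW, eU, eV, eq, er]
    have eZ : ∀ t, Z.eval t = 2*(t+A)^3*bq A t*br A t^2*(A-t)^2 := by
      intro t; simp [hZ, eq, er]
    have h0 : K.comp S - C κ * X * Z.comp S = 0 := by
      apply poly_zero_of_ev
      apply Eventually.frequently
      filter_upwards [hev, ev] with N hN m
      rw [hx, hy] at hN
      have := B0_const A N κ i m.1 m.2.1 m.2.2.1 m.2.2.2.1 m.2.2.2.2.1 hN
      rw [← this]
      simp only [eval_sub, eval_comp, eval_mul, eval_C, eval_X, hS, eval_pow, eK, eZ]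
    have h1 : K.comp S = 0 := by
      apply Polynomial.funext
      intro t
      have a1 := congrArg (Polynomial.eval t) h0
      have a2 := congrArg (Polynomial.eval (-t)) h0
      simp only [eval_sub, eval_comp, eval_mul, eval_C, eval_X, hS, eval_pow, eval_zero, neg_sq] at a1 a2 ⊢
      linarith
    have h2 : K = 0 := by
      have : K.comp S = expand ℚ 2 K := by rw [expand_eq_comp_X_pow]
      rw [this] at h1
      exact (expand_eq_zero (by norm_num)).1 h1
    apply hi
    rw [← eK, h2, eval_zero]
  refine core_eq a b c hf hdep A 0 hA hB _ _ (fun N => A/(N:ℚ)^2)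
    ((RatLike.poly _).div (RatLike.poly _)) ((RatLike.poly _).div (RatLike.poly _))
    ((RatLike.const A).div (RatLike.id.pow 2)) ?_ 7 H1 H2 ?_ ?_
  · filter_upwards [ev] with N m
    obtain ⟨m0, m1, m2, m3, m4, m5, m6⟩ := m
    rw [hx, hy]
    refine ⟨?_, by positivity, ?_, ?_⟩
    · have : gq A 0 ((N:ℚ)*(-2*bU A ((N:ℚ)^2))/(((N:ℚ)^2+A)*bq A ((N:ℚ)^2)))
          = -2*(N:ℚ)*bU A ((N:ℚ)^2)*(4*(N:ℚ)^2*bU A ((N:ℚ)^2)^2 + A*((N:ℚ)^2+A)^2*bq A ((N:ℚ)^2)^2)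
            /(((N:ℚ)^2+A)^3*bq A ((N:ℚ)^2)^3) := by
        simp only [gq]; field_simp; ring
      rw [this]
      exact div_ne_zero (by simp [m0, m5, m6]) (by positivity)
    · have key : bU A ((N:ℚ)^2)*(4*(N:ℚ)^2*bU A ((N:ℚ)^2)^2 + A*((N:ℚ)^2+A)^2*bq A ((N:ℚ)^2)^2)*A
          = bV A ((N:ℚ)^2)*(4*A^2*bV A ((N:ℚ)^2)^2 + A*(N:ℚ)^2*((N:ℚ)^2+A)^2*bq A ((N:ℚ)^2)^2) := by
        simp only [bU, bV, bq]; ring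
      simp only [gq]
      generalize bU A ((N:ℚ)^2) = u at *
      generalize bV A ((N:ℚ)^2) = v at *
      generalize bq A ((N:ℚ)^2) = w at *
      field_simp
      linear_combination (-2 * A * (N:ℚ)) * key
    · intro h
      rw [div_eq_div_iff (by positivity) (by positivity)] at h
      have : -2 * (((N:ℚ)^2+A)*bq A ((N:ℚ)^2)) * (((N:ℚ)^2 - A) * ((N:ℚ)^2+A) * br A ((N:ℚ)^2)) = 0 := by
        rw [← sub_eq_zero] at h
        rw [← h]; simp only [bU, bV, br]; ring
      simp [m1, m2, m3, m4] at this
  · intro κ hκ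
    refine hpoly κ 1 ?_ (hκ.mono fun N hN => by rw [one_mul]; exact hN)
    simp only [bW, bU, bV, bq, br]; ring_nf; simp [hA0]
  · intro κ hκ
    refine hpoly κ (-1) ?_ (hκ.mono fun N hN => by rw [neg_one_mul, neg_div]; exact hN)
    simp only [bW, bU, bV, bq, br]; ring_nf; simp [hA0]

end

section

open WeierstrassCurve Height

lemma dep_of_rank (a b c : ℤ) (j : ℝ) (hj : j ≤ 1) (hR : RankBound a b c j) : Dep a b c := by
  intro D hD P Q
  by_contra hcon
  apply hR D hD
  have hle : ⌈2*j⌉₊ ≤ 2 := by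
    apply Nat.ceil_le.2; push_cast; linarith
  have hli : LinearIndependent ℤ ![P, Q] := by
    rw [LinearIndependent.pair_iff]
    intro m n h
    by_contra hmn
    apply hcon
    refine ⟨m, n, h, ?_⟩
    by_contra h2
    push Not at h2
    exact hmn h2
  exact ⟨_, hli.comp (Fin.castLE hle) (Fin.castLE_injective hle)⟩

lemma low_j (a b c : ℤ) (hf : DistinctRoots a b c) (j : ℝ) (hj : j ≤ 1) : ¬ RankBound a b c j := by
  intro hR
  have hdep := dep_of_rank a b c j hj hR
  have hd : (disc a b c : ℚ) ≠ 0 := by exact_mod_cast disc_ne a b c hf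
  obtain ⟨A, hA⟩ : ∃ A : ℚ, A = b - (a:ℚ)^2/3 := ⟨_, rfl⟩
  obtain ⟨B, hB⟩ : ∃ B : ℚ, B = c - a*b/3 + 2*(a:ℚ)^3/27 := ⟨_, rfl⟩
  have hdd : 4*A^3+27*B^2 ≠ 0 := by
    intro h
    apply hd
    have : (disc a b c : ℚ) = -(4*A^3+27*B^2) := by
      rw [hA, hB]; simp only [disc]; push_cast; ring
    rw [this, h, neg_zero]
  by_cases hA0 : A = 0
  · have hB0 : B ≠ 0 := by
      rintro rfl; apply hdd; rw [hA0]; norm_num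
    rw [hA0] at hA
    exact A0_case a b c hf hdep B hA hB hB0
  · by_cases hB0 : B = 0
    · rw [hB0] at hB
      exact B0_case a b c hf hdep A hA hB hA0
    · exact mestre_case a b c hf hdep A B hA hB hA0 hB0 hdd


end

/-- **Theorem 1.** For `j > 0`, the following are equivalent:
(a) `rank E^{(D)}(ℚ) < 2j` for all nonzero `D`; (b) `S_E(j,k)` converges for some `k ≥ 1`;
(c) `S_E(j,k)` converges for every `k ≥ 1`; (d) `R_E(j,k)` converges for some `k ≥ 1`;
(e) `R_E(j,k)` converges for every `k ≥ 1`; (f) `Q_E(j,k)` converges for some `k ≥ 1`;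
(g) `Q_E(j,k)` converges for every `k ≥ 1`. -/
theorem rank_tfae_series (a b c : ℤ) (hf : DistinctRoots a b c)
    (sq : ℤ → ℤ) (hsq : IsSqfreePart sq)
    (ω : (d d' : ℕ) → ZMod (d^2) → ℤ × ℤ) (hω : IsShortestChoice a b c ω)
    (j : ℝ) (hj : 0 < j) :
    List.TFAE
      [RankBound a b c j,
       ∃ k : ℝ, 1 ≤ k ∧ SConv a b c sq j k Set.univ,
       ∀ k : ℝ, 1 ≤ k → SConv a b c sq j k Set.univ,
       ∃ k : ℝ, 1 ≤ k ∧ RConv a b c j k Set.univ,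
       ∀ k : ℝ, 1 ≤ k → RConv a b c j k Set.univ,
       ∃ k : ℝ, 1 ≤ k ∧ QConv a b c j k ω,
       ∀ k : ℝ, 1 ≤ k → QConv a b c j k ω] := by
  have hac : RankBound a b c j → ∀ k : ℝ, 1 ≤ k → SConv a b c sq j k Set.univ := by
    intro hR k hk
    rcases le_or_gt j 1 with h | h
    · exact absurd hR (low_j a b c hf j h)
    · exact rank_to_S a b c hf sq hsq j h hR k hk
  have hfa : (∃ k : ℝ, 1 ≤ k ∧ QConv a b c j k ω) → RankBound a b c j := by
    rintro ⟨k, hk, hQ⟩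
    exact Q_to_rank a b c hf sq hsq ω hω j k hj hk hQ
  tfae_have 1 → 3 := hac
  tfae_have 3 → 2 := fun h => ⟨1, le_refl _, h 1 le_rfl⟩
  tfae_have 2 → 4 := fun ⟨k, hk, h⟩ => ⟨k, hk, S_to_R a b c sq hsq j k hk h⟩
  tfae_have 4 → 6 := fun ⟨k, hk, h⟩ => ⟨k, hk, R_to_Q a b c ω hω j k hj hk h⟩
  tfae_have 6 → 1 := hfa
  tfae_have 3 → 5 := fun h k hk => S_to_R a b c sq hsq j k hk (h k hk)
  tfae_have 5 → 7 := fun h k hk => R_to_Q a b c ω hω j k hj hk (h k hk)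
  tfae_have 7 → 6 := fun h => ⟨1, le_refl _, h 1 le_rfl⟩
  tfae_finish
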